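/- arXiv:1309.4542 — 10 statements merged into one kernel-verified Lean document; each statement's English description precedes it below -/
import Mathlib

section
/- There exists a constant C > 0 such that for every n ≥ 2, every 2×n totally positive real matrix A, and every real number α, the number of pairs of column indices 1 ≤ i < j ≤ n such that the 2×2 minor of A on columns i and j (i.e., det of the 2×2 matrix whose first column is the i-th column of A and whose second column is the j-th column of A) equals α is at most C·n^(4/3). -/
/-- A real `m × n` matrix is totally positive if every minor (determinant of a square
submatrix taken on strictly increasing row and column indices) is positive. -/
def IsTotallyPositive {m n : ℕ} (A : Matrix (Fin m) (Fin n) ℝ) : Prop :=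
  ∀ (k : ℕ) (r : Fin k → Fin m) (c : Fin k → Fin n),
    StrictMono r → StrictMono c → 0 < (A.submatrix r c).det

/-!
Proof via the Szemeredi-Trotter / crossing-lemma method.  Columns are turned into points
`(x j, y j)` with `x` strictly increasing and into lines `t ↦ s i * t + k i`.
An edge is a triple `(i, a, b)`: line `i`, with consecutive points `a < b` on it.
-/

/-- Two edges cross (transversally, in their relative interiors). -/
def EdgeCross {n : ℕ} (x s k : Fin n → ℝ) (e f : Fin n × Fin n × Fin n) : Prop :=
  e.1 ≠ f.1 ∧ ∃ t, x e.2.1 < t ∧ t < x e.2.2 ∧ x f.2.1 < t ∧ t < x f.2.2 ∧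
    s e.1 * t + k e.1 = s f.1 * t + k f.1

lemma edgeCross_of_sign {n : ℕ} {x s k : Fin n → ℝ} {e f : Fin n × Fin n × Fin n} {p q : ℝ}
    (hpq : p < q) (h1 : x e.2.1 ≤ p) (h2 : x f.2.1 ≤ p) (h3 : q ≤ x e.2.2) (h4 : q ≤ x f.2.2)
    (hp : s f.1 * p + k f.1 < s e.1 * p + k e.1) (hq : s e.1 * q + k e.1 < s f.1 * q + k f.1) :
    EdgeCross x s k e f := by
  refine ⟨?_, ?_⟩
  · intro h
    rw [h] at hp
    exact lt_irrefl _ hp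
  · have hc : ContinuousOn (fun t => (s f.1 * t + k f.1) - (s e.1 * t + k e.1)) (Set.Icc p q) := by
      fun_prop
    obtain ⟨t, ht, h0⟩ := intermediate_value_Ioo hpq.le hc
      (show (0 : ℝ) ∈ Set.Ioo _ _ from ⟨by linarith, by linarith⟩)
    simp only at h0
    exact ⟨t, by linarith [ht.1], by linarith [ht.2], by linarith [ht.1], by linarith [ht.2],
      by linarith⟩

/-- `f` is the next edge above `e` from the same left endpoint and `c` is the first vertex in
the wedge between them. -/
structure Wedge {n : ℕ} (x y s k : Fin n → ℝ) (S : Finset (Fin n))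
    (E : Finset (Fin n × Fin n × Fin n)) (e f : Fin n × Fin n × Fin n) (c : Fin n) : Prop where
  memf : f ∈ E
  left : f.2.1 = e.2.1
  slope : s e.1 < s f.1
  next : ∀ g ∈ E, g.2.1 = e.2.1 → s e.1 < s g.1 → s f.1 ≤ s g.1
  ac : e.2.1 < c
  cb : c ≤ e.2.2
  cb' : c ≤ f.2.2
  lo : s e.1 * x c + k e.1 ≤ y c
  hi : y c ≤ s f.1 * x c + k f.1
  first : ∀ d ∈ S, e.2.1 < d → d < c →
    ¬ (s e.1 * x d + k e.1 ≤ y d ∧ y d ≤ s f.1 * x d + k f.1)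

/-- Basic validity of an edge set on the vertex set `S`. -/
structure EdgeSet {n : ℕ} (x y s k : Fin n → ℝ) (S : Finset (Fin n))
    (E : Finset (Fin n × Fin n × Fin n)) : Prop where
  lt : ∀ e ∈ E, e.2.1 < e.2.2
  inca : ∀ e ∈ E, y e.2.1 = s e.1 * x e.2.1 + k e.1
  incb : ∀ e ∈ E, y e.2.2 = s e.1 * x e.2.2 + k e.1
  memb : ∀ e ∈ E, e.2.1 ∈ S ∧ e.2.2 ∈ S
  cons : ∀ e ∈ E, ∀ f ∈ E, e.1 = f.1 → e.2.1 = f.2.1 → e = f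

section Linear

variable {n : ℕ} {x y s k : Fin n → ℝ} {S : Finset (Fin n)} {E : Finset (Fin n × Fin n × Fin n)}

lemma edge_eq_of_slope (hL : ∀ i j, s i = s j → k i = k j → i = j) (hE : EdgeSet x y s k S E)
    {e f : Fin n × Fin n × Fin n} (he : e ∈ E) (hf : f ∈ E) (ha : e.2.1 = f.2.1)
    (hs : s e.1 = s f.1) : e = f := by
  refine hE.cons e he f hf (hL _ _ hs ?_) ha
  have h1 := hE.inca e he
  have h2 := hE.inca f hf
  rw [ha, hs] at h1
  linarith

lemma wedge_inj_aux (hx : StrictMono x) (hL : ∀ i j, s i = s j → k i = k j → i = j)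
    (hE : EdgeSet x y s k S E)
    (hnc : ∀ e ∈ E, ∀ f ∈ E, ¬ EdgeCross x s k e f)
    {e₁ f₁ e₂ f₂ : Fin n × Fin n × Fin n} {c : Fin n} (he₁ : e₁ ∈ E) (he₂ : e₂ ∈ E)
    (h₁ : Wedge x y s k S E e₁ f₁ c) (h₂ : Wedge x y s k S E e₂ f₂ c)
    (h21 : s e₂.1 * x c + k e₂.1 < s f₁.1 * x c + k f₁.1)
    (h12 : s e₁.1 * x c + k e₁.1 < s f₂.1 * x c + k f₂.1)
    (hle : e₁.2.1 ≤ e₂.2.1) : e₁ = e₂ := by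
  rcases hle.eq_or_lt with heq | hlt
  · -- same left endpoint
    have key : ∀ (e f e' : Fin n × Fin n × Fin n), e ∈ E → e' ∈ E → Wedge x y s k S E e f c →
        e.2.1 = e'.2.1 → s e'.1 * x c + k e'.1 < s f.1 * x c + k f.1 → ¬ s e.1 < s e'.1 := by
      intro e f e' he he' hw ha hlt' hs
      have h1 := hw.next e' he' ha.symm hs
      have h2 := hE.inca f hw.memf
      have h3 := hE.inca e' he'
      rw [hw.left, ha] at h2
      have h4 := hx hw.ac
      rw [ha] at h4
      nlinarith [mul_nonneg (sub_nonneg.2 h1) (sub_pos.2 h4).le]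
    apply edge_eq_of_slope hL hE he₁ he₂ heq
    exact le_antisymm (not_lt.1 (key e₂ f₂ e₁ he₂ he₁ h₂ heq.symm h12))
      (not_lt.1 (key e₁ f₁ e₂ he₁ he₂ h₁ heq h21))
  · exfalso
    have hf := h₁.first e₂.2.1 (hE.memb e₂ he₂).1 hlt h₂.ac
    have hac := hx h₂.ac
    rw [not_and_or, not_le, not_le] at hf
    have hinc := hE.inca e₂ he₂
    rcases hf with hf | hf
    · -- below `e₁`, so `f₂` crosses `e₁`
      have hinc' := hE.inca f₂ h₂.memf
      rw [h₂.left] at hinc'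
      exact hnc e₁ he₁ f₂ h₂.memf (edgeCross_of_sign hac (hx.monotone hle)
        (by rw [h₂.left]) (hx.monotone h₁.cb) (hx.monotone h₂.cb') (by linarith) h12)
    · exact hnc e₂ he₂ f₁ h₁.memf (edgeCross_of_sign hac le_rfl
        (by rw [h₁.left]; exact hx.monotone hle) (hx.monotone h₂.cb) (hx.monotone h₁.cb')
        (by linarith) h21)

lemma wedge_inj (hx : StrictMono x) (hL : ∀ i j, s i = s j → k i = k j → i = j)
    (hE : EdgeSet x y s k S E)
    (hnc : ∀ e ∈ E, ∀ f ∈ E, ¬ EdgeCross x s k e f)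
    {e₁ f₁ e₂ f₂ : Fin n × Fin n × Fin n} {c : Fin n} (he₁ : e₁ ∈ E) (he₂ : e₂ ∈ E)
    (h₁ : Wedge x y s k S E e₁ f₁ c) (h₂ : Wedge x y s k S E e₂ f₂ c)
    (h21 : s e₂.1 * x c + k e₂.1 < s f₁.1 * x c + k f₁.1)
    (h12 : s e₁.1 * x c + k e₁.1 < s f₂.1 * x c + k f₂.1) : e₁ = e₂ := by
  rcases le_total e₁.2.1 e₂.2.1 with h | h
  · exact wedge_inj_aux hx hL hE hnc he₁ he₂ h₁ h₂ h21 h12 h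
  · exact (wedge_inj_aux hx hL hE hnc he₂ he₁ h₂ h₁ h12 h21 h).symm

lemma exists_wedge (hx : StrictMono x) (hE : EdgeSet x y s k S E)
    {e : Fin n × Fin n × Fin n} (he : e ∈ E)
    (ht : ¬ ∀ g ∈ E, g.2.1 = e.2.1 → s g.1 ≤ s e.1) :
    ∃ f, ∃ c ∈ S, Wedge x y s k S E e f c := by
  classical
  push Not at ht
  obtain ⟨g, hg, hga, hgs⟩ := ht
  obtain ⟨f, hf, hfmin⟩ := Finset.exists_min_image
    (E.filter (fun g => g.2.1 = e.2.1 ∧ s e.1 < s g.1)) (fun g => s g.1)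
    ⟨g, by simp [hg, hga, hgs]⟩
  simp only [Finset.mem_filter] at hf hfmin
  obtain ⟨hfE, hfa, hfs⟩ := hf
  have hab := hE.lt e he
  have hab' := hE.lt f hfE
  have hia := hE.inca e he
  have hia' := hE.inca f hfE
  have hib := hE.incb e he
  have hib' := hE.incb f hfE
  rw [hfa] at hab' hia'
  have mono : ∀ c, e.2.1 < c → s e.1 * x c + k e.1 ≤ s f.1 * x c + k f.1 := by
    intro c hc
    have := hx hc
    nlinarith [mul_nonneg (sub_nonneg.2 hfs.le) (sub_pos.2 this).le]
  have hne : (S.filter (fun c => e.2.1 < c ∧ c ≤ e.2.2 ∧ c ≤ f.2.2 ∧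
      s e.1 * x c + k e.1 ≤ y c ∧ y c ≤ s f.1 * x c + k f.1)).Nonempty := by
    rcases le_total e.2.2 f.2.2 with h | h
    · refine ⟨e.2.2, ?_⟩
      rw [Finset.mem_filter]
      exact ⟨(hE.memb e he).2, hab, le_rfl, h, hib.ge, hib.le.trans (mono _ hab)⟩
    · refine ⟨f.2.2, ?_⟩
      rw [Finset.mem_filter]
      exact ⟨(hE.memb f hfE).2, hab', h, le_rfl, (mono _ hab').trans hib'.ge, hib'.le⟩
  obtain ⟨c, hc, hcmin⟩ := Finset.exists_min_image _ id hne
  simp only [Finset.mem_filter, id] at hc hcmin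
  obtain ⟨hcS, h1, h2, h3, h4, h5⟩ := hc
  refine ⟨f, c, hcS, hfE, hfa, hfs, fun g hg h h' => hfmin g ⟨hg, h, h'⟩, h1, h2, h3, h4, h5, ?_⟩
  intro d hd had hdc hdd
  exact absurd (hcmin d ⟨hd, had, hdc.le.trans h2, hdc.le.trans h3, hdd.1, hdd.2⟩) (not_le.2 hdc)

lemma card_noncrossing (hx : StrictMono x) (hL : ∀ i j, s i = s j → k i = k j → i = j)
    (hE : EdgeSet x y s k S E)
    (hnc : ∀ e ∈ E, ∀ f ∈ E, ¬ EdgeCross x s k e f) : E.card ≤ 3 * S.card := by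
  classical
  let r : (Fin n × Fin n × Fin n) → (Fin n × Fin 3) → Prop := fun e z =>
    (z.2 = 0 ∧ e.2.1 = z.1 ∧ ∀ g ∈ E, g.2.1 = e.2.1 → s g.1 ≤ s e.1) ∨
    (z.2 = 1 ∧ ∃ f, Wedge x y s k S E e f z.1 ∧ y z.1 < s f.1 * x z.1 + k f.1) ∨
    (z.2 = 2 ∧ ∃ f, Wedge x y s k S E e f z.1 ∧ s e.1 * x z.1 + k e.1 < y z.1)
  have h := Finset.card_le_card_of_forall_subsingleton (s := E)
    (t := S ×ˢ (Finset.univ : Finset (Fin 3))) r ?_ ?_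
  · rw [Finset.card_product] at h
    simp at h
    omega
  · intro e he
    by_cases ht : ∀ g ∈ E, g.2.1 = e.2.1 → s g.1 ≤ s e.1
    · exact ⟨(e.2.1, 0), by simp [(hE.memb e he).1], Or.inl ⟨rfl, rfl, ht⟩⟩
    · obtain ⟨f, c, hc, hw⟩ := exists_wedge hx hE he ht
      by_cases hy : y c < s f.1 * x c + k f.1
      · exact ⟨(c, 1), by simp [hc], Or.inr (Or.inl ⟨rfl, f, hw, hy⟩)⟩
      · refine ⟨(c, 2), by simp [hc], Or.inr (Or.inr ⟨rfl, f, hw, ?_⟩)⟩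
        have h1 := hE.inca e he
        have h2 := hE.inca f hw.memf
        rw [hw.left] at h2
        have h3 := hx hw.ac
        have h4 := hw.slope
        simp only
        nlinarith [mul_pos (sub_pos.2 h4) (sub_pos.2 h3)]
  · rintro ⟨c, i⟩ - e₁ ⟨he₁, h₁⟩ e₂ ⟨he₂, h₂⟩
    rcases h₁ with ⟨hi, ha, h⟩ | ⟨hi, f₁, hw₁, hy₁⟩ | ⟨hi, f₁, hw₁, hy₁⟩ <;>
    rcases h₂ with ⟨hi', ha', h'⟩ | ⟨hi', f₂, hw₂, hy₂⟩ | ⟨hi', f₂, hw₂, hy₂⟩ <;>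
    simp only at hi hi' <;> subst hi <;> try (exact absurd hi' (by decide))
    · have hh : e₁.2.1 = e₂.2.1 := ha.trans ha'.symm
      exact edge_eq_of_slope hL hE he₁ he₂ hh
        (le_antisymm (h' e₁ he₁ hh) (h e₂ he₂ hh.symm))
    · exact wedge_inj hx hL hE hnc he₁ he₂ hw₁ hw₂ (hw₂.lo.trans_lt hy₁) (hw₁.lo.trans_lt hy₂)
    · exact wedge_inj hx hL hE hnc he₁ he₂ hw₁ hw₂ (lt_of_lt_of_le hy₂ hw₁.hi)
        (lt_of_lt_of_le hy₁ hw₂.hi)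

lemma EdgeSet.mono {S' : Finset (Fin n)} {E' : Finset (Fin n × Fin n × Fin n)}
    (hE : EdgeSet x y s k S E) (h : E' ⊆ E) (hm : ∀ e ∈ E', e.2.1 ∈ S' ∧ e.2.2 ∈ S') :
    EdgeSet x y s k S' E' :=
  ⟨fun e he => hE.lt e (h he), fun e he => hE.inca e (h he), fun e he => hE.incb e (h he), hm,
    fun e he f hf => hE.cons e (h he) f (h hf)⟩

open Classical in
lemma card_le_crossings (hx : StrictMono x) (hL : ∀ i j, s i = s j → k i = k j → i = j)
    (hE : EdgeSet x y s k S E) :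
    E.card ≤ 3 * S.card + ((E ×ˢ E).filter (fun p => EdgeCross x s k p.1 p.2)).card := by
  induction E using Finset.strongInduction with
  | H E ih =>
    by_cases hnc : ∀ e ∈ E, ∀ f ∈ E, ¬ EdgeCross x s k e f
    · exact (card_noncrossing hx hL hE hnc).trans (Nat.le_add_right _ _)
    · push Not at hnc
      obtain ⟨e, he, f, hf, hef⟩ := hnc
      have h1 := ih (E.erase e) (Finset.erase_ssubset he)
        (hE.mono (Finset.erase_subset _ _) (fun g hg => hE.memb g (Finset.mem_of_mem_erase hg)))
      have h2 := Finset.card_erase_add_one he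
      have h3 : (((E.erase e) ×ˢ (E.erase e)).filter (fun p => EdgeCross x s k p.1 p.2)).card <
          ((E ×ˢ E).filter (fun p => EdgeCross x s k p.1 p.2)).card := by
        apply Finset.card_lt_card
        rw [Finset.ssubset_iff_of_subset]
        · exact ⟨(e, f), by simp [he, hf, hef], by simp⟩
        · apply Finset.filter_subset_filter
          exact Finset.product_subset_product (Finset.erase_subset _ _) (Finset.erase_subset _ _)
      omega

end Linear

lemma card_colorings {n q : ℕ} (T : Finset (Fin n)) :
    (Finset.univ.filter (fun f : Fin n → Fin (q + 1) => ∀ i ∈ T, f i = 0)).card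
      * (q + 1) ^ T.card = (q + 1) ^ n := by
  classical
  have h : (Finset.univ.filter (fun f : Fin n → Fin (q + 1) => ∀ i ∈ T, f i = 0)) =
      Fintype.piFinset (fun i => if i ∈ T then ({0} : Finset (Fin (q + 1))) else Finset.univ) := by
    ext f
    simp only [Finset.mem_filter, Finset.mem_univ, true_and, Fintype.mem_piFinset]
    refine forall_congr' fun i => ?_
    by_cases hi : i ∈ T <;> simp [hi]
  rw [h, Fintype.card_piFinset]
  have h2 : ∀ i : Fin n, (if i ∈ T then ({0} : Finset (Fin (q + 1))) else Finset.univ).card =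
      if i ∈ T then 1 else q + 1 := by
    intro i
    split_ifs <;> simp
  simp only [h2]
  have h3 : (q + 1) ^ T.card = ∏ i : Fin n, if i ∈ T then q + 1 else 1 := by
    rw [Finset.prod_ite_mem, Finset.univ_inter, Finset.prod_const]
  rw [h3, ← Finset.prod_mul_distrib]
  rw [Finset.prod_congr rfl (g := fun _ => q + 1)]
  · simp
  · intro i _
    split_ifs <;> simp

/-- Double counting: sum over colourings of the number of items all of whose `t` marked vertices
have colour `0`. -/
lemma sum_colorings {n q t : ℕ} {β : Type*} (X : Finset β) (T : β → Finset (Fin n))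
    (hT : ∀ b ∈ X, (T b).card = t) [∀ f : Fin n → Fin (q + 1),
      DecidablePred (fun b => ∀ i ∈ T b, f i = 0)] :
    (∑ f : Fin n → Fin (q + 1), (X.filter (fun b => ∀ i ∈ T b, f i = 0)).card) * (q + 1) ^ t
      = X.card * (q + 1) ^ n := by
  classical
  simp only [Finset.card_filter]
  rw [Finset.sum_comm, Finset.sum_mul, Finset.card_eq_sum_ones, Finset.sum_mul]
  refine Finset.sum_congr rfl fun b hb => ?_
  rw [one_mul, ← card_colorings (T b), hT b hb, Finset.card_filter]
  congr 1
  exact Finset.sum_congr rfl fun f _ => by congr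

open Classical in
lemma card_amplified {n : ℕ} {x y s k : Fin n → ℝ} {E : Finset (Fin n × Fin n × Fin n)}
    (hx : StrictMono x) (hL : ∀ i j, s i = s j → k i = k j → i = j)
    (hE : EdgeSet x y s k Finset.univ E) (q : ℕ) :
    E.card * (q + 1) ^ 2 ≤ 3 * n * (q + 1) ^ 3 +
      ((E ×ˢ E).filter (fun p => EdgeCross x s k p.1 p.2)).card := by
  set X := (E ×ˢ E).filter (fun p => EdgeCross x s k p.1 p.2) with hX
  have hcol : ∀ f : Fin n → Fin (q + 1),
      (E.filter (fun e => ∀ i ∈ ({e.2.1, e.2.2} : Finset (Fin n)), f i = 0)).card ≤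
      3 * ((Finset.univ : Finset (Fin n)).filter (fun a => ∀ i ∈ ({a} : Finset (Fin n)), f i = 0)).card
      + (X.filter (fun p => ∀ i ∈ ({p.1.2.1, p.1.2.2, p.2.2.1, p.2.2.2} : Finset (Fin n)),
          f i = 0)).card := by
    intro f
    refine (card_le_crossings hx hL (hE.mono (Finset.filter_subset _ _) (S' := 
      (Finset.univ : Finset (Fin n)).filter (fun a => ∀ i ∈ ({a} : Finset (Fin n)), f i = 0)) 
        ?_)).trans ?_
    · intro e he
      simpa using (Finset.mem_filter.1 he).2
    · gcongr
      intro p hp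
      simp only [Finset.mem_filter, Finset.mem_product, hX, Finset.mem_insert,
        Finset.mem_singleton, forall_eq_or_imp, forall_eq] at hp ⊢
      tauto
  have hsum := Finset.sum_le_sum (s := Finset.univ) (fun f _ => hcol f)
  rw [Finset.sum_add_distrib, ← Finset.mul_sum] at hsum
  have h2 := sum_colorings (q := q) (t := 2) E (fun e => ({e.2.1, e.2.2} : Finset (Fin n)))
    (fun e he => Finset.card_pair (hE.lt e he).ne)
  have h1 := sum_colorings (q := q) (t := 1) (Finset.univ : Finset (Fin n))
    (fun a => ({a} : Finset (Fin n))) (fun a _ => Finset.card_singleton a)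
  have h4 := sum_colorings (q := q) (t := 4) X
    (fun p => ({p.1.2.1, p.1.2.2, p.2.2.1, p.2.2.2} : Finset (Fin n))) (by
      rintro ⟨e, f⟩ hp
      simp only [hX, Finset.mem_filter, Finset.mem_product] at hp
      obtain ⟨⟨he, hf⟩, hne, t, ht1, ht2, ht3, ht4, ht⟩ := hp
      have hmeet : ∀ c, c = e.2.1 ∨ c = e.2.2 → c = f.2.1 ∨ c = f.2.2 → False := by
        intro c h h'
        have e1 : y c = s e.1 * x c + k e.1 := by
          rcases h with rfl | rfl
          · exact hE.inca e he
          · exact hE.incb e he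
        have e2 : y c = s f.1 * x c + k f.1 := by
          rcases h' with rfl | rfl
          · exact hE.inca f hf
          · exact hE.incb f hf
        have hct : x c - t ≠ 0 := by
          rcases h with rfl | rfl
          · linarith
          · linarith
        have hs : s e.1 = s f.1 := by
          have : (s e.1 - s f.1) * (x c - t) = 0 := by linarith
          rcases mul_eq_zero.1 this with h0 | h0
          · linarith
          · exact absurd h0 hct
        exact hne (hL _ _ hs (by rw [hs] at e1; linarith))
      have n1 := (hE.lt e he).ne
      have n2 := (hE.lt f hf).ne
      have n3 : e.2.1 ≠ f.2.1 := fun h => hmeet _ (Or.inl rfl) (Or.inl h)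
      have n4 : e.2.1 ≠ f.2.2 := fun h => hmeet _ (Or.inl rfl) (Or.inr h)
      have n5 : e.2.2 ≠ f.2.1 := fun h => hmeet _ (Or.inr rfl) (Or.inl h)
      have n6 : e.2.2 ≠ f.2.2 := fun h => hmeet _ (Or.inr rfl) (Or.inr h)
      rw [Finset.card_insert_of_notMem, Finset.card_insert_of_notMem, Finset.card_pair n2] <;>
      simp [n1, n3, n4, n5, n6])
  set A2 := ∑ f : Fin n → Fin (q + 1),
    (E.filter (fun e => ∀ i ∈ ({e.2.1, e.2.2} : Finset (Fin n)), f i = 0)).card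
  set A1 := ∑ f : Fin n → Fin (q + 1),
    ((Finset.univ : Finset (Fin n)).filter (fun a => ∀ i ∈ ({a} : Finset (Fin n)), f i = 0)).card
  set A4 := ∑ f : Fin n → Fin (q + 1),
    (X.filter (fun p => ∀ i ∈ ({p.1.2.1, p.1.2.2, p.2.2.1, p.2.2.2} : Finset (Fin n)),
          f i = 0)).card
  have hM : 0 < (q + 1) ^ n := by positivity
  rw [Finset.card_univ, Fintype.card_fin] at h1
  refine Nat.le_of_mul_le_mul_right ?_ hM
  calc E.card * (q + 1) ^ 2 * (q + 1) ^ n = A2 * (q + 1) ^ 4 := by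
        rw [mul_right_comm, ← h2]; ring
    _ ≤ (3 * A1 + A4) * (q + 1) ^ 4 := Nat.mul_le_mul_right _ hsum
    _ = 3 * (A1 * (q + 1) ^ 1) * (q + 1) ^ 3 + A4 * (q + 1) ^ 4 := by ring
    _ = _ := by rw [h1, h4]; ring

/-- Incidences between `n` points and `n` lines. -/
lemma card_incidences {n : ℕ} {x y s k : Fin n → ℝ}
    (hx : StrictMono x) (hL : ∀ i j, s i = s j → k i = k j → i = j) (q : ℕ)
    (I : Finset (Fin n × Fin n)) (hI : ∀ p, p ∈ I ↔ y p.2 = s p.1 * x p.2 + k p.1) :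
    I.card * (q + 1) ^ 2 ≤ n * (q + 1) ^ 2 + 3 * n * (q + 1) ^ 3 + n ^ 2 := by
  classical
  set E : Finset (Fin n × Fin n × Fin n) := Finset.univ.filter (fun e =>
    e.2.1 < e.2.2 ∧ y e.2.1 = s e.1 * x e.2.1 + k e.1 ∧ y e.2.2 = s e.1 * x e.2.2 + k e.1 ∧
    ∀ c, e.2.1 < c → y c = s e.1 * x c + k e.1 → e.2.2 ≤ c) with hEdef
  have hmem : ∀ e, e ∈ E ↔ (e.2.1 < e.2.2 ∧ y e.2.1 = s e.1 * x e.2.1 + k e.1 ∧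
    y e.2.2 = s e.1 * x e.2.2 + k e.1 ∧
    ∀ c, e.2.1 < c → y c = s e.1 * x c + k e.1 → e.2.2 ≤ c) := fun e => by simp [hEdef]
  have hE : EdgeSet x y s k Finset.univ E := by
    refine ⟨fun e he => ((hmem e).1 he).1, fun e he => ((hmem e).1 he).2.1,
      fun e he => ((hmem e).1 he).2.2.1, fun e _ => by simp, ?_⟩
    rintro ⟨i, a, b⟩ he ⟨j, c, d⟩ hf hij hac
    rw [hmem] at he hf
    simp only at he hf hij hac
    subst hij hac
    have h1 := he.2.2.2 d hf.1 hf.2.2.1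
    have h2 := hf.2.2.2 b he.1 he.2.2.1
    rw [le_antisymm h1 h2]
  have hamp := card_amplified hx hL hE q
  have hX : ((E ×ˢ E).filter (fun p => EdgeCross x s k p.1 p.2)).card ≤ n ^ 2 := by
    have : n ^ 2 = (Finset.univ : Finset (Fin n × Fin n)).card := by
      simp [sq]
    rw [this]
    apply Finset.card_le_card_of_injOn (fun p => (p.1.1, p.2.1)) (fun _ _ => by simp)
    have same : ∀ e ∈ E, ∀ f ∈ E, ∀ t, e.1 = f.1 → x e.2.1 < t → t < x e.2.2 → x f.2.1 < t →
        t < x f.2.2 → e.2.1 ≤ f.2.1 → e = f := by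
      intro e he f hf t hij h1 h2 h3 h4 hle
      refine hE.cons e he f hf hij ?_
      by_contra hne
      have := ((hmem e).1 he).2.2.2 f.2.1 (lt_of_le_of_ne hle hne)
        (by rw [hij]; exact hE.inca f hf)
      have := hx.monotone this
      linarith
    have same' : ∀ e ∈ E, ∀ f ∈ E, ∀ t, e.1 = f.1 → x e.2.1 < t → t < x e.2.2 → x f.2.1 < t →
        t < x f.2.2 → e = f := by
      intro e he f hf t hij h1 h2 h3 h4
      rcases le_total e.2.1 f.2.1 with h | h
      · exact same e he f hf t hij h1 h2 h3 h4 h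
      · exact (same f hf e he t hij.symm h3 h4 h1 h2 h).symm
    rintro ⟨e, f⟩ hp ⟨e', f'⟩ hp' heq
    simp only [Finset.coe_filter, Set.mem_ofPred_eq, Finset.mem_product] at hp hp'
    simp only [Prod.mk.injEq] at heq
    obtain ⟨⟨he, hf⟩, hne, t, h1, h2, h3, h4, h5⟩ := hp
    obtain ⟨⟨he', hf'⟩, hne', t', h1', h2', h3', h4', h5'⟩ := hp'
    rw [← heq.1, ← heq.2] at h5'
    have htt : t = t' := by
      by_contra hc
      have h0 : (s e.1 - s f.1) * (t - t') = 0 := by linarith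
      rcases mul_eq_zero.1 h0 with h0 | h0
      · have hs : s e.1 = s f.1 := by linarith
        exact hne (hL _ _ hs (by rw [hs] at h5; linarith))
      · exact hc (by linarith)
    subst htt
    rw [same' e he e' he' t heq.1 h1 h2 h1' h2', same' f hf f' hf' t heq.2 h3 h4 h3' h4']
  have hIE : I.card ≤ n + E.card := by
    have hsplit : I.card = (I.filter (fun p => ∀ c, p.2 < c → (p.1, c) ∉ I)).card +
        (I.filter (fun p => ¬ ∀ c, p.2 < c → (p.1, c) ∉ I)).card :=
      (Finset.card_filter_add_card_filter_not _).symm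
    rw [hsplit]
    apply Nat.add_le_add
    · have : n = (Finset.univ : Finset (Fin n)).card := by simp
      conv_rhs => rw [this]
      apply Finset.card_le_card_of_injOn (fun p => p.1) (fun _ _ => by simp)
      rintro ⟨i, a⟩ hp ⟨j, b⟩ hp' hij
      simp only [Finset.coe_filter, Set.mem_ofPred_eq] at hp hp' hij
      subst hij
      rcases lt_trichotomy a b with h | h | h
      · exact absurd hp'.1 (hp.2 b h)
      · rw [h]
      · exact absurd hp.1 (hp'.2 a h)
    · refine (Finset.card_le_card ?_).trans (Finset.card_image_le (s := E)
        (f := fun e => (e.1, e.2.1)))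
      rintro ⟨i, a⟩ hp
      simp only [Finset.mem_filter] at hp
      obtain ⟨hp, hc⟩ := hp
      push Not at hc
      obtain ⟨c, hac, hc⟩ := hc
      obtain ⟨b, hb, hbmin⟩ := Finset.exists_min_image
        (Finset.univ.filter (fun c => a < c ∧ (i, c) ∈ I)) id ⟨c, by simp [hac, hc]⟩
      simp only [Finset.mem_filter, Finset.mem_univ, true_and, id] at hb hbmin
      rw [Finset.mem_image]
      refine ⟨(i, a, b), (hmem _).2 ⟨hb.1, (hI _).1 hp, (hI _).1 hb.2, fun c h h' => ?_⟩, rfl⟩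
      exact hbmin c ⟨h, (hI (i, c)).2 h'⟩
  have := Nat.mul_le_mul_right ((q + 1) ^ 2) hIE
  rw [add_mul] at this
  omega

theorem repeated_two_by_two_minors_upper_bound :
    ∃ C : ℝ, 0 < C ∧ ∀ (n : ℕ), 2 ≤ n →
      ∀ A : Matrix (Fin 2) (Fin n) ℝ, IsTotallyPositive A →
        ∀ α : ℝ,
          (({p : Fin n × Fin n | p.1 < p.2 ∧
              A 0 p.1 * A 1 p.2 - A 0 p.2 * A 1 p.1 = α} : Set (Fin n × Fin n)).ncard : ℝ)
            ≤ C * (n : ℝ) ^ ((4 : ℝ) / 3) := by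
  classical
  refine ⟨8, by norm_num, ?_⟩
  intro n hn A hA α
  have hpos : ∀ j, 0 < A 0 j := by
    intro j
    have := hA 1 ![0] ![j] (Subsingleton.strictMono _) (Subsingleton.strictMono _)
    rw [Matrix.det_fin_one] at this
    exact this
  have hdet : ∀ i j, i < j → 0 < A 0 i * A 1 j - A 0 j * A 1 i := by
    intro i j hij
    have := hA 2 ![0, 1] ![i, j] (by intro a b; fin_cases a <;> fin_cases b <;> simp)
      (by intro a b; fin_cases a <;> fin_cases b <;> simp [hij])
    rw [Matrix.det_fin_two] at this
    exact this
  rcases le_or_gt α 0 with hα | hα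
  · have : ({p : Fin n × Fin n | p.1 < p.2 ∧
              A 0 p.1 * A 1 p.2 - A 0 p.2 * A 1 p.1 = α} : Set (Fin n × Fin n)) = ∅ := by
      ext p
      simp only [Set.mem_ofPred_eq, Set.mem_empty_iff_false, iff_false, not_and]
      intro h h'
      linarith [hdet _ _ h]
    rw [this]
    simp
    positivity
  have hx : StrictMono (fun j => A 1 j / A 0 j) := by
    intro i j hij
    simp only
    rw [div_lt_div_iff₀ (hpos i) (hpos j)]
    linarith [hdet i j hij]
  have hL : ∀ i j, (fun i => A 0 i / α) i = (fun i => A 0 i / α) j →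
      (fun i => - A 1 i / α) i = (fun i => - A 1 i / α) j → i = j := by
    intro i j h1 h2
    simp only at h1 h2
    have h1 : A 0 i = A 0 j := by field_simp at h1; exact h1
    have h2 : A 1 i = A 1 j := by field_simp at h2; linarith
    rcases lt_trichotomy i j with h | h | h
    · have := hdet i j h
      rw [h1, h2] at this
      linarith
    · exact h
    · have := hdet j i h
      rw [h1, h2] at this
      linarith
  have hiff : ∀ p : Fin n × Fin n, 1 / A 0 p.2 = A 0 p.1 / α * (A 1 p.2 / A 0 p.2) + - A 1 p.1 / α ↔
      A 0 p.1 * A 1 p.2 - A 0 p.2 * A 1 p.1 = α := by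
    intro p
    have := (hpos p.2).ne'
    have := hα.ne'
    field_simp
    constructor <;> intro h <;> linarith
  set I : Finset (Fin n × Fin n) := Finset.univ.filter (fun p =>
    A 0 p.1 * A 1 p.2 - A 0 p.2 * A 1 p.1 = α) with hIdef
  have hI : ∀ p : Fin n × Fin n, p ∈ I ↔ (fun j => 1 / A 0 j) p.2 =
      (fun i => A 0 i / α) p.1 * (fun j => A 1 j / A 0 j) p.2 + (fun i => - A 1 i / α) p.1 := by
    intro p
    simp only [hIdef, Finset.mem_filter, Finset.mem_univ, true_and]
    exact (hiff p).symm
  have hcard : ({p : Fin n × Fin n | p.1 < p.2 ∧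
      A 0 p.1 * A 1 p.2 - A 0 p.2 * A 1 p.1 = α} : Set (Fin n × Fin n)).ncard ≤ I.card := by
    rw [← Set.ncard_coe_finset]
    apply Set.ncard_le_ncard _ (Finset.finite_toSet I)
    intro p hp
    simp [hIdef, hp.2]
  obtain ⟨q, hq⟩ : ∃ q : ℕ, q = ⌊(n : ℝ) ^ ((1 : ℝ) / 3)⌋₊ := ⟨_, rfl⟩
  have hmain := card_incidences (y := fun j => 1 / A 0 j) hx hL q I hI
  set w : ℝ := (n : ℝ) ^ ((1 : ℝ) / 3) with hw
  have hn1 : (1 : ℝ) ≤ n := by exact_mod_cast (by omega : 1 ≤ n)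
  have hw1 : 1 ≤ w := Real.one_le_rpow hn1 (by norm_num)
  have hw3 : w ^ 3 = n := by
    rw [hw, ← Real.rpow_natCast, ← Real.rpow_mul (by linarith)]
    norm_num
  have hw4 : (n : ℝ) ^ ((4 : ℝ) / 3) = w ^ 4 := by
    rw [hw, ← Real.rpow_natCast, ← Real.rpow_mul (by linarith)]
    norm_num
  rw [hw4]
  have hqle : (q : ℝ) ≤ w := by rw [hq]; exact Nat.floor_le (by linarith)
  have hqlt : w < q + 1 := by rw [hq]; exact Nat.lt_floor_add_one _
  have hmain' : (I.card : ℝ) * (q + 1) ^ 2 ≤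
      n * (q + 1) ^ 2 + 3 * n * (q + 1) ^ 3 + n ^ 2 := by exact_mod_cast hmain
  have hcard' : (({p : Fin n × Fin n | p.1 < p.2 ∧
      A 0 p.1 * A 1 p.2 - A 0 p.2 * A 1 p.1 = α} : Set (Fin n × Fin n)).ncard : ℝ) ≤ I.card := by
    exact_mod_cast hcard
  refine hcard'.trans ?_
  have hQ : (0 : ℝ) < (q + 1) ^ 2 := by positivity
  refine le_of_mul_le_mul_right (hmain'.trans ?_) hQ
  rw [← hw3]
  have b1 : (q : ℝ) + 1 ≤ 2 * w := by linarith
  have b2 : w ^ 2 ≤ ((q : ℝ) + 1) ^ 2 := by gcongr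
  have hw0 : 0 ≤ w := by linarith
  have c1 : w ^ 3 * ((q : ℝ) + 1) ^ 2 ≤ w ^ 4 * (q + 1) ^ 2 := by gcongr <;> norm_num
  have c2 : 3 * w ^ 3 * ((q : ℝ) + 1) ^ 3 ≤ 6 * w ^ 4 * (q + 1) ^ 2 := by
    have : 3 * w ^ 3 * ((q : ℝ) + 1) ^ 2 * (q + 1) ≤ 3 * w ^ 3 * ((q : ℝ) + 1) ^ 2 * (2 * w) := by
      gcongr
    nlinarith [this]
  have c3 : (w ^ 3) ^ 2 ≤ w ^ 4 * ((q : ℝ) + 1) ^ 2 := by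
    have : w ^ 4 * w ^ 2 ≤ w ^ 4 * ((q : ℝ) + 1) ^ 2 := by gcongr
    nlinarith [this]
  linarith
end

section
/- There exists a constant c > 0 such that for every sufficiently large n there exists a 2×n totally positive real matrix A with at least c·n^(4/3) pairs of column indices 1 ≤ i < j ≤ n for which the 2×2 minor of A on columns i and j equals 1. -/
/-- Building a `2 × n` TP matrix from a set of slopes and a positive weight function. -/
lemma tp_of_slopes (n : ℕ) (S : Finset ℝ) (hS : S.card = n) (W : ℝ → ℝ) (hW : ∀ x, 0 < W x) :
    ∃ A : Matrix (Fin 2) (Fin n) ℝ, IsTotallyPositive A ∧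
      ∀ E : Finset (ℝ × ℝ), (∀ p ∈ E, p.1 ∈ S ∧ p.2 ∈ S ∧ p.1 < p.2 ∧
          W p.1 * W p.2 * (p.2 - p.1) = 1) →
        E.card ≤ ({p : Fin n × Fin n | p.1 < p.2 ∧
              A 0 p.1 * A 1 p.2 - A 0 p.2 * A 1 p.1 = 1} : Set (Fin n × Fin n)).ncard := by
  obtain ⟨L, hL⟩ := S.finite_toSet.bddBelow
  have hL' : ∀ s ∈ S, L ≤ s := fun s hs => hL hs
  set s := S.orderEmbOfFin hS with hs
  have hmem : ∀ i, s i ∈ S := fun i => S.orderEmbOfFin_mem hS i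
  let A : Matrix (Fin 2) (Fin n) ℝ :=
    Matrix.of ![fun i => W (s i), fun i => W (s i) * (s i - L + 1)]
  have hA0 : ∀ i, A 0 i = W (s i) := fun i => rfl
  have hA1 : ∀ i, A 1 i = W (s i) * (s i - L + 1) := fun i => rfl
  have hdet : ∀ i j, A 0 i * A 1 j - A 0 j * A 1 i = W (s i) * W (s j) * (s j - s i) := by
    intro i j
    rw [hA0, hA0, hA1, hA1]; ring
  have hpos : ∀ a i, 0 < A a i := by
    intro a i
    have h1 := hW (s i)
    have h2 := hL' _ (hmem i)
    fin_cases a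
    · exact h1
    · exact mul_pos h1 (by linarith)
  refine ⟨A, ?_, ?_⟩
  · intro k r c hr hc
    have hk : k ≤ 2 := by
      have := Fintype.card_le_of_injective r hr.injective
      simpa using this
    interval_cases k
    · simp
    · rw [Matrix.det_fin_one]; exact hpos _ _
    · rw [Matrix.det_fin_two]
      have h01 : r 0 < r 1 := hr (by decide)
      have h0 : r 0 = 0 := by omega
      have h1 : r 1 = 1 := by omega
      simp only [Matrix.submatrix_apply, h0, h1]
      rw [hdet]
      have : s (c 0) < s (c 1) := s.strictMono (hc (by decide))
      exact mul_pos (mul_pos (hW _) (hW _)) (by linarith)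
  · intro E hE
    have hsub : (E : Set (ℝ × ℝ)) ⊆ (fun p : Fin n × Fin n => (s p.1, s p.2)) ''
        {p : Fin n × Fin n | p.1 < p.2 ∧ A 0 p.1 * A 1 p.2 - A 0 p.2 * A 1 p.1 = 1} := by
      rintro ⟨a, b⟩ hp
      obtain ⟨ha, hb, hab, h1⟩ := hE _ hp
      simp only at ha hb hab h1
      have hr : Set.range s = S := S.range_orderEmbOfFin hS
      obtain ⟨i, rfl⟩ : a ∈ Set.range s := by rw [hr]; exact ha
      obtain ⟨j, rfl⟩ : b ∈ Set.range s := by rw [hr]; exact hb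
      refine ⟨(i, j), ⟨s.lt_iff_lt.mp hab, ?_⟩, rfl⟩
      rw [hdet]; exact h1
    rw [← Set.ncard_coe_finset]
    exact (Set.ncard_le_ncard hsub (Set.toFinite _)).trans (Set.ncard_image_le (Set.toFinite _))

/-- Index type: points on the left, lines on the right. -/
abbrev PL (k : ℕ) : Type := (Fin k × Fin (2 * k ^ 2)) ⊕ (Fin k × Fin (k ^ 2))

/-- The slope of the vector attached to a point or a line. -/
noncomputable def plSlope (k : ℕ) : PL k → ℝ
  | .inl (i, y) => ((y : ℕ) + 1 : ℝ) + ((k : ℝ) ^ 3 + 2 * k ^ 2 + 1) * ((i : ℕ) + 1)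
  | .inr (j, l) => - (((l : ℕ) + 1 : ℝ) * (2 * k ^ 2 + 1) / ((k : ℝ) ^ 3 + (j : ℕ)))

/-- The first coordinate of the vector attached to a point or a line. -/
noncomputable def plWeight (k : ℕ) : PL k → ℝ
  | .inl (i, y) => (k : ℝ) ^ 3 / ((k : ℝ) ^ 3 * ((i : ℕ) + 1) + ((y : ℕ) + 1))
  | .inr (j, _) => ((k : ℝ) ^ 3 + (j : ℕ)) /
      ((k : ℝ) ^ 3 * ((k : ℝ) ^ 3 + 2 * k ^ 2 + 1 + (j : ℕ)))

lemma plWeight_pos (k : ℕ) (hk : 0 < k) (a : PL k) : 0 < plWeight k a := by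
  have : (0 : ℝ) < k := by exact_mod_cast hk
  rcases a with ⟨i, y⟩ | ⟨j, l⟩ <;> simp only [plWeight] <;> positivity

lemma plSlope_neg (k : ℕ) (hk : 0 < k) (a) : plSlope k (.inr a) < 0 := by
  have : (0 : ℝ) < k := by exact_mod_cast hk
  rcases a with ⟨j, l⟩
  simp only [plSlope]
  rw [neg_lt_zero]; positivity

lemma plSlope_pos (k : ℕ) (hk : 0 < k) (a) : 0 < plSlope k (.inl a) := by
  have : (0 : ℝ) < k := by exact_mod_cast hk
  rcases a with ⟨j, l⟩
  simp only [plSlope]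
  positivity

/-- Uniqueness of mixed-radix digits. -/
lemma digits_unique (K a b x y : ℕ) (ha : a < K) (hb : b < K) (h : a + K * x = b + K * y) :
    a = b ∧ x = y := by
  have hK : 0 < K := by omega
  have h1 : (a + K * x) % K = (b + K * y) % K := by rw [h]
  rw [Nat.add_mul_mod_self_left, Nat.add_mul_mod_self_left, Nat.mod_eq_of_lt ha,
    Nat.mod_eq_of_lt hb] at h1
  subst h1
  exact ⟨rfl, Nat.eq_of_mul_eq_mul_left hK (by omega)⟩

lemma plSlope_injective (k : ℕ) (hk : 0 < k) : Function.Injective (plSlope k) := by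
  have hk' : (0 : ℝ) < k := by exact_mod_cast hk
  rintro (⟨i, y⟩ | ⟨j, l⟩) (⟨i', y'⟩ | ⟨j', l'⟩) h
  · simp only [plSlope] at h
    have h' : (y : ℕ) + (k ^ 3 + 2 * k ^ 2 + 1) * (i : ℕ)
        = (y' : ℕ) + (k ^ 3 + 2 * k ^ 2 + 1) * (i' : ℕ) := by
      have : ((y : ℕ) : ℝ) + ((k : ℝ) ^ 3 + 2 * k ^ 2 + 1) * (i : ℕ)
        = (y' : ℕ) + ((k : ℝ) ^ 3 + 2 * k ^ 2 + 1) * (i' : ℕ) := by linarith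
      exact_mod_cast this
    obtain ⟨h1, h2⟩ := digits_unique _ _ _ _ _ (by have := y.2; omega) (by have := y'.2; omega) h'
    rw [Fin.ext h1, Fin.ext h2]
  · have := plSlope_pos k hk (i, y)
    have := plSlope_neg k hk (j', l')
    linarith
  · have := plSlope_pos k hk (i', y')
    have := plSlope_neg k hk (j, l)
    linarith
  · simp only [plSlope, neg_inj] at h
    rw [div_eq_div_iff (by positivity) (by positivity)] at h
    have h0 : (((l : ℕ) : ℝ) + 1) * ((k : ℝ) ^ 3 + (j' : ℕ))
        = (((l' : ℕ) : ℝ) + 1) * ((k : ℝ) ^ 3 + (j : ℕ)) := by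
      have hp : (0 : ℝ) < 2 * k ^ 2 + 1 := by positivity
      apply mul_right_cancel₀ hp.ne'
      linarith
    have h1 : ((l : ℕ) + 1) * (k ^ 3 + (j' : ℕ)) = ((l' : ℕ) + 1) * (k ^ 3 + (j : ℕ)) := by
      exact_mod_cast h0
    have key : ∀ (p : Fin (k ^ 2)) (q : Fin k), ((p : ℕ) + 1) * (q : ℕ) < k ^ 3 := by
      intro p q
      have hp : (p : ℕ) + 1 ≤ k ^ 2 := p.2
      calc ((p : ℕ) + 1) * (q : ℕ) ≤ k ^ 2 * q := Nat.mul_le_mul_right _ hp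
        _ < k ^ 2 * k := Nat.mul_lt_mul_of_pos_left q.2 (by positivity)
        _ = k ^ 3 := by ring
    obtain ⟨h2, h3⟩ := digits_unique (k ^ 3) (((l : ℕ) + 1) * (j' : ℕ)) (((l' : ℕ) + 1) * (j : ℕ))
      ((l : ℕ) + 1) ((l' : ℕ) + 1) (key _ _) (key _ _) (by linarith)
    rw [h3] at h2
    have h4 := Nat.eq_of_mul_eq_mul_left (Nat.succ_pos _) h2
    have h5 : (l : ℕ) = l' := by omega
    rw [Fin.ext h5, Fin.ext h4]

/-- The point with abscissa number `i` on the line `(j, l)`. -/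
def ptOn (k : ℕ) (t : Fin k × Fin k × Fin (k ^ 2)) : Fin k × Fin (2 * k ^ 2) :=
  (t.1, ⟨(t.2.1 : ℕ) * ((t.1 : ℕ) + 1) + t.2.2, by
    have h1 : (t.2.1 : ℕ) * ((t.1 : ℕ) + 1) ≤ k * k := Nat.mul_le_mul t.2.1.2.le t.1.2
    have h2 := t.2.2.2
    have h3 : k * k = k ^ 2 := by ring
    omega⟩)

lemma pl_minor (k : ℕ) (hk : 0 < k) (t : Fin k × Fin k × Fin (k ^ 2)) :
    plWeight k (.inr t.2) * plWeight k (.inl (ptOn k t)) *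
      (plSlope k (.inl (ptOn k t)) - plSlope k (.inr t.2)) = 1 := by
  have hk' : (0 : ℝ) < k := by exact_mod_cast hk
  obtain ⟨i, j, l⟩ := t
  simp only [plWeight, plSlope, ptOn]
  push_cast
  have hx : (0 : ℝ) ≤ ((i : ℕ) : ℝ) := by positivity
  have hj : (0 : ℝ) ≤ ((j : ℕ) : ℝ) := by positivity
  have hl : (0 : ℝ) ≤ ((l : ℕ) : ℝ) := by positivity
  generalize ((i : ℕ) : ℝ) = x at *
  generalize ((j : ℕ) : ℝ) = m at *
  generalize ((l : ℕ) : ℝ) = b at *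
  generalize (k : ℝ) = q at *
  have d1 : q ^ 3 * (x + 1) + (m * (x + 1) + b + 1) ≠ 0 := by positivity
  have d2 : q ^ 3 + 2 * q ^ 2 + 1 + m ≠ 0 := by positivity
  have d3 : q ^ 3 + m ≠ 0 := by positivity
  have d4 : q ≠ 0 := hk'.ne'
  field_simp
  ring

lemma exists_k (n : ℕ) (hn : 3 ≤ n) : ∃ k : ℕ, 0 < k ∧ 3 * k ^ 3 ≤ n ∧ n ≤ (3 * k) ^ 3 := by
  have hP : 3 * 1 ^ 3 ≤ n := by omega
  have hk := Nat.findGreatest_spec (P := fun k => 3 * k ^ 3 ≤ n) (m := 1) (n := n) (by omega) hP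
  have hk1 := Nat.le_findGreatest (P := fun k => 3 * k ^ 3 ≤ n) (m := 1) (n := n) (by omega) hP
  set k := Nat.findGreatest (fun k => 3 * k ^ 3 ≤ n) n with hkd
  refine ⟨k, hk1, hk, ?_⟩
  by_contra! hlt
  have h2 : 3 * (k + 1) ^ 3 ≤ n := by
    have : (k + 1) ^ 3 ≤ (2 * k) ^ 3 := Nat.pow_le_pow_left (by omega) 3
    have e1 : (2 * k) ^ 3 = 8 * k ^ 3 := by ring
    have e2 : (3 * k) ^ 3 = 27 * k ^ 3 := by ring
    omega
  have h3 : k + 1 ≤ n := by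
    have : k + 1 ≤ (k + 1) ^ 3 := Nat.le_self_pow (by omega) _
    omega
  have := Nat.le_findGreatest (P := fun k => 3 * k ^ 3 ≤ n) h3 h2
  omega

theorem repeated_two_by_two_minors_lower_bound :
    ∃ c : ℝ, 0 < c ∧ ∃ N : ℕ, ∀ n : ℕ, N ≤ n →
      ∃ A : Matrix (Fin 2) (Fin n) ℝ, IsTotallyPositive A ∧
        c * (n : ℝ) ^ ((4 : ℝ) / 3) ≤
          (({p : Fin n × Fin n | p.1 < p.2 ∧
              A 0 p.1 * A 1 p.2 - A 0 p.2 * A 1 p.1 = 1} : Set (Fin n × Fin n)).ncard : ℝ) := by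
  refine ⟨1 / 81, by norm_num, 3, fun n hn => ?_⟩
  obtain ⟨k, hk, hk1, hk2⟩ := exists_k n hn
  have hinj := plSlope_injective k hk
  have hcard : (Finset.univ.image (plSlope k)).card ≤ n := by
    rw [Finset.card_image_of_injective _ hinj, Finset.card_univ]
    simp only [Fintype.card_sum, Fintype.card_prod, Fintype.card_fin]
    have : k * (2 * k ^ 2) + k * k ^ 2 = 3 * k ^ 3 := by ring
    omega
  obtain ⟨S, hsub, hS⟩ := Infinite.exists_superset_card_eq _ n hcard
  have hmem : ∀ a, plSlope k a ∈ S := fun a => hsub (Finset.mem_image_of_mem _ (Finset.mem_univ a))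
  let W : ℝ → ℝ := Function.extend (plSlope k) (plWeight k) (fun _ => 1)
  have hWe : ∀ a, W (plSlope k a) = plWeight k a := fun a => hinj.extend_apply _ _ a
  have hW : ∀ x, 0 < W x := by
    intro x
    by_cases hx : ∃ a, plSlope k a = x
    · obtain ⟨a, rfl⟩ := hx
      rw [hWe]; exact plWeight_pos k hk a
    · have : W x = 1 := Function.extend_apply' _ _ _ hx
      rw [this]; exact one_pos
  obtain ⟨A, hA, hE⟩ := tp_of_slopes n S hS W hW
  refine ⟨A, hA, ?_⟩
  let φ : Fin k × Fin k × Fin (k ^ 2) → ℝ × ℝ :=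
    fun t => (plSlope k (.inr t.2), plSlope k (.inl (ptOn k t)))
  have hφ : Function.Injective φ := by
    intro t t' h
    have h1 := Sum.inr_injective (hinj (congrArg Prod.fst h))
    have h2' : plSlope k (.inl (ptOn k t)) = plSlope k (.inl (ptOn k t')) := congrArg Prod.snd h
    have h2 := Sum.inl_injective (hinj h2')
    have h3 : t.1 = t'.1 := congrArg (fun p : Fin k × Fin (2 * k ^ 2) => p.1) h2
    exact Prod.ext h3 h1
  have hcount := hE (Finset.univ.image φ) (by
    intro p hp
    obtain ⟨t, -, rfl⟩ := Finset.mem_image.mp hp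
    refine ⟨hmem (.inr t.2), hmem (.inl (ptOn k t)), (plSlope_neg k hk t.2).trans (plSlope_pos k hk (ptOn k t)), ?_⟩
    simp only [φ, hWe]
    exact pl_minor k hk t)
  rw [Finset.card_image_of_injective _ hφ, Finset.card_univ] at hcount
  simp only [Fintype.card_prod, Fintype.card_fin] at hcount
  have h4 : ((k : ℝ)) ^ 4 ≤ (({p : Fin n × Fin n | p.1 < p.2 ∧
              A 0 p.1 * A 1 p.2 - A 0 p.2 * A 1 p.1 = 1} : Set (Fin n × Fin n)).ncard : ℝ) := by
    have e : k * (k * k ^ 2) = k ^ 4 := by ring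
    rw [e] at hcount
    exact_mod_cast hcount
  have h5 : (n : ℝ) ^ ((4 : ℝ) / 3) ≤ 81 * (k : ℝ) ^ 4 := by
    have hle : (n : ℝ) ≤ (3 * (k : ℝ)) ^ 3 := by exact_mod_cast hk2
    calc (n : ℝ) ^ ((4 : ℝ) / 3) ≤ ((3 * (k : ℝ)) ^ 3) ^ ((4 : ℝ) / 3) :=
          Real.rpow_le_rpow (by positivity) hle (by norm_num)
      _ = (3 * (k : ℝ)) ^ 4 := by
          rw [← Real.rpow_natCast (3 * (k : ℝ)) 3, ← Real.rpow_mul (by positivity),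
            ← Real.rpow_natCast (3 * (k : ℝ)) 4]
          norm_num
      _ = 81 * (k : ℝ) ^ 4 := by ring
  linarith
end

section
/- There exists a constant C > 0 such that for every n ≥ 3 and every 3×n totally positive real matrix A, the number of 3-element column index sets S ⊆ {1,...,n} for which the 3×3 minor of A on the columns S equals 1 is at most C·n^(11/5). -/
open Classical in
/-- Kővári–Sós–Turán style bound: curves in `Q`, points in `K`, two curves share at most two points. -/
lemma kst_cell {P : Type*} (Q : Finset P) (K : Finset ℕ) (inc : P → ℕ → Prop)
    (h : ∀ p q, p ≠ q → ∀ T : Finset ℕ, T.card = 3 → (∀ k ∈ T, inc p k ∧ inc q k) → False) :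
    ∑ p ∈ Q, (K.filter (fun k => inc p k)).card ≤ 2 * Q.card + K.card ^ 3 := by
  have h1 : ∀ d : ℕ, d ≤ 2 + d.choose 3 := by
    intro d
    induction d with
    | zero => simp
    | succ d ih =>
      rcases Nat.lt_or_ge d 2 with hd | hd
      · omega
      · have : (d+1).choose 3 = d.choose 2 + d.choose 3 := Nat.choose_succ_succ' d 2
        have : 0 < d.choose 2 := Nat.choose_pos hd
        omega
  have h2 : ∑ p ∈ Q, ((K.filter (fun k => inc p k)).card).choose 3 ≤ K.card.choose 3 := by
    simp_rw [← Finset.card_powersetCard]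
    rw [← Finset.card_biUnion]
    · apply Finset.card_le_card
      intro T hT
      simp only [Finset.mem_biUnion, Finset.mem_powersetCard] at hT ⊢
      obtain ⟨p, _, hs, hc⟩ := hT
      exact ⟨hs.trans (Finset.filter_subset _ _), hc⟩
    · intro p _ q _ hpq
      rw [Function.onFun, Finset.disjoint_left]
      intro T hT hT'
      simp only [Finset.mem_powersetCard] at hT hT'
      exact h p q hpq T hT.2 (fun k hk => ⟨(Finset.mem_filter.1 (hT.1 hk)).2, (Finset.mem_filter.1 (hT'.1 hk)).2⟩)
  calc _ ≤ ∑ p ∈ Q, (2 + ((K.filter (fun k => inc p k)).card).choose 3) :=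
        Finset.sum_le_sum (fun p _ => h1 _)
    _ ≤ _ := by
      rw [Finset.sum_add_distrib, Finset.sum_const, smul_eq_mul]
      have : K.card.choose 3 ≤ K.card ^ 3 := Nat.choose_le_pow _ _
      omega

lemma hermite_sum (L : ℕ) (hL : 0 < L) (a : ℕ) : ∑ o ∈ Finset.range L, (a + o) / L = a := by
  induction a with
  | zero =>
    apply Finset.sum_eq_zero
    intro o ho
    simp at ho
    simpa using Or.inr ho
  | succ a ih =>
    have h1 := Finset.sum_range_succ (fun o => (a + o) / L) L
    have h2 := Finset.sum_range_succ' (fun o => (a + o) / L) L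
    have h3 : (a + L) / L = a / L + 1 := Nat.add_div_right a hL
    have h4 : ∑ o ∈ Finset.range L, (a + 1 + o) / L = ∑ o ∈ Finset.range L, (a + (o + 1)) / L := by
      apply Finset.sum_congr rfl
      intro o _
      congr 1
      omega
    rw [h4]
    simp only [add_zero] at h2
    omega

lemma offset_count_le (L : ℕ) (hL : 0 < L) (a b : ℕ) (hab : a ≤ b) :
    ∑ o ∈ Finset.range L, (if (a + o) / L ≠ (b + o) / L then 1 else 0) ≤ b - a := by
  have h1 : ∑ o ∈ Finset.range L, ((a + o) / L + (if (a + o) / L ≠ (b + o) / L then 1 else 0))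
      ≤ ∑ o ∈ Finset.range L, (b + o) / L := by
    apply Finset.sum_le_sum
    intro o _
    have : (a + o) / L ≤ (b + o) / L := Nat.div_le_div_right (by omega)
    split_ifs <;> omega
  rw [Finset.sum_add_distrib, hermite_sum L hL, hermite_sum L hL] at h1
  omega

lemma offset_count (L : ℕ) (hL : 0 < L) (a b : ℕ) :
    ∑ o ∈ Finset.range L, (if (a + o) / L ≠ (b + o) / L then 1 else 0) ≤ (b - a) + (a - b) := by
  rcases le_total a b with h | h
  · have := offset_count_le L hL a b h
    omega
  · have := offset_count_le L hL b a h
    simp_rw [ne_comm] at this ⊢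
    have h2 : ∀ o, ((b+o)/L ≠ (a+o)/L) = ((a+o)/L ≠ (b+o)/L) := fun o => by rw [ne_comm]
    simp only [ne_comm] at *
    omega

/-- An offset for which few curves change band. -/
lemma exists_offset {P : Type*} [Fintype P] (L : ℕ) (hL : 0 < L) (m : ℕ) (x : P → ℕ → ℕ) (X : ℕ)
    (hX : ∑ k ∈ Finset.range m, ∑ p, ((x p (k+1) - x p k) + (x p k - x p (k+1))) ≤ X) :
    ∃ o, o < L ∧ L * (∑ k ∈ Finset.range m, ∑ p,
      (if (x p k + o) / L ≠ (x p (k+1) + o) / L then 1 else 0)) ≤ X := by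
  by_contra hcon
  push Not at hcon
  have h1 : ∑ o ∈ Finset.range L, (∑ k ∈ Finset.range m, ∑ p,
      (if (x p k + o) / L ≠ (x p (k+1) + o) / L then 1 else 0)) ≤ X := by
    refine le_trans ?_ hX
    rw [Finset.sum_comm]
    apply Finset.sum_le_sum
    intro k _
    rw [Finset.sum_comm]
    apply Finset.sum_le_sum
    intro p _
    exact offset_count L hL _ _
  have h2 : ∑ o ∈ Finset.range L, X < ∑ o ∈ Finset.range L, L * (∑ k ∈ Finset.range m, ∑ p,
      (if (x p k + o) / L ≠ (x p (k+1) + o) / L then 1 else 0)) := by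
    apply Finset.sum_lt_sum_of_nonempty (by simp; omega)
    intro o ho
    exact hcon o (Finset.mem_range.1 ho)
  rw [← Finset.mul_sum, Finset.sum_const, Finset.card_range, smul_eq_mul] at h2
  have := Nat.mul_le_mul_left L h1
  omega

open Classical in
lemma fiber_bound {P : Type*} [Fintype P] (M m b c : ℕ) (hM : 0 < M) (B : P → ℕ → ℕ)
    (inc : P → ℕ → Prop) (w : ℕ → ℕ)
    (hB : ∀ k, (Finset.univ.filter (fun p => B p k = b)).card ≤ M ^ 3)
    (hw1 : ∀ k, (Finset.univ.filter (fun p => B p k ≠ b ∧ B p (k+1) = b)).card ≤ w k)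
    (hw2 : ∀ k p, inc p k → B p k = b → M ^ 2 ≤ w k)
    (h : ∀ p q, p ≠ q → ∀ T : Finset ℕ, T.card = 3 → (∀ k ∈ T, inc p k ∧ inc q k) → False) :
    ((Finset.univ ×ˢ Finset.range (m+1) : Finset (P × ℕ)).filter (fun z => inc z.1 z.2 ∧
      B z.1 z.2 = b ∧ (∑ i ∈ Finset.range z.2, w i) / M ^ 3 = c)).card ≤ 5 * M ^ 3 := by
  set W : ℕ → ℕ := fun k => ∑ i ∈ Finset.range k, w i with hW
  have hM3 : 0 < M ^ 3 := by positivity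
  have Wdiff : ∀ k0 k1, k0 ≤ k1 → W k0 / M ^ 3 = c → W k1 / M ^ 3 = c →
      ∑ i ∈ Finset.Ico k0 k1, w i < M ^ 3 := by
    intro k0 k1 h01 h0 h1
    have e : W k0 + ∑ i ∈ Finset.Ico k0 k1, w i = W k1 :=
      Finset.sum_range_add_sum_Ico w h01
    have a0 : c * M ^ 3 ≤ W k0 := by rw [← h0]; exact Nat.div_mul_le_self _ _
    have a1 : W k1 < (c + 1) * M ^ 3 := by
      rw [← h1]; rw [mul_comm]; exact Nat.lt_mul_div_succ _ hM3
    rw [add_mul, one_mul] at a1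
    omega
  set Kall := (Finset.range (m+1)).filter (fun k => W k / M ^ 3 = c) with hKall
  set K := Kall.filter (fun k => ∃ p, inc p k ∧ B p k = b) with hK
  set Q := (Finset.univ : Finset P).filter (fun p => ∃ k ∈ Kall, B p k = b) with hQ
  have hsub : ((Finset.univ ×ˢ Finset.range (m+1) : Finset (P × ℕ)).filter (fun z => inc z.1 z.2 ∧
      B z.1 z.2 = b ∧ W z.2 / M ^ 3 = c)).card ≤ ∑ p ∈ Q, (K.filter (fun k => inc p k)).card := by
    rw [← Finset.card_sigma]
    apply Finset.card_le_card_of_injOn (fun z => ⟨z.1, z.2⟩)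
    · intro z hz
      simp only [Finset.coe_filter, Finset.mem_product, Set.mem_ofPred_eq, Finset.mem_univ, true_and,
        Finset.mem_range] at hz
      simp only [Finset.coe_sigma, Set.mem_sigma_iff, Finset.mem_coe, hQ, hK, hKall,
        Finset.mem_filter, Finset.mem_univ, true_and, Finset.mem_range]
      exact ⟨⟨z.2, ⟨hz.1, hz.2.2.2⟩, hz.2.2.1⟩, ⟨⟨hz.1, hz.2.2.2⟩, z.1, hz.2.1, hz.2.2.1⟩, hz.2.1⟩
    · rintro ⟨a, b⟩ _ ⟨a', b'⟩ _ hh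
      simp at hh
      simp [hh]
  have hKc : K.card ≤ M := by
    rcases K.eq_empty_or_nonempty with he | hne
    · rw [he]; simp
    · have m0 := K.min'_mem hne
      have m1 := K.max'_mem hne
      have d := Wdiff (K.min' hne) (K.max' hne) (K.min'_le _ m1)
        (Finset.mem_filter.1 (Finset.mem_filter.1 m0).1).2
        (Finset.mem_filter.1 (Finset.mem_filter.1 m1).1).2
      have s : K.erase (K.max' hne) ⊆ Finset.Ico (K.min' hne) (K.max' hne) := by
        intro k hk
        rw [Finset.mem_erase] at hk
        rw [Finset.mem_Ico]
        exact ⟨K.min'_le _ hk.2, lt_of_le_of_ne (K.le_max' _ hk.2) hk.1⟩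
      have t : (K.erase (K.max' hne)).card * M ^ 2 ≤ ∑ i ∈ Finset.Ico (K.min' hne) (K.max' hne), w i := by
        calc _ = ∑ i ∈ K.erase (K.max' hne), M ^ 2 := by simp
          _ ≤ ∑ i ∈ K.erase (K.max' hne), w i := by
            apply Finset.sum_le_sum
            intro k hk
            obtain ⟨p, hp1, hp2⟩ := (Finset.mem_filter.1 (Finset.mem_of_mem_erase hk)).2
            exact hw2 k p hp1 hp2
          _ ≤ _ := Finset.sum_le_sum_of_subset s
      rw [Finset.card_erase_of_mem m1] at t
      have u : (K.card - 1) * M ^ 2 < M * M ^ 2 := by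
        calc _ < M ^ 3 := lt_of_le_of_lt t d
          _ = _ := by ring
      have := lt_of_mul_lt_mul_right u (Nat.zero_le _)
      omega
  have hQc : Q.card ≤ 2 * M ^ 3 := by
    rcases Kall.eq_empty_or_nonempty with he | hne
    · have : Q = ∅ := by
        rw [hQ, he]; simp
      rw [this]; simp
    · have m0 := Kall.min'_mem hne
      have m1 := Kall.max'_mem hne
      have d := Wdiff (Kall.min' hne) (Kall.max' hne) (Kall.min'_le _ m1)
        (Finset.mem_filter.1 m0).2 (Finset.mem_filter.1 m1).2
      have s : Q ⊆ (Finset.univ.filter (fun p => B p (Kall.min' hne) = b)) ∪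
          (Finset.Ico (Kall.min' hne) (Kall.max' hne)).biUnion
            (fun k => Finset.univ.filter (fun p => B p k ≠ b ∧ B p (k+1) = b)) := by
        intro p hp
        obtain ⟨k, hk, hpk⟩ := (Finset.mem_filter.1 hp).2
        rw [Finset.mem_union]
        by_contra hcon
        push Not at hcon
        obtain ⟨c1, c2⟩ := hcon
        simp only [Finset.mem_filter, Finset.mem_univ, true_and] at c1
        have key : ∀ j, Kall.min' hne ≤ j → j ≤ k → B p j ≠ b := by
          intro j hj
          induction j, hj using Nat.le_induction with
          | base => intro _; exact c1
          | succ j hj ih =>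
            intro hjk hb
            apply c2
            simp only [Finset.mem_biUnion, Finset.mem_Ico, Finset.mem_filter, Finset.mem_univ, true_and]
            have := Kall.le_max' _ hk
            exact ⟨j, ⟨hj, by omega⟩, ih (by omega), hb⟩
        exact key k (Kall.min'_le _ hk) le_rfl hpk
      have e1 := Finset.card_le_card s
      have e2 := Finset.card_union_le (Finset.univ.filter (fun p => B p (Kall.min' hne) = b))
          ((Finset.Ico (Kall.min' hne) (Kall.max' hne)).biUnion
            (fun k => Finset.univ.filter (fun p => B p k ≠ b ∧ B p (k+1) = b)))
      have e3 : ((Finset.Ico (Kall.min' hne) (Kall.max' hne)).biUnion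
            (fun k => Finset.univ.filter (fun p => B p k ≠ b ∧ B p (k+1) = b))).card ≤
            ∑ i ∈ Finset.Ico (Kall.min' hne) (Kall.max' hne), w i :=
        Finset.card_biUnion_le.trans (Finset.sum_le_sum fun k _ => hw1 k)
      have e4 := hB (Kall.min' hne)
      omega
  have := kst_cell Q K inc h
  have hp : K.card ^ 3 ≤ M ^ 3 := Nat.pow_le_pow_left hKc 3
  refine le_trans hsub ?_
  omega

open Classical in
lemma cell_count {P : Type*} [Fintype P] (M m R T S : ℕ) (hM : 0 < M) (B : P → ℕ → ℕ)
    (inc : P → ℕ → Prop)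
    (hB : ∀ b k, (Finset.univ.filter (fun p => B p k = b)).card ≤ M ^ 3)
    (hR : ∀ p k, B p k < R)
    (hT : ∑ k ∈ Finset.range m, ∑ p, (if B p k ≠ B p (k+1) then 1 else 0) ≤ T)
    (hS : ∑ k ∈ Finset.range (m+1),
      ((Finset.range R).filter (fun b => ∃ p, inc p k ∧ B p k = b)).card ≤ S)
    (h : ∀ p q, p ≠ q → ∀ T : Finset ℕ, T.card = 3 → (∀ k ∈ T, inc p k ∧ inc q k) → False) :
    ((Finset.univ ×ˢ Finset.range (m+1) : Finset (P × ℕ)).filter (fun z => inc z.1 z.2)).card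
      ≤ 5 * (T + M ^ 2 * S + R * M ^ 3) := by
  set w : ℕ → ℕ → ℕ := fun b k => (Finset.univ.filter (fun p => B p k ≠ b ∧ B p (k+1) = b)).card
    + M ^ 2 * (if ∃ p, inc p k ∧ B p k = b then 1 else 0) with hw
  set W : ℕ → ℕ → ℕ := fun b k => ∑ i ∈ Finset.range k, w b i with hW
  set I := (Finset.univ ×ˢ Finset.range (m+1) : Finset (P × ℕ)).filter (fun z => inc z.1 z.2) with hI
  have hmap : ∀ z ∈ I, (⟨B z.1 z.2, W (B z.1 z.2) z.2 / M ^ 3⟩ : Σ _ : ℕ, ℕ) ∈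
      (Finset.range R).sigma (fun b => Finset.range (W b m / M ^ 3 + 1)) := by
    intro z hz
    simp only [hI, Finset.mem_filter, Finset.mem_product, Finset.mem_univ, true_and,
      Finset.mem_range] at hz
    simp only [Finset.mem_sigma, Finset.mem_range]
    refine ⟨hR _ _, Nat.lt_succ_of_le (Nat.div_le_div_right ?_)⟩
    apply Finset.sum_le_sum_of_subset
    intro j hj
    simp only [Finset.mem_range] at hj ⊢
    omega
  rw [Finset.card_eq_sum_card_fiberwise hmap, Finset.sum_sigma]
  have hfib : ∀ b c, (I.filter (fun z => (⟨B z.1 z.2, W (B z.1 z.2) z.2 / M ^ 3⟩ : Σ _ : ℕ, ℕ) = ⟨b, c⟩)).card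
      ≤ 5 * M ^ 3 := by
    intro b c
    refine le_trans (Finset.card_le_card ?_) (fiber_bound M m b c hM B inc (w b) (hB b) ?_ ?_ h)
    · intro z hz
      simp only [hI, Finset.mem_filter, Sigma.mk.injEq, heq_eq_eq] at hz ⊢
      obtain ⟨⟨z1, z2⟩, z3, z4⟩ := hz
      refine ⟨z1, z2, z3, ?_⟩
      rw [z3] at z4
      exact z4
    · intro k
      simp [hw]
    · intro k p hp hb
      have : ∃ p, inc p k ∧ B p k = b := ⟨p, hp, hb⟩
      simp [hw, this]
  have hsum : ∑ b ∈ Finset.range R, W b m ≤ T + M ^ 2 * S := by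
    simp only [hW]
    rw [Finset.sum_comm]
    simp only [hw, Finset.sum_add_distrib]
    apply Nat.add_le_add
    · refine le_trans (Finset.sum_le_sum fun k _ => ?_) hT
      simp only [Finset.card_filter]
      rw [Finset.sum_comm]
      apply Finset.sum_le_sum
      intro p _
      rw [← Finset.card_filter]
      split_ifs with hne
      · rw [Finset.card_le_one]
        intro a ha b hb
        rw [Finset.mem_filter] at ha hb
        rw [← ha.2.2, ← hb.2.2]
      · rw [Nat.le_zero, Finset.card_eq_zero, Finset.filter_eq_empty_iff]
        push Not at hne
        intro b _ hh
        exact hh.1 (hne.trans hh.2)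
    · simp only [← Finset.mul_sum]
      apply Nat.mul_le_mul_left
      simp only [← Finset.card_filter]
      refine le_trans ?_ hS
      apply Finset.sum_le_sum_of_subset
      intro j hj
      simp only [Finset.mem_range] at hj ⊢
      omega
  calc _ ≤ ∑ b ∈ Finset.range R, ∑ c ∈ Finset.range (W b m / M ^ 3 + 1), 5 * M ^ 3 :=
        Finset.sum_le_sum fun b _ => Finset.sum_le_sum fun c _ => hfib b c
    _ ≤ ∑ b ∈ Finset.range R, 5 * (W b m + M ^ 3) := by
        apply Finset.sum_le_sum
        intro b _
        rw [Finset.sum_const, Finset.card_range, smul_eq_mul]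
        have := Nat.div_mul_le_self (W b m) (M ^ 3)
        nlinarith
    _ = 5 * (∑ b ∈ Finset.range R, W b m + R * M ^ 3) := by
        rw [← Finset.mul_sum, Finset.sum_add_distrib]; simp
    _ ≤ _ := by
        apply Nat.mul_le_mul_left
        omega

lemma sum_indicator_le_one (m : ℕ) (D : ℕ → Prop) [DecidablePred D] (hD : ∀ a b, a < b → b < m → D a → D b → False) :
    ∑ k ∈ Finset.range m, (if D k then 1 else 0) ≤ 1 := by
  rw [← Finset.card_filter, Finset.card_le_one]
  intro a ha b hb
  simp only [Finset.mem_filter, Finset.mem_range] at ha hb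
  rcases lt_trichotomy a b with h | h | h
  · exact (hD a b h hb.1 ha.2 hb.2).elim
  · exact h
  · exact (hD b a h ha.1 hb.2 ha.2).elim

open Classical in
/-- rank of curve `p` at abscissa `k`, ties broken by the order on `P` -/
noncomputable def curveRank {P : Type*} [Fintype P] [LinearOrder P] (f : P → ℕ → ℝ) (p : P) (k : ℕ) : ℕ :=
  (Finset.univ.filter (fun q => toLex (f q k, q) < toLex (f p k, p))).card

lemma curveRank_strict {P : Type*} [Fintype P] [LinearOrder P] (f : P → ℕ → ℝ) (p q : P) (k : ℕ)
    (h : toLex (f p k, p) < toLex (f q k, q)) : curveRank f p k < curveRank f q k := by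
  classical
  unfold curveRank
  apply Finset.card_lt_card
  rw [Finset.ssubset_iff_of_subset]
  · exact ⟨p, by simpa using h, by simp⟩
  · intro r hr
    simp only [Finset.mem_filter, Finset.mem_univ, true_and] at hr ⊢
    exact hr.trans h

lemma curveRank_inj {P : Type*} [Fintype P] [LinearOrder P] (f : P → ℕ → ℝ) (p q : P) (k : ℕ)
    (h : curveRank f p k = curveRank f q k) : p = q := by
  rcases lt_trichotomy (toLex (f p k, p)) (toLex (f q k, q)) with h1 | h1 | h1
  · have := curveRank_strict f p q k h1
    omega
  · have := toLex.injective h1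
    exact (Prod.mk.inj this).2
  · have := curveRank_strict f q p k h1
    omega

lemma curveRank_lt {P : Type*} [Fintype P] [LinearOrder P] (f : P → ℕ → ℝ) (p : P) (k : ℕ) :
    curveRank f p k < Fintype.card P := by
  classical
  unfold curveRank
  rw [← Finset.card_univ]
  apply Finset.card_lt_card
  rw [Finset.ssubset_iff_of_subset (Finset.subset_univ _)]
  exact ⟨p, Finset.mem_univ _, by simp⟩

open Classical in
lemma curveRank_range {P : Type*} [Fintype P] [LinearOrder P] (f : P → ℕ → ℝ) (p : P) (k : ℕ)
    (h : f p k = 1) :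
    (Finset.univ.filter (fun q => f q k < 1)).card ≤ curveRank f p k ∧
    curveRank f p k < (Finset.univ.filter (fun q => f q k < 1)).card
      + (Finset.univ.filter (fun q => f q k = 1)).card := by
  unfold curveRank
  constructor
  · apply Finset.card_le_card
    intro q hq
    simp only [Finset.mem_filter, Finset.mem_univ, true_and, Prod.Lex.toLex_lt_toLex] at hq ⊢
    left
    rw [h]; exact hq
  · rw [← Finset.card_union_of_disjoint]
    · apply Finset.card_lt_card
      rw [Finset.ssubset_iff_of_subset]
      · exact ⟨p, by simp [h], by simp⟩
      · intro q hq
        simp only [Finset.mem_filter, Finset.mem_univ, true_and, Prod.Lex.toLex_lt_toLex,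
          Finset.mem_union, h] at hq ⊢
        tauto
    · rw [Finset.disjoint_left]
      intro q h1 h2
      simp only [Finset.mem_filter, Finset.mem_univ, true_and] at h1 h2
      linarith

lemma curveRank_variation {P : Type*} [Fintype P] [LinearOrder P] (f : P → ℕ → ℝ) (m : ℕ)
    (H : ∀ p q, p ≠ q → ∀ k1 k2 k3 k4, k1 < k2 → k2 < k3 → k3 < k4 → k4 ≤ m →
      f p k1 ≤ f q k1 → f q k2 ≤ f p k2 → f p k3 ≤ f q k3 → f q k4 ≤ f p k4 → False) :
    ∑ k ∈ Finset.range m, ∑ p, ((curveRank f p (k+1) - curveRank f p k)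
      + (curveRank f p k - curveRank f p (k+1))) ≤ 2 * Fintype.card P ^ 2 := by
  classical
  set bef : P → P → ℕ → Prop := fun q p k => toLex (f q k, q) < toLex (f p k, p) with hbef
  have bef_le : ∀ q p k, bef q p k → f q k ≤ f p k := by
    intro q p k hh
    simp only [hbef, Prod.Lex.toLex_lt_toLex] at hh
    rcases hh with hh | hh
    · exact hh.le
    · exact hh.1.le
  have nbef_le : ∀ q p k, ¬ bef q p k → f p k ≤ f q k := by
    intro q p k hh
    simp only [hbef, Prod.Lex.toLex_lt_toLex] at hh
    push Not at hh
    exact hh.1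
  have bef_ne : ∀ q p k, bef q p k → q ≠ p := by
    intro q p k hh he
    subst he
    exact lt_irrefl _ hh
  have h1 : ∀ k p, ((curveRank f p (k+1) - curveRank f p k)
      + (curveRank f p k - curveRank f p (k+1))) ≤
      ∑ q, ((if ¬ bef q p k ∧ bef q p (k+1) then 1 else 0)
        + (if bef q p k ∧ ¬ bef q p (k+1) then 1 else 0)) := by
    intro k p
    rw [Finset.sum_add_distrib, ← Finset.card_filter, ← Finset.card_filter]
    unfold curveRank
    apply Nat.add_le_add
    · refine (Finset.le_card_sdiff _ _).trans (Finset.card_le_card ?_)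
      intro q hq
      simp only [Finset.mem_sdiff, Finset.mem_filter, Finset.mem_univ, true_and] at hq ⊢
      exact ⟨hq.2, hq.1⟩
    · refine (Finset.le_card_sdiff _ _).trans (Finset.card_le_card ?_)
      intro q hq
      simp only [Finset.mem_sdiff, Finset.mem_filter, Finset.mem_univ, true_and] at hq ⊢
      exact ⟨hq.1, hq.2⟩
  calc _ ≤ ∑ k ∈ Finset.range m, ∑ p, ∑ q, ((if ¬ bef q p k ∧ bef q p (k+1) then 1 else 0)
        + (if bef q p k ∧ ¬ bef q p (k+1) then 1 else 0)) :=
        Finset.sum_le_sum fun k _ => Finset.sum_le_sum fun p _ => h1 k p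
    _ = ∑ p, ∑ q, ∑ k ∈ Finset.range m, ((if ¬ bef q p k ∧ bef q p (k+1) then 1 else 0)
        + (if bef q p k ∧ ¬ bef q p (k+1) then 1 else 0)) := by
        rw [Finset.sum_comm]
        apply Finset.sum_congr rfl
        intro p _
        rw [Finset.sum_comm]
    _ ≤ ∑ p : P, ∑ q : P, 2 := by
        apply Finset.sum_le_sum
        intro p _
        apply Finset.sum_le_sum
        intro q _
        rw [Finset.sum_add_distrib]
        apply Nat.add_le_add (b := 1) (d := 1)
        · apply sum_indicator_le_one
          intro a b hab hbm ⟨ha1, ha2⟩ ⟨hb1, hb2⟩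
          have hne : a + 1 ≠ b := fun e => hb1 (e ▸ ha2)
          exact H p q (bef_ne _ _ _ ha2).symm a (a+1) b (b+1) (by omega) (by omega) (by omega) (by omega)
            (nbef_le _ _ _ ha1) (bef_le _ _ _ ha2) (nbef_le _ _ _ hb1) (bef_le _ _ _ hb2)
        · apply sum_indicator_le_one
          intro a b hab hbm ⟨ha1, ha2⟩ ⟨hb1, hb2⟩
          have hne : a + 1 ≠ b := fun e => ha2 (e ▸ hb1)
          exact H q p (bef_ne _ _ _ ha1) a (a+1) b (b+1) (by omega) (by omega) (by omega) (by omega)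
            (bef_le _ _ _ ha1) (nbef_le _ _ _ ha2) (bef_le _ _ _ hb1) (nbef_le _ _ _ hb2)
    _ = _ := by simp; ring

open Classical in
lemma curves_bound {P : Type*} [Fintype P] [LinearOrder P] (f : P → ℕ → ℝ) (m M : ℕ) (hM : 0 < M)
    (H : ∀ p q, p ≠ q → ∀ k1 k2 k3 k4, k1 < k2 → k2 < k3 → k3 < k4 → k4 ≤ m →
      f p k1 ≤ f q k1 → f q k2 ≤ f p k2 → f p k3 ≤ f q k3 → f q k4 ≤ f p k4 → False)
    (H2 : ∀ p q, p ≠ q → ∀ T : Finset ℕ, T.card = 3 → (∀ k ∈ T, k ≤ m ∧ f p k = f q k) → False)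
    (I : ℕ) (hI : I = ((Finset.univ ×ˢ Finset.range (m+1) : Finset (P × ℕ)).filter
      (fun z => f z.1 z.2 = 1)).card) :
    M ^ 3 * I ≤ 10 * Fintype.card P ^ 2 + 5 * M ^ 2 * I + 10 * (m + 1) * M ^ 5
      + 5 * Fintype.card P * M ^ 3 + 10 * M ^ 6 := by
  have hL : 0 < M ^ 3 := by positivity
  set N := Fintype.card P with hN
  obtain ⟨o, ho, hT⟩ := exists_offset (M ^ 3) hL m (curveRank f) _ (curveRank_variation f m H)
  set T := ∑ k ∈ Finset.range m, ∑ p,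
    (if (curveRank f p k + o) / M ^ 3 ≠ (curveRank f p (k+1) + o) / M ^ 3 then 1 else 0) with hTdef
  set R := (N + M ^ 3) / M ^ 3 + 1 with hR
  set d : ℕ → ℕ := fun k => (Finset.univ.filter (fun q => f q k = 1)).card with hd
  have hId : I = ∑ k ∈ Finset.range (m+1), d k := by
    rw [hI, Finset.card_filter, Finset.sum_product_right]
    simp only [hd, Finset.card_filter]
  set s := ∑ k ∈ Finset.range (m+1), d k / M ^ 3 with hs
  have hsI : M ^ 3 * s ≤ I := by
    rw [hId, hs, Finset.mul_sum]
    exact Finset.sum_le_sum fun k _ => Nat.mul_div_le _ _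
  have hRM : R * M ^ 3 ≤ N + 2 * M ^ 3 := by
    have := Nat.div_mul_le_self (N + M ^ 3) (M ^ 3)
    rw [hR, add_mul]
    omega
  have main := cell_count M m R T (s + 2 * (m + 1)) hM
    (fun p k => (curveRank f p k + o) / M ^ 3) (fun p k => k ≤ m ∧ f p k = 1) ?_ ?_ le_rfl ?_ ?_
  · have hII : I ≤ 5 * (T + M ^ 2 * (s + 2 * (m + 1)) + R * M ^ 3) := by
      rw [hI]
      refine le_trans (Finset.card_le_card ?_) main
      intro z hz
      simp only [Finset.mem_filter, Finset.mem_product, Finset.mem_univ, true_and,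
        Finset.mem_range] at hz ⊢
      exact ⟨hz.1, by omega, hz.2⟩
    calc M ^ 3 * I ≤ M ^ 3 * (5 * (T + M ^ 2 * (s + 2 * (m + 1)) + R * M ^ 3)) :=
          Nat.mul_le_mul_left _ hII
      _ = 5 * (M ^ 3 * T) + 5 * M ^ 2 * (M ^ 3 * s) + 10 * (m + 1) * M ^ 5
          + 5 * M ^ 3 * (R * M ^ 3) := by ring
      _ ≤ 5 * (2 * N ^ 2) + 5 * M ^ 2 * I + 10 * (m + 1) * M ^ 5
          + 5 * M ^ 3 * (N + 2 * M ^ 3) := by gcongr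
      _ = _ := by ring
  · intro b k
    refine le_trans ?_ (Finset.card_range (M ^ 3)).le
    apply Finset.card_le_card_of_injOn (fun p => curveRank f p k + o - b * M ^ 3)
    · intro p hp
      simp only [Finset.coe_filter, Finset.mem_univ, true_and, Set.mem_ofPred_eq] at hp
      simp only [Finset.coe_range, Set.mem_Iio]
      have := Nat.lt_mul_div_succ (curveRank f p k + o) hL
      rw [hp, mul_comm, add_mul] at this
      omega
    · intro p hp q hq hpq
      simp only [Finset.coe_filter, Finset.mem_univ, true_and, Set.mem_ofPred_eq] at hp hq hpq
      have h1 := Nat.div_mul_le_self (curveRank f p k + o) (M ^ 3)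
      have h2 := Nat.div_mul_le_self (curveRank f q k + o) (M ^ 3)
      rw [hp] at h1
      rw [hq] at h2
      apply curveRank_inj f p q k
      omega
  · intro p k
    have := curveRank_lt f p k
    exact Nat.lt_succ_of_le (Nat.div_le_div_right (by omega))
  · rw [hs]
    have e : ∑ k ∈ Finset.range (m+1), d k / M ^ 3 + 2 * (m+1)
        = ∑ k ∈ Finset.range (m+1), (d k / M ^ 3 + 2) := by
      rw [Finset.sum_add_distrib]; simp; ring
    rw [e]
    apply Finset.sum_le_sum
    intro k _
    set a := (Finset.univ.filter (fun q => f q k < 1)).card with ha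
    have hsub : ((Finset.range R).filter (fun b => ∃ p, (k ≤ m ∧ f p k = 1) ∧
        (curveRank f p k + o) / M ^ 3 = b)) ⊆
        Finset.Icc ((a + o) / M ^ 3) ((a + o) / M ^ 3 + d k / M ^ 3 + 1) := by
      intro b hb
      simp only [Finset.mem_filter] at hb
      obtain ⟨_, p, ⟨_, hp⟩, rfl⟩ := hb
      obtain ⟨r1, r2⟩ := curveRank_range f p k hp
      rw [Finset.mem_Icc]
      refine ⟨Nat.div_le_div_right (by omega), ?_⟩
      calc _ ≤ ((a + o) + d k) / M ^ 3 := Nat.div_le_div_right (by simp only [hd]; omega)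
        _ ≤ _ := by
          rw [Nat.add_div hL]
          split_ifs <;> omega
    have hc : (Finset.Icc ((a + o) / M ^ 3) ((a + o) / M ^ 3 + d k / M ^ 3 + 1)).card
        = d k / M ^ 3 + 2 := by
      rw [Nat.card_Icc]
      generalize d k / M ^ 3 = e1
      generalize (a + o) / M ^ 3 = e2
      omega
    rw [← hc]
    apply Finset.card_le_card
    convert hsub
  · intro p q hpq T hT hh
    exact H2 p q hpq T hT (fun k hk => ⟨(hh k hk).1.1, by rw [(hh k hk).1.2, (hh k hk).2.2]⟩)

/-- explicit determinant of three column vectors -/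
def triDet (x y z : Fin 3 → ℝ) : ℝ :=
  x 0 * (y 1 * z 2 - y 2 * z 1) - y 0 * (x 1 * z 2 - x 2 * z 1) + z 0 * (x 1 * y 2 - x 2 * y 1)

lemma triDet_ne {n : ℕ} (v : ℕ → Fin 3 → ℝ)
    (hv : ∀ a b c, a < b → b < c → c < n → 0 < triDet (v a) (v b) (v c))
    (x y i : ℕ) (hxy : x < y) (hy : y < n) (hi : i < n) (hz : triDet (v x) (v y) (v i) = 0) :
    i = x ∨ i = y := by
  by_contra hcon
  push Not at hcon
  rcases lt_or_gt_of_ne hcon.1 with h | h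
  · have h1 := hv i x y h hxy hy
    have : triDet (v i) (v x) (v y) = triDet (v x) (v y) (v i) := by unfold triDet; ring
    linarith
  · rcases lt_or_gt_of_ne hcon.2 with h' | h'
    · have h1 := hv x i y h h' hy
      have : triDet (v x) (v i) (v y) = - triDet (v x) (v y) (v i) := by unfold triDet; ring
      linarith
    · have h1 := hv x y i hxy h' hi
      linarith

lemma three_zeros {n : ℕ} (v : ℕ → Fin 3 → ℝ)
    (hv : ∀ a b c, a < b → b < c → c < n → 0 < triDet (v a) (v b) (v c))
    (i j i' j' : ℕ) (hij : i < j) (hij' : i' < j') (hj : j < n) (hj' : j' < n)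
    (a b c : ℕ) (hab : a < b) (hbc : b < c) (hc : c < n)
    (ha0 : triDet (v i) (v j) (v a) = triDet (v i') (v j') (v a))
    (hb0 : triDet (v i) (v j) (v b) = triDet (v i') (v j') (v b))
    (hc0 : triDet (v i) (v j) (v c) = triDet (v i') (v j') (v c)) : i = i' ∧ j = j' := by
  have key : ∀ z, triDet (v i) (v j) z = triDet (v i') (v j') z := by
    intro z
    have hD := hv a b c hab hbc hc
    have e : triDet (v a) (v b) (v c) * (triDet (v i) (v j) z - triDet (v i') (v j') z)
      = (triDet (v i) (v j) (v a) - triDet (v i') (v j') (v a)) * triDet z (v b) (v c)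
      + (triDet (v i) (v j) (v b) - triDet (v i') (v j') (v b)) * triDet (v a) z (v c)
      + (triDet (v i) (v j) (v c) - triDet (v i') (v j') (v c)) * triDet (v a) (v b) z := by
      unfold triDet; ring
    rw [ha0, hb0, hc0] at e
    simp only [sub_self, zero_mul, add_zero, mul_eq_zero] at e
    rcases e with e | e
    · linarith
    · linarith
  have zi : triDet (v i) (v j) (v i) = 0 := by unfold triDet; ring
  have zj : triDet (v i) (v j) (v j) = 0 := by unfold triDet; ring
  rw [key] at zi zj
  have := triDet_ne v hv i' j' i hij' hj' (by omega) zi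
  have := triDet_ne v hv i' j' j hij' hj' (by omega) zj
  omega

lemma four_alternate {n : ℕ} (v : ℕ → Fin 3 → ℝ)
    (hv : ∀ a b c, a < b → b < c → c < n → 0 < triDet (v a) (v b) (v c))
    (i j i' j' : ℕ) (hij : i < j) (hij' : i' < j') (hj : j < n) (hj' : j' < n)
    (a b c d : ℕ) (hab : a < b) (hbc : b < c) (hcd : c < d) (hd : d < n)
    (h1 : triDet (v i) (v j) (v a) ≤ triDet (v i') (v j') (v a))
    (h2 : triDet (v i') (v j') (v b) ≤ triDet (v i) (v j) (v b))
    (h3 : triDet (v i) (v j) (v c) ≤ triDet (v i') (v j') (v c))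
    (h4 : triDet (v i') (v j') (v d) ≤ triDet (v i) (v j) (v d)) : i = i' ∧ j = j' := by
  have d1 := hv b c d hbc hcd hd
  have d2 := hv a c d (by omega) hcd hd
  have d3 := hv a b d hab (by omega) hd
  have d4 := hv a b c hab hbc (by omega)
  have e : (triDet (v i') (v j') (v a) - triDet (v i) (v j) (v a)) * triDet (v b) (v c) (v d)
      + (triDet (v i) (v j) (v b) - triDet (v i') (v j') (v b)) * triDet (v a) (v c) (v d)
      + (triDet (v i') (v j') (v c) - triDet (v i) (v j) (v c)) * triDet (v a) (v b) (v d)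
      + (triDet (v i) (v j) (v d) - triDet (v i') (v j') (v d)) * triDet (v a) (v b) (v c) = 0 := by
    unfold triDet; ring
  have t1 := mul_nonneg (sub_nonneg.2 h1) d1.le
  have t2 := mul_nonneg (sub_nonneg.2 h2) d2.le
  have t3 := mul_nonneg (sub_nonneg.2 h3) d3.le
  have t4 := mul_nonneg (sub_nonneg.2 h4) d4.le
  have z : ∀ s D : ℝ, 0 < D → s * D ≤ 0 → s ≤ 0 := by
    intro s D hD hs
    by_contra hh
    push Not at hh
    have := mul_pos hh hD
    linarith
  have z1 := z (triDet (v i') (v j') (v a) - triDet (v i) (v j) (v a)) _ d1 (by linarith)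
  have z2 := z (triDet (v i) (v j) (v b) - triDet (v i') (v j') (v b)) _ d2 (by linarith)
  have z3 := z (triDet (v i') (v j') (v c) - triDet (v i) (v j) (v c)) _ d3 (by linarith)
  exact three_zeros v hv i j i' j' hij hij' hj hj' a b c hab hbc (by omega)
    (by linarith) (by linarith) (by linarith)

lemma final_numeric (n I N M : ℕ) (hn : 1 ≤ n) (hM : M = ⌈((n : ℝ) ^ ((1 : ℝ) / 5)) ^ 3⌉₊)
    (hN : N ≤ n ^ 2) (hI : I ≤ N * n)
    (h : 0 < M → M ^ 3 * I ≤ 10 * N ^ 2 + 5 * M ^ 2 * I + 10 * n * M ^ 5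
      + 5 * N * M ^ 3 + 10 * M ^ 6) :
    (I : ℝ) ≤ 270 * (n : ℝ) ^ ((11 : ℝ) / 5) := by
  have hn1 : (1 : ℝ) ≤ n := by exact_mod_cast hn
  set t : ℝ := (n : ℝ) ^ ((1 : ℝ) / 5) with ht
  have ht1 : 1 ≤ t := Real.one_le_rpow hn1 (by norm_num)
  have ht0 : 0 < t := by linarith
  have ht5 : t ^ 5 = n := by
    rw [ht, ← Real.rpow_natCast, ← Real.rpow_mul (by linarith)]
    norm_num
  have ht11 : (n : ℝ) ^ ((11 : ℝ) / 5) = t ^ 11 := by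
    rw [ht, ← Real.rpow_natCast, ← Real.rpow_mul (by linarith)]
    norm_num
  rw [ht11]
  have hMlo : t ^ 3 ≤ M := by rw [hM]; exact Nat.le_ceil _
  have hMhi : (M : ℝ) ≤ 2 * t ^ 3 := by
    have h1 : (M : ℝ) < t ^ 3 + 1 := by rw [hM]; exact Nat.ceil_lt_add_one (by positivity)
    have h2 : 1 ≤ t ^ 3 := one_le_pow₀ ht1
    linarith
  have ht3 : 1 ≤ t ^ 3 := one_le_pow₀ ht1
  have hM0 : (0 : ℝ) < M := by linarith
  have hN' : (N : ℝ) ≤ t ^ 10 := by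
    have : (N : ℝ) ≤ (n : ℝ) ^ 2 := by exact_mod_cast hN
    rw [← ht5] at this
    calc _ ≤ _ := this
      _ = _ := by ring
  have hh : (M : ℝ) ^ 3 * I ≤ 10 * (N : ℝ) ^ 2 + 5 * (M : ℝ) ^ 2 * I + 10 * n * (M : ℝ) ^ 5
      + 5 * N * (M : ℝ) ^ 3 + 10 * (M : ℝ) ^ 6 := by
    exact_mod_cast h (by exact_mod_cast hM0)
  have hI0 : (0 : ℝ) ≤ I := Nat.cast_nonneg _
  rcases le_or_gt (10 : ℝ) M with hc | hc
  · have a1 : 5 * (M : ℝ) ^ 2 * I ≤ (M : ℝ) ^ 3 * I / 2 := by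
      have : (10 : ℝ) * ((M : ℝ) ^ 2 * I) ≤ M * ((M : ℝ) ^ 2 * I) :=
        mul_le_mul_of_nonneg_right hc (by positivity)
      linarith [show (M : ℝ) * ((M : ℝ) ^ 2 * I) = (M : ℝ) ^ 3 * I by ring]
    have a2 : (N : ℝ) ^ 2 ≤ (M : ℝ) ^ 3 * t ^ 11 := by
      calc (N : ℝ) ^ 2 ≤ (t ^ 10) ^ 2 := by gcongr
        _ = (t ^ 3) ^ 3 * t ^ 11 := by ring
        _ ≤ _ := by gcongr
    have a3 : (n : ℝ) * (M : ℝ) ^ 5 ≤ (M : ℝ) ^ 3 * (4 * t ^ 11) := by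
      rw [← ht5]
      calc t ^ 5 * (M : ℝ) ^ 5 = (M : ℝ) ^ 3 * (t ^ 5 * (M : ℝ) ^ 2) := by ring
        _ ≤ (M : ℝ) ^ 3 * (t ^ 5 * (2 * t ^ 3) ^ 2) := by gcongr
        _ = _ := by ring
    have a4 : (N : ℝ) * (M : ℝ) ^ 3 ≤ (M : ℝ) ^ 3 * t ^ 11 := by
      have : t ^ 10 ≤ t ^ 11 := pow_le_pow_right₀ ht1 (by norm_num)
      rw [mul_comm]
      have := hN'.trans this
      gcongr
    have a5 : (M : ℝ) ^ 6 ≤ (M : ℝ) ^ 3 * (8 * t ^ 11) := by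
      calc (M : ℝ) ^ 6 = (M : ℝ) ^ 3 * (M : ℝ) ^ 3 := by ring
        _ ≤ (M : ℝ) ^ 3 * (2 * t ^ 3) ^ 3 := by gcongr
        _ = (M : ℝ) ^ 3 * (8 * t ^ 9) := by ring
        _ ≤ _ := by
          have : t ^ 9 ≤ t ^ 11 := pow_le_pow_right₀ ht1 (by norm_num)
          gcongr
    have a6 : (M : ℝ) ^ 3 * I ≤ (M : ℝ) ^ 3 * (270 * t ^ 11) := by
      linarith
    exact le_of_mul_le_mul_left a6 (by positivity)
  · have hI' : (I : ℝ) ≤ (N : ℝ) * n := by exact_mod_cast hI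
    have b1 : (I : ℝ) ≤ t ^ 15 := by
      calc (I : ℝ) ≤ N * n := hI'
        _ ≤ t ^ 10 * t ^ 5 := by rw [ht5]; gcongr
        _ = _ := by ring
    have b2 : t ^ 4 ≤ 100 := by
      have c1 : t ^ 4 ≤ t ^ 6 := pow_le_pow_right₀ ht1 (by norm_num)
      have c2 : (t ^ 3) ^ 2 ≤ 10 ^ 2 := by gcongr; linarith
      nlinarith
    calc (I : ℝ) ≤ t ^ 15 := b1
      _ = t ^ 4 * t ^ 11 := by ring
      _ ≤ 100 * t ^ 11 := by gcongr
      _ ≤ _ := by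
        have : 0 < t ^ 11 := by positivity
        linarith

theorem repeated_three_by_three_minors_upper_bound :
    ∃ C : ℝ, 0 < C ∧ ∀ (n : ℕ), 3 ≤ n →
      ∀ A : Matrix (Fin 3) (Fin n) ℝ, IsTotallyPositive A →
        (({S : Finset (Fin n) | ∃ h : S.card = 3,
            (A.submatrix id ⇑(S.orderEmbOfFin h)).det = 1} : Set (Finset (Fin n))).ncard : ℝ)
          ≤ C * (n : ℝ) ^ ((11 : ℝ) / 5) := by
  refine ⟨270, by norm_num, ?_⟩
  intro n hn A hA
  classical
  set v : ℕ → Fin 3 → ℝ := fun k r => if h : k < n then A r ⟨k, h⟩ else 0 with hvdef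
  have hvA : ∀ (x : Fin n) r, v x r = A r x := by
    intro x r
    simp [hvdef]
  have hv : ∀ a b c, a < b → b < c → c < n → 0 < triDet (v a) (v b) (v c) := by
    intro a b c hab hbc hc
    have h := hA 3 id ![⟨a, by omega⟩, ⟨b, by omega⟩, ⟨c, hc⟩] strictMono_id (by
      intro x y hxy
      fin_cases x <;> fin_cases y <;> simp_all <;> omega)
    rw [Matrix.det_fin_three] at h
    simp only [Matrix.submatrix_apply, id, Matrix.cons_val_zero, Matrix.cons_val_one,
      Matrix.cons_val] at h
    have e1 : ∀ r, v a r = A r ⟨a, by omega⟩ := fun r => hvA ⟨a, by omega⟩ r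
    have e2 : ∀ r, v b r = A r ⟨b, by omega⟩ := fun r => hvA ⟨b, by omega⟩ r
    have e3 : ∀ r, v c r = A r ⟨c, hc⟩ := fun r => hvA ⟨c, hc⟩ r
    unfold triDet
    rw [e1, e1, e1, e2, e2, e2, e3, e3, e3]
    linarith
  obtain ⟨m, rfl⟩ : ∃ m, n = m + 1 := ⟨n - 1, by omega⟩
  let P := {p : Fin (m+1) ×ₗ Fin (m+1) // (ofLex p).1 < (ofLex p).2}
  let f : P → ℕ → ℝ := fun p k => triDet (v (ofLex p.1).1) (v (ofLex p.1).2) (v k)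
  set J := (Finset.univ ×ˢ Finset.range (m+1) : Finset (P × ℕ)).filter
      (fun z => f z.1 z.2 = 1) with hJ
  have hPne : ∀ p q : P, p ≠ q →
      ((ofLex p.1).1 : ℕ) = (ofLex q.1).1 ∧ ((ofLex p.1).2 : ℕ) = (ofLex q.1).2 → False := by
    intro p q hpq hh
    apply hpq
    apply Subtype.ext
    apply ofLex.injective
    exact Prod.ext (Fin.ext hh.1) (Fin.ext hh.2)
  have hcurves := fun M hM => curves_bound f m M hM
    (by
      intro p q hpq k1 k2 k3 k4 h12 h23 h34 h4 g1 g2 g3 g4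
      exact hPne p q hpq (four_alternate v hv _ _ _ _ p.2 q.2 (Fin.is_lt _) (Fin.is_lt _)
        k1 k2 k3 k4 h12 h23 h34 (by omega) g1 g2 g3 g4))
    (by
      intro p q hpq T hT hh
      have hm := fun t => hh _ (T.orderEmbOfFin_mem hT t)
      have hlt := (T.orderEmbOfFin hT).strictMono
      exact hPne p q hpq (three_zeros v hv _ _ _ _ p.2 q.2 (Fin.is_lt _) (Fin.is_lt _)
        _ _ _ (hlt (show (0 : Fin 3) < 1 by decide)) (hlt (show (1 : Fin 3) < 2 by decide))
        (Nat.lt_succ_of_le (hm 2).1) (hm 0).2 (hm 1).2 (hm 2).2))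
    J.card (by rw [hJ])
  have hcardP : Fintype.card P ≤ (m + 1) ^ 2 := by
    refine (Fintype.card_subtype_le _).trans ?_
    have : Fintype.card (Fin (m+1) ×ₗ Fin (m+1)) = Fintype.card (Fin (m+1) × Fin (m+1)) :=
      Fintype.card_congr ofLex
    rw [this]
    simp [sq]
  have hJle : J.card ≤ Fintype.card P * (m + 1) := by
    refine (Finset.card_filter_le _ _).trans ?_
    rw [Finset.card_product]
    simp
  refine le_trans ?_ (final_numeric (m+1) J.card (Fintype.card P) _ (by omega) rfl hcardP hJle
    (hcurves _))
  rw [Nat.cast_le]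
  let g : P × ℕ → Finset (Fin (m+1)) := fun z => Finset.univ.filter
    (fun x => x = (ofLex z.1.1).1 ∨ x = (ofLex z.1.1).2 ∨ (x : ℕ) = z.2)
  have hsub : ({S : Finset (Fin (m+1)) | ∃ h : S.card = 3,
            (A.submatrix id ⇑(S.orderEmbOfFin h)).det = 1} : Set (Finset (Fin (m+1)))) ⊆
      ((J.image g : Finset (Finset (Fin (m+1)))) : Set (Finset (Fin (m+1)))) := by
    rintro S ⟨hS, hdet⟩
    have hlt := (S.orderEmbOfFin hS).strictMono
    rw [Finset.mem_coe, Finset.mem_image]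
    refine ⟨(⟨toLex (S.orderEmbOfFin hS 0, S.orderEmbOfFin hS 1),
      hlt (show (0 : Fin 3) < 1 by decide)⟩, (S.orderEmbOfFin hS 2 : ℕ)), ?_, ?_⟩
    · simp only [hJ, Finset.mem_filter, Finset.mem_product, Finset.mem_univ, true_and,
        Finset.mem_range, f, ofLex_toLex]
      refine ⟨Fin.is_lt _, ?_⟩
      rw [Matrix.det_fin_three] at hdet
      simp only [Matrix.submatrix_apply, id] at hdet
      unfold triDet
      simp only [hvA]
      linarith
    · ext x
      have hr := S.range_orderEmbOfFin hS
      have hx : x ∈ S ↔ ∃ t, S.orderEmbOfFin hS t = x := by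
        rw [← Finset.mem_coe, ← hr, Set.mem_range]
      rw [hx]
      simp only [g, Finset.mem_filter, Finset.mem_univ, true_and, ofLex_toLex, Fin.exists_fin_succ,
        Fin.val_inj]
      simp [eq_comm]
  calc _ ≤ ((J.image g : Finset (Finset (Fin (m+1)))) : Set (Finset (Fin (m+1)))).ncard :=
        Set.ncard_le_ncard hsub (Finset.finite_toSet _)
    _ = (J.image g).card := Set.ncard_coe_finset _
    _ ≤ _ := Finset.card_image_le
end

section
/- There exists a constant C > 0 such that for every n ≥ 2, every n×n TP₂ real matrix A, and every real number α, the number of quadruples (i, j, k, l) with 1 ≤ i < j ≤ n and 1 ≤ k < l ≤ n such that the 2×2 minor of A on rows i, j and columns k, l equals α is at most C·n^(10/3). -/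
/-- A real matrix is TP₂ if all of its entries are positive and all of its `2 × 2` minors
are positive. -/
def IsTP2 {m n : ℕ} (A : Matrix (Fin m) (Fin n) ℝ) : Prop :=
  (∀ i j, 0 < A i j) ∧
  ∀ i j k l, i < j → k < l → 0 < A i k * A j l - A i l * A j k


namespace RepMinors

/-- Height of the `l`-th line above the abscissa `x`. -/
def ht {n : ℕ} (m c : Fin n → ℝ) (l : Fin n) (x : ℝ) : ℝ := m l * x + c l

/-- Two edges on the same line with overlapping open spans coincide. -/
lemma same_line {n : ℕ} {x y m c : Fin n → ℝ}
    {V : Finset (Fin n)} {E : Finset (Fin n × Fin n × Fin n)}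
    (hV : ∀ e ∈ E, e.1 ∈ V ∧ e.2.1 ∈ V)
    (hl : ∀ e ∈ E, y e.1 = ht m c e.2.2 (x e.1))
    (hr : ∀ e ∈ E, y e.2.1 = ht m c e.2.2 (x e.2.1))
    (hint : ∀ e ∈ E, ∀ w ∈ V, e.1 < w → w < e.2.1 → y w ≠ ht m c e.2.2 (x w))
    {e f : Fin n × Fin n × Fin n} (he : e ∈ E) (hf : f ∈ E) (hef : e.2.2 = f.2.2)
    (h1 : e.1 < f.2.1) (h2 : f.1 < e.2.1) : e = f := by
  obtain ⟨u, v, l⟩ := e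
  obtain ⟨u', v', l'⟩ := f
  simp only at hef h1 h2
  subst hef
  have hu : u = u' := by
    rcases lt_trichotomy u u' with h | h | h
    · exact absurd (hl _ hf) (hint _ he u' (hV _ hf).1 h h2)
    · exact h
    · exact absurd (hl _ he) (hint _ hf u (hV _ he).1 h h1)
  subst hu
  have hv : v = v' := by
    rcases lt_trichotomy v v' with h | h | h
    · exact absurd (hr _ he) (hint _ hf v (hV _ he).2 h2 h)
    · exact h
    · exact absurd (hr _ hf) (hint _ he v' (hV _ hf).2 h1 h)
  subst hv
  rfl

/-- A crossing-free straight line graph has at most `3 |V|` edges. -/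
lemma planar {n : ℕ} {x y m c : Fin n → ℝ} (hx : StrictMono x)
    (hinj : ∀ k l, m k = m l → c k = c l → k = l)
    {V : Finset (Fin n)} {E : Finset (Fin n × Fin n × Fin n)}
    (hV : ∀ e ∈ E, e.1 ∈ V ∧ e.2.1 ∈ V) (hlt : ∀ e ∈ E, e.1 < e.2.1)
    (hl : ∀ e ∈ E, y e.1 = ht m c e.2.2 (x e.1))
    (hr : ∀ e ∈ E, y e.2.1 = ht m c e.2.2 (x e.2.1))
    (hint : ∀ e ∈ E, ∀ w ∈ V, e.1 < w → w < e.2.1 → y w ≠ ht m c e.2.2 (x w))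
    (hnc : ∀ e ∈ E, ∀ f ∈ E, ∀ s t, e.1 ≤ s → f.1 ≤ s → s ≤ e.2.1 → s ≤ f.2.1 →
      e.1 ≤ t → f.1 ≤ t → t ≤ e.2.1 → t ≤ f.2.1 →
      ht m c e.2.2 (x s) < ht m c f.2.2 (x s) → ht m c e.2.2 (x t) ≤ ht m c f.2.2 (x t)) :
    E.card ≤ 3 * V.card := by
  classical
  set T1 := E.filter (fun e => ∀ f ∈ E, f.1 = e.1 → m f.2.2 ≤ m e.2.2) with hT1
  set T2 := E.filter (fun e => ∀ f ∈ E, f.2.1 = e.2.1 → m e.2.2 ≤ m f.2.2) with hT2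
  set T3 := E.filter (fun e => ∃ w ∈ V, e.1 < w ∧ w < e.2.1 ∧ ht m c e.2.2 (x w) < y w ∧
    ∀ f ∈ E, f.1 < w → w < f.2.1 → ht m c e.2.2 (x w) < ht m c f.2.2 (x w) →
      ¬ ht m c f.2.2 (x w) < y w) with hT3
  have c1 : T1.card ≤ V.card := by
    apply Finset.card_le_card_of_injOn (fun e => e.1)
    · intro e he
      exact (hV e (Finset.mem_filter.1 he).1).1
    · intro e he f hf hef
      obtain ⟨he, he'⟩ := Finset.mem_filter.1 he
      obtain ⟨hf, hf'⟩ := Finset.mem_filter.1 hf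
      simp only at hef
      have hm : m e.2.2 = m f.2.2 := le_antisymm (hf' e he hef) (he' f hf hef.symm)
      have hc : c e.2.2 = c f.2.2 := by
        have a := hl e he
        have b := hl f hf
        rw [hef] at a
        simp only [ht, hm] at a b
        linarith
      exact same_line hV hl hr hint he hf (hinj _ _ hm hc) (hef ▸ hlt f hf) (hef ▸ hlt e he)
  have c2 : T2.card ≤ V.card := by
    apply Finset.card_le_card_of_injOn (fun e => e.2.1)
    · intro e he
      exact (hV e (Finset.mem_filter.1 he).1).2
    · intro e he f hf hef
      obtain ⟨he, he'⟩ := Finset.mem_filter.1 he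
      obtain ⟨hf, hf'⟩ := Finset.mem_filter.1 hf
      simp only at hef
      have hm : m e.2.2 = m f.2.2 := le_antisymm (he' f hf hef.symm) (hf' e he hef)
      have hc : c e.2.2 = c f.2.2 := by
        have a := hr e he
        have b := hr f hf
        rw [hef] at a
        simp only [ht, hm] at a b
        linarith
      exact same_line hV hl hr hint he hf (hinj _ _ hm hc) (hef ▸ hlt e he) (hef ▸ hlt f hf)
  have c3 : T3.card ≤ V.card := by
    have hch : ∀ e : Fin n × Fin n × Fin n, ∃ w : Fin n, e ∈ T3 →
        w ∈ V ∧ e.1 < w ∧ w < e.2.1 ∧ ht m c e.2.2 (x w) < y w ∧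
        ∀ f ∈ E, f.1 < w → w < f.2.1 → ht m c e.2.2 (x w) < ht m c f.2.2 (x w) →
        ¬ ht m c f.2.2 (x w) < y w := by
      intro e
      by_cases h : e ∈ T3
      · obtain ⟨_, w, hw⟩ := Finset.mem_filter.1 h
        exact ⟨w, fun _ => hw⟩
      · exact ⟨e.1, fun h' => absurd h' h⟩
    choose φ hφ using hch
    apply Finset.card_le_card_of_injOn φ
    · intro e he
      exact (hφ e he).1
    · intro e he f hf hef
      obtain ⟨_, e1, e2, e3, e4⟩ := hφ e he
      obtain ⟨_, f1, f2, f3, f4⟩ := hφ f hf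
      have he := (Finset.mem_filter.1 he).1
      have hf := (Finset.mem_filter.1 hf).1
      rw [← hef] at f1 f2 f3 f4
      set w := φ e
      have q1 : ¬ ht m c e.2.2 (x w) < ht m c f.2.2 (x w) := fun h => e4 f hf f1 f2 h f3
      have q2 : ¬ ht m c f.2.2 (x w) < ht m c e.2.2 (x w) := fun h => f4 e he e1 e2 h e3
      have q : ht m c e.2.2 (x w) = ht m c f.2.2 (x w) := le_antisymm (not_lt.1 q2) (not_lt.1 q1)
      have key : ∀ e ∈ E, ∀ f ∈ E, e.1 < w → w < e.2.1 → f.1 < w → w < f.2.1 →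
          ht m c e.2.2 (x w) = ht m c f.2.2 (x w) → ¬ m e.2.2 < m f.2.2 := by
        intro e he f hf e1 e2 f1 f2 q hm
        have hs : x (max e.1 f.1) < x w := hx (max_lt e1 f1)
        have ht' : x w < x (min e.2.1 f.2.1) := hx (lt_min e2 f2)
        have a1 : max e.1 f.1 < w := max_lt e1 f1
        have a2 : w < min e.2.1 f.2.1 := lt_min e2 f2
        have := hnc f hf e he (max e.1 f.1) (min e.2.1 f.2.1) (le_max_right _ _) (le_max_left _ _)
          (a1.trans f2).le (a1.trans e2).le (f1.trans a2).le (e1.trans a2).le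
          (min_le_right _ _) (min_le_left _ _)
          (by unfold ht at *; nlinarith)
        unfold ht at *
        nlinarith
      have hm : m e.2.2 = m f.2.2 := le_antisymm
        (not_lt.1 (key f hf e he f1 f2 e1 e2 q.symm)) (not_lt.1 (key e he f hf e1 e2 f1 f2 q))
      have hc : c e.2.2 = c f.2.2 := by
        simp only [ht, hm] at q
        linarith
      exact same_line hV hl hr hint he hf (hinj _ _ hm hc) (e1.trans f2) (f1.trans e2)
  have cover : E ⊆ T1 ∪ T2 ∪ T3 := by
    intro e he
    by_cases h1 : e ∈ T1
    · simp [h1]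
    by_cases h2 : e ∈ T2
    · simp [h2]
    refine Finset.mem_union_right _ (Finset.mem_filter.2 ⟨he, ?_⟩)
    have h1' : ∃ f ∈ E, f.1 = e.1 ∧ m e.2.2 < m f.2.2 := by
      by_contra hcon
      push Not at hcon
      exact h1 (Finset.mem_filter.2 ⟨he, hcon⟩)
    have h2' : ∃ f ∈ E, f.2.1 = e.2.1 ∧ m f.2.2 < m e.2.2 := by
      by_contra hcon
      push Not at hcon
      exact h2 (Finset.mem_filter.2 ⟨he, hcon⟩)
    obtain ⟨f0, hf0, hf0'⟩ := h1'
    obtain ⟨g, hg, hgv, hgm⟩ := h2'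
    obtain ⟨f, hfF, hfmin⟩ := Finset.exists_min_image
      (E.filter (fun f => f.1 = e.1 ∧ m e.2.2 < m f.2.2)) (fun f => m f.2.2)
      ⟨f0, Finset.mem_filter.2 ⟨hf0, hf0'⟩⟩
    obtain ⟨hf, hfu, hfm⟩ := Finset.mem_filter.1 hfF
    have heu := hl e he
    have hev := hr e he
    have hfu' := hl f hf
    have hfa := hr f hf
    have hgb := hl g hg
    have hgv' := hr g hg
    rw [hfu] at hfu'
    rw [hgv] at hgv'
    have huv := hlt e he
    have hua := hlt f hf
    rw [hfu] at hua
    have hbv := hlt g hg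
    rw [hgv] at hbv
    -- comparison of e and f to the right of u
    have cmp_ef : ∀ w, e.1 < w → ht m c e.2.2 (x w) < ht m c f.2.2 (x w) := by
      intro w hw
      have := hx hw
      unfold ht at *
      nlinarith
    have cmp_eg : ∀ w, w < e.2.1 → ht m c e.2.2 (x w) < ht m c g.2.2 (x w) := by
      intro w hw
      have := hx hw
      unfold ht at *
      nlinarith
    set S := V.filter (fun w => e.1 < w ∧ w < e.2.1 ∧ w ≤ f.2.1 ∧ ht m c e.2.2 (x w) < y w ∧
      y w ≤ ht m c f.2.2 (x w)) with hS
    have hSne : S.Nonempty := by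
      rcases lt_or_ge f.2.1 e.2.1 with hav | hva
      · refine ⟨f.2.1, Finset.mem_filter.2 ⟨(hV f hf).2, hua, hav, le_rfl, ?_, hfa.le⟩⟩
        rw [hfa]
        exact cmp_ef _ hua
      · have hgf : ht m c g.2.2 (x e.2.1) < ht m c f.2.2 (x e.2.1) := by
          have := cmp_ef _ huv
          linarith
        have hub : e.1 < g.1 := by
          by_contra hcon
          have hcon := not_lt.1 hcon
          have a := hnc g hg f hf e.2.1 e.1 (hcon.trans huv.le) (hfu ▸ huv.le) hgv.ge hva
            hcon hfu.le (hgv ▸ huv.le) (huv.le.trans hva) hgf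
          have b := cmp_eg e.1 huv
          linarith
        have a := hnc g hg f hf e.2.1 g.1 hbv.le (hfu ▸ huv.le) hgv.ge hva
            le_rfl (hfu ▸ hub.le) (hgv ▸ hbv.le) (hbv.le.trans hva) hgf
        have b := cmp_eg g.1 hbv
        exact ⟨g.1, Finset.mem_filter.2 ⟨(hV g hg).1, hub, hbv, hbv.le.trans hva,
          by rw [hgb]; exact b, by rw [hgb]; exact a⟩⟩
    obtain ⟨w, hwS, hwmin⟩ := Finset.exists_min_image S id hSne
    obtain ⟨hwV, huw, hwv, hwa, hew, hwf⟩ := Finset.mem_filter.1 hwS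
    refine ⟨w, hwV, huw, hwv, hew, ?_⟩
    intro k hk hkw hwk hek hky
    have hkl := hl k hk
    have hkf : ht m c k.2.2 (x w) < ht m c f.2.2 (x w) := lt_of_lt_of_le hky hwf
    rcases lt_trichotomy k.1 e.1 with hc | hc | hc
    · have a := hnc e he k hk w e.1 huw.le hkw.le hwv.le hwk.le le_rfl hc.le huv.le
        (huw.trans hwk).le hek
      have b := hnc k hk f hf w e.1 hkw.le (hfu ▸ huw.le) hwk.le hwa hc.le hfu.le
        (huw.trans hwk).le hua.le hkf
      exact hint k hk e.1 (hV e he).1 hc (huw.trans hwk) (by linarith)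
    · rw [hc] at hkl
      have hxw := hx huw
      have a : m e.2.2 < m k.2.2 := by
        by_contra hcon
        unfold ht at *
        nlinarith
      have b : m k.2.2 < m f.2.2 := by
        by_contra hcon
        unfold ht at *
        nlinarith
      have := hfmin k (Finset.mem_filter.2 ⟨hk, hc, a⟩)
      linarith
    · have hcv : k.1 < e.2.1 := hkw.trans hwv
      have hca : k.1 ≤ f.2.1 := hkw.le.trans hwa
      have a := hnc e he k hk w k.1 huw.le hkw.le hwv.le hwk.le hc.le le_rfl hcv.le
        (hlt k hk).le hek
      have b := hnc k hk f hf w k.1 hkw.le (hfu ▸ huw.le) hwk.le hwa le_rfl (hfu ▸ hc.le)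
        (hlt k hk).le hca hkf
      have d := hint e he k.1 (hV k hk).1 hc hcv
      have hkS : k.1 ∈ S := Finset.mem_filter.2 ⟨(hV k hk).1, hc, hcv, hca,
        lt_of_le_of_ne (by rw [hkl]; exact a) d.symm, by rw [hkl]; exact b⟩
      exact absurd (hwmin _ hkS) (not_le.2 hkw)
  calc E.card ≤ (T1 ∪ T2 ∪ T3).card := Finset.card_le_card cover
    _ ≤ (T1 ∪ T2).card + T3.card := Finset.card_union_le _ _
    _ ≤ T1.card + T2.card + T3.card := by gcongr; exact Finset.card_union_le _ _
    _ ≤ 3 * V.card := by omega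

/-- Number of colorings which are `0` on a given set. -/
lemma card_color {n r : ℕ} (S : Finset (Fin n)) :
    (Finset.univ.filter (fun φ : Fin n → Fin (r + 1) => ∀ s ∈ S, φ s = 0)).card
      * (r + 1) ^ S.card = (r + 1) ^ n := by
  classical
  have : (Finset.univ.filter (fun φ : Fin n → Fin (r + 1) => ∀ s ∈ S, φ s = 0))
      = Fintype.piFinset (fun i => if i ∈ S then ({0} : Finset (Fin (r + 1))) else Finset.univ) := by
    ext φ
    simp only [Finset.mem_filter, Finset.mem_univ, true_and, Fintype.mem_piFinset]
    refine forall_congr' fun i => ?_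
    by_cases h : i ∈ S <;> simp [h]
  rw [this, Fintype.card_piFinset]
  have h2 : ∀ i, (if i ∈ S then ({0} : Finset (Fin (r + 1))) else Finset.univ).card
      = if i ∈ S then 1 else r + 1 := by
    intro i
    split_ifs <;> simp
  simp only [h2]
  rw [Finset.prod_ite]
  simp only [Finset.prod_const, one_pow, one_mul]
  rw [← pow_add]
  congr 1
  have h3 := Finset.card_filter_add_card_filter_not (s := (Finset.univ : Finset (Fin n)))
    (fun i => i ∈ S)
  simp only [Finset.filter_univ_mem, Finset.card_univ, Fintype.card_fin] at h3
  omega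

lemma sum_color {n r k : ℕ} {β : Type*} (A : Finset β) (g : β → Finset (Fin n))
    (hg : ∀ a ∈ A, (g a).card = k) :
    (∑ φ : Fin n → Fin (r + 1), (A.filter (fun a => ∀ s ∈ g a, φ s = 0)).card) * (r + 1) ^ k
      = A.card * (r + 1) ^ n := by
  classical
  simp only [Finset.card_filter]
  rw [Finset.sum_comm, Finset.sum_mul, Finset.card_eq_sum_ones, Finset.sum_mul]
  refine Finset.sum_congr rfl fun a ha => ?_
  rw [← Finset.card_filter, ← hg a ha, card_color, one_mul]

lemma sampling {n r : ℕ} {β γ : Type*} (A : Finset β) (B : Finset γ)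
    (gA : β → Finset (Fin n)) (gB : γ → Finset (Fin n))
    (hA : ∀ a ∈ A, (gA a).card = 2) (hB : ∀ b ∈ B, (gB b).card = 4)
    (H : ∀ W : Finset (Fin n), (A.filter (fun a => ∀ s ∈ gA a, s ∈ W)).card
      ≤ 3 * W.card + (B.filter (fun b => ∀ s ∈ gB b, s ∈ W)).card) :
    A.card * (r + 1) ^ 2 ≤ 3 * n * (r + 1) ^ 3 + B.card := by
  classical
  have e1 := sum_color (r := r) A gA hA
  have e2 := sum_color (r := r) B gB hB
  have e3 := sum_color (r := r) (Finset.univ : Finset (Fin n)) (fun i => {i}) (k := 1) (by simp)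
  have hs := Finset.sum_le_sum (s := (Finset.univ : Finset (Fin n → Fin (r + 1))))
    (fun φ _ => H (Finset.univ.filter (fun i => φ i = 0)))
  simp only [Finset.mem_filter, Finset.mem_univ, true_and] at hs
  rw [Finset.sum_add_distrib, ← Finset.mul_sum] at hs
  simp only [Finset.mem_singleton, forall_eq, Finset.card_univ, Fintype.card_fin, pow_one] at e3
  have hpos : 0 < (r + 1) ^ n := by positivity
  refine Nat.le_of_mul_le_mul_right ?_ hpos
  have h4 := Nat.mul_le_mul_right ((r + 1) ^ 4) hs
  calc A.card * (r + 1) ^ 2 * (r + 1) ^ n = (A.card * (r + 1) ^ n) * (r + 1) ^ 2 := by ring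
    _ = _ := by rw [← e1]
    _ ≤ _ := le_trans (le_of_eq (by ring)) h4
    _ = _ := by
      rw [add_mul, e2]
      have e3' := congrArg (fun t => 3 * t * (r + 1) ^ 3) e3
      linarith

/-- Szemerédi–Trotter for points with distinct abscissas. -/
lemma incidences {n : ℕ} (r : ℕ) {x y m c : Fin n → ℝ} (hx : StrictMono x)
    (hinj : ∀ k l, m k = m l → c k = c l → k = l) (I : Finset (Fin n × Fin n))
    (hI : ∀ p ∈ I, y p.1 = ht m c p.2 (x p.1)) :
    I.card * (r + 1) ^ 2 ≤ 3 * n * (r + 1) ^ 3 + n ^ 2 + n * (r + 1) ^ 2 := by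
  classical
  set E : Finset (Fin n × Fin n × Fin n) := Finset.univ.filter (fun e =>
    e.1 < e.2.1 ∧ y e.1 = ht m c e.2.2 (x e.1) ∧ y e.2.1 = ht m c e.2.2 (x e.2.1) ∧
    ∀ w, e.1 < w → w < e.2.1 → y w ≠ ht m c e.2.2 (x w)) with hE
  have memE : ∀ e ∈ E, e.1 < e.2.1 ∧ y e.1 = ht m c e.2.2 (x e.1) ∧
      y e.2.1 = ht m c e.2.2 (x e.2.1) ∧
      ∀ w, e.1 < w → w < e.2.1 → y w ≠ ht m c e.2.2 (x w) :=
    fun e he => (Finset.mem_filter.1 he).2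
  -- incidences versus edges
  have hIE : I.card ≤ E.card + n := by
    set L := I.filter (fun p => ∀ q, p.1 < q → y q ≠ ht m c p.2 (x q)) with hL
    have hLc : L.card ≤ n := by
      have : L.card ≤ (Finset.univ : Finset (Fin n)).card := by
        apply Finset.card_le_card_of_injOn (fun p => p.2)
        · intro p _
          simp
        · intro p hp q hq hpq
          obtain ⟨hp, hp'⟩ := Finset.mem_filter.1 hp
          obtain ⟨hq, hq'⟩ := Finset.mem_filter.1 hq
          simp only at hpq
          rcases lt_trichotomy p.1 q.1 with h | h | h
          · exact absurd (hpq ▸ hI q hq) (hp' _ h)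
          · exact Prod.ext h hpq
          · exact absurd (hpq ▸ hI p hp) (hq' _ h)
      simpa using this
    have hsub : I ⊆ E.image (fun e => (e.1, e.2.2)) ∪ L := by
      intro p hp
      by_cases hpL : p ∈ L
      · exact Finset.mem_union_right _ hpL
      refine Finset.mem_union_left _ (Finset.mem_image.2 ?_)
      have : ∃ q, p.1 < q ∧ y q = ht m c p.2 (x q) := by
        by_contra hcon
        push Not at hcon
        exact hpL (Finset.mem_filter.2 ⟨hp, hcon⟩)
      obtain ⟨q0, hq0⟩ := this
      obtain ⟨q, hq, hqmin⟩ := Finset.exists_min_image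
        (Finset.univ.filter (fun q => p.1 < q ∧ y q = ht m c p.2 (x q))) id
        ⟨q0, by simpa using hq0⟩
      have hq := (Finset.mem_filter.1 hq).2
      refine ⟨(p.1, q, p.2), Finset.mem_filter.2 ⟨Finset.mem_univ _, hq.1, hI p hp, hq.2, ?_⟩, rfl⟩
      intro w hw1 hw2 hw3
      exact absurd (hqmin w (by simpa using ⟨hw1, hw3⟩)) (not_le.2 hw2)
    calc I.card ≤ _ := Finset.card_le_card hsub
      _ ≤ _ := Finset.card_union_le _ _
      _ ≤ E.card + n := add_le_add Finset.card_image_le hLc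
  -- crossing pairs
  let cr : (Fin n × Fin n × Fin n) → (Fin n × Fin n × Fin n) → Prop := fun e f =>
    ∃ s t, e.1 ≤ s ∧ f.1 ≤ s ∧ s ≤ e.2.1 ∧ s ≤ f.2.1 ∧
      e.1 ≤ t ∧ f.1 ≤ t ∧ t ≤ e.2.1 ∧ t ≤ f.2.1 ∧
      ht m c e.2.2 (x s) < ht m c f.2.2 (x s) ∧ ht m c f.2.2 (x t) < ht m c e.2.2 (x t)
  -- a crossing yields an interior crossing abscissa
  have crx : ∀ e f, cr e f → m e.2.2 ≠ m f.2.2 ∧ ∃ z, ht m c e.2.2 z = ht m c f.2.2 z ∧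
      x e.1 < z ∧ x f.1 < z ∧ z < x e.2.1 ∧ z < x f.2.1 := by
    rintro e f ⟨s, t, a1, a2, a3, a4, b1, b2, b3, b4, h1, h2⟩
    have a1 := hx.monotone a1
    have a2 := hx.monotone a2
    have a3 := hx.monotone a3
    have a4 := hx.monotone a4
    have b1 := hx.monotone b1
    have b2 := hx.monotone b2
    have b3 := hx.monotone b3
    have b4 := hx.monotone b4
    have hm : m e.2.2 ≠ m f.2.2 := by
      intro h
      simp only [ht, h] at h1 h2
      linarith
    refine ⟨hm, (c f.2.2 - c e.2.2) / (m e.2.2 - m f.2.2), ?_⟩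
    set z := (c f.2.2 - c e.2.2) / (m e.2.2 - m f.2.2) with hz
    have hm' : m e.2.2 - m f.2.2 ≠ 0 := sub_ne_zero.2 hm
    have hzz : z * (m e.2.2 - m f.2.2) = c f.2.2 - c e.2.2 := by
      rw [hz]
      field_simp
    unfold ht at *
    refine ⟨by linarith, ?_⟩
    rcases lt_or_gt_of_ne hm with h | h
    · have p1 : x t < z := by
        by_contra hcon
        nlinarith
      have p2 : z < x s := by
        by_contra hcon
        nlinarith
      refine ⟨?_, ?_, ?_, ?_⟩ <;> linarith
    · have p1 : x s < z := by
        by_contra hcon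
        nlinarith
      have p2 : z < x t := by
        by_contra hcon
        nlinarith
      refine ⟨?_, ?_, ?_, ?_⟩ <;> linarith
  set B := (E ×ˢ E).filter (fun q => cr q.1 q.2) with hB
  have hBc : B.card ≤ n ^ 2 := by
    have : B.card ≤ (Finset.univ : Finset (Fin n × Fin n)).card := by
      apply Finset.card_le_card_of_injOn (fun q => (q.1.2.2, q.2.2.2))
      · intro q _
        simp
      · rintro ⟨e, f⟩ hq ⟨e', f'⟩ hq' heq
        obtain ⟨hef, hcr⟩ := Finset.mem_filter.1 hq
        obtain ⟨hef', hcr'⟩ := Finset.mem_filter.1 hq'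
        obtain ⟨he, hf⟩ := Finset.mem_product.1 hef
        obtain ⟨he', hf'⟩ := Finset.mem_product.1 hef'
        simp only [Prod.mk.injEq] at heq he hf he' hf' hcr hcr'
        obtain ⟨hm, z, hz, z1, z2, z3, z4⟩ := crx _ _ hcr
        obtain ⟨hm', z', hz', w1, w2, w3, w4⟩ := crx _ _ hcr'
        have hzz : z = z' := by
          rw [← heq.1, ← heq.2] at hz'
          unfold ht at hz hz'
          have : (m e.2.2 - m f.2.2) * (z - z') = 0 := by linarith
          rcases mul_eq_zero.1 this with h | h
          · exact absurd (sub_eq_zero.1 h) hm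
          · linarith
        subst hzz
        have k1 : e = e' := same_line (V := Finset.univ) (x := x) (y := y) (m := m) (c := c)
          (E := E) (by simp) (fun e he => (memE e he).2.1) (fun e he => (memE e he).2.2.1)
          (fun e he w _ => (memE e he).2.2.2 w) he he' heq.1
          (hx.lt_iff_lt.1 (z1.trans w3)) (hx.lt_iff_lt.1 (w1.trans z3))
        have k2 : f = f' := same_line (V := Finset.univ) (x := x) (y := y) (m := m) (c := c)
          (E := E) (by simp) (fun e he => (memE e he).2.1) (fun e he => (memE e he).2.2.1)
          (fun e he w _ => (memE e he).2.2.2 w) hf hf' heq.2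
          (hx.lt_iff_lt.1 (z2.trans w4)) (hx.lt_iff_lt.1 (w2.trans z4))
        rw [k1, k2]
    simpa [sq] using this
  have hsamp := sampling (r := r) E B (fun e => {e.1, e.2.1})
    (fun q => {q.1.1, q.1.2.1, q.2.1, q.2.2.1})
    (fun e he => Finset.card_pair (memE e he).1.ne)
    (by
      rintro ⟨e, f⟩ hq
      obtain ⟨hef, hcr⟩ := Finset.mem_filter.1 hq
      obtain ⟨he, hf⟩ := Finset.mem_product.1 hef
      simp only at he hf hcr
      obtain ⟨hm, z, hz, z1, z2, z3, z4⟩ := crx _ _ hcr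
      have uniq : ∀ p, ht m c e.2.2 (x p) = ht m c f.2.2 (x p) → x p = z := by
        intro p hp
        unfold ht at hz hp
        have : (m e.2.2 - m f.2.2) * (x p - z) = 0 := by linarith
        rcases mul_eq_zero.1 this with h | h
        · exact absurd (sub_eq_zero.1 h) hm
        · linarith
      obtain ⟨e1, e2, e3, -⟩ := memE e he
      obtain ⟨f1, f2, f3, -⟩ := memE f hf
      have n1 : e.1 ≠ f.1 := by
        intro h
        have := uniq e.1 (by rw [← e2, h, f2])
        linarith
      have n2 : e.1 ≠ f.2.1 := by
        intro h
        have := uniq e.1 (by rw [← e2, h, f3])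
        linarith
      have n3 : e.2.1 ≠ f.1 := by
        intro h
        have := uniq e.2.1 (by rw [← e3, h, f2])
        linarith
      have n4 : e.2.1 ≠ f.2.1 := by
        intro h
        have := uniq e.2.1 (by rw [← e3, h, f3])
        linarith
      simp only
      rw [Finset.card_insert_of_notMem (by simp [e1.ne, n1, n2]),
        Finset.card_insert_of_notMem (by simp [n3, n4]), Finset.card_pair f1.ne])
    (by
      intro W
      set EW := E.filter (fun e => ∀ s ∈ ({e.1, e.2.1} : Finset (Fin n)), s ∈ W) with hEW
      set BW := B.filter (fun q => ∀ s ∈ ({q.1.1, q.1.2.1, q.2.1, q.2.2.1} : Finset (Fin n)), s ∈ W)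
        with hBW
      have memEW : ∀ e ∈ EW, e ∈ E ∧ e.1 ∈ W ∧ e.2.1 ∈ W := by
        intro e he
        obtain ⟨h1, h2⟩ := Finset.mem_filter.1 he
        exact ⟨h1, h2 _ (by simp), h2 _ (by simp)⟩
      set G := EW.filter (fun e => ∀ f ∈ EW, ¬ cr e f) with hG
      have hGsub : ∀ e ∈ G, e ∈ EW := fun e he => (Finset.mem_filter.1 he).1
      have hGE : ∀ e ∈ G, e ∈ E := fun e he => (memEW e (hGsub e he)).1
      have hGc : G.card ≤ 3 * W.card := by
        refine planar (x := x) (y := y) (m := m) (c := c) hx hinj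
          (fun e he => (memEW e (hGsub e he)).2)
          (fun e he => (memE e (hGE e he)).1) (fun e he => (memE e (hGE e he)).2.1)
          (fun e he => (memE e (hGE e he)).2.2.1)
          (fun e he w _ => (memE e (hGE e he)).2.2.2 w) ?_
        intro e he f hf s t a1 a2 a3 a4 b1 b2 b3 b4 h
        by_contra hcon
        exact (Finset.mem_filter.1 he).2 f (hGsub f hf)
          ⟨s, t, a1, a2, a3, a4, b1, b2, b3, b4, h, not_le.1 hcon⟩
      have hsub : EW ⊆ G ∪ BW.image (fun q => q.1) := by
        intro e he
        by_cases heG : e ∈ G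
        · exact Finset.mem_union_left _ heG
        have : ∃ f ∈ EW, cr e f := by
          by_contra hcon
          push Not at hcon
          exact heG (Finset.mem_filter.2 ⟨he, hcon⟩)
        obtain ⟨f, hf, hcr⟩ := this
        refine Finset.mem_union_right _ (Finset.mem_image.2 ⟨(e, f), Finset.mem_filter.2 ⟨
          Finset.mem_filter.2 ⟨Finset.mem_product.2 ⟨(memEW e he).1, (memEW f hf).1⟩, hcr⟩, ?_⟩, rfl⟩)
        intro s hs
        simp only [Finset.mem_insert, Finset.mem_singleton] at hs
        rcases hs with h | h | h | h <;> subst h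
        · exact (memEW e he).2.1
        · exact (memEW e he).2.2
        · exact (memEW f hf).2.1
        · exact (memEW f hf).2.2
      calc EW.card ≤ _ := Finset.card_le_card hsub
        _ ≤ _ := Finset.card_union_le _ _
        _ ≤ 3 * W.card + BW.card := add_le_add hGc Finset.card_image_le)
  calc I.card * (r + 1) ^ 2 ≤ (E.card + n) * (r + 1) ^ 2 := Nat.mul_le_mul_right _ hIE
    _ = E.card * (r + 1) ^ 2 + n * (r + 1) ^ 2 := by ring
    _ ≤ 3 * n * (r + 1) ^ 3 + n ^ 2 + n * (r + 1) ^ 2 := by omega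

/-- Bound on repeated minors for a pair of rows. -/
lemma two_rows {n : ℕ} (r : ℕ) (a b : Fin n → ℝ) (ha : ∀ k, 0 < a k)
    (hab : ∀ k l, k < l → 0 < a k * b l - a l * b k) (α : ℝ) :
    (Finset.univ.filter (fun q : Fin n × Fin n => q.1 < q.2 ∧
      a q.1 * b q.2 - a q.2 * b q.1 = α)).card * (r + 1) ^ 2
      ≤ 3 * n * (r + 1) ^ 3 + n ^ 2 + n * (r + 1) ^ 2 := by
  classical
  rcases le_or_gt α 0 with hα | hα
  · rw [Finset.filter_eq_empty_iff.2]
    · simp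
    · rintro q - ⟨h1, h2⟩
      have := hab _ _ h1
      linarith
  have hx : StrictMono (fun k => b k / a k) := by
    intro k l h
    have := hab k l h
    simp only
    rw [div_lt_div_iff₀ (ha k) (ha l)]
    linarith
  rw [← Finset.card_image_of_injective _ (Prod.swap_injective)]
  refine incidences r (x := fun k => b k / a k) (y := fun k => 1 / a k) (m := fun k => a k / α)
    (c := fun k => - b k / α) hx ?_ _ ?_
  · intro k l h1 h2
    apply hx.injective
    simp only at h1 h2 ⊢
    have h1 : a k = a l := by field_simp at h1; exact h1
    have h2 : b k = b l := by field_simp at h2; linarith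
    rw [h1, h2]
  · intro p hp
    obtain ⟨q, hq, rfl⟩ := Finset.mem_image.1 hp
    have h := (Finset.mem_filter.1 hq).2.2
    have h2 := ha q.2
    simp only [Prod.fst_swap, Prod.snd_swap, ht]
    field_simp
    linarith

end RepMinors

theorem repeated_two_by_two_minors_TP2_upper_bound :
    ∃ C : ℝ, 0 < C ∧ ∀ (n : ℕ), 2 ≤ n →
      ∀ A : Matrix (Fin n) (Fin n) ℝ, IsTP2 A →
        ∀ α : ℝ,
          (({q : (Fin n × Fin n) × Fin n × Fin n | q.1.1 < q.1.2 ∧ q.2.1 < q.2.2 ∧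
              A q.1.1 q.2.1 * A q.1.2 q.2.2 - A q.1.1 q.2.2 * A q.1.2 q.2.1 = α} :
              Set ((Fin n × Fin n) × Fin n × Fin n)).ncard : ℝ)
            ≤ C * (n : ℝ) ^ ((10 : ℝ) / 3) := by
  classical
  refine ⟨8, by norm_num, ?_⟩
  intro n hn A hA α
  set T : Fin n × Fin n → Finset (Fin n × Fin n) := fun p =>
    Finset.univ.filter (fun q : Fin n × Fin n => p.1 < p.2 ∧ q.1 < q.2 ∧
      A p.1 q.1 * A p.2 q.2 - A p.1 q.2 * A p.2 q.1 = α) with hT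
  have hset : ({q : (Fin n × Fin n) × Fin n × Fin n | q.1.1 < q.1.2 ∧ q.2.1 < q.2.2 ∧
              A q.1.1 q.2.1 * A q.1.2 q.2.2 - A q.1.1 q.2.2 * A q.1.2 q.2.1 = α} :
              Set ((Fin n × Fin n) × Fin n × Fin n)).ncard = ∑ p, (T p).card := by
    rw [Set.ncard_eq_toFinset_card']
    simp only [Set.toFinset_ofPred, hT, Finset.card_filter]
    rw [Fintype.sum_prod_type]
  have hn1 : (1 : ℝ) ≤ n := by exact_mod_cast (by omega : 1 ≤ n)
  have hn0 : (0 : ℝ) < n := by linarith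
  set z : ℝ := (n : ℝ) ^ ((1 : ℝ) / 3) with hz
  have hz1 : 1 ≤ z := Real.one_le_rpow hn1 (by norm_num)
  have hz3 : z ^ 3 = n := by
    rw [hz, ← Real.rpow_natCast, ← Real.rpow_mul hn0.le]
    norm_num
  have hz10 : (n : ℝ) ^ ((10 : ℝ) / 3) = z ^ 10 := by
    rw [hz, ← Real.rpow_natCast, ← Real.rpow_mul hn0.le]
    norm_num
  set r := ⌊z⌋₊ with hr
  have hr1 : (r : ℝ) ≤ z := Nat.floor_le (by linarith)
  have hr2 : z < r + 1 := Nat.lt_floor_add_one z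
  have hbound : ∀ p, ((T p).card : ℝ) ≤ 8 * z ^ 4 := by
    intro p
    by_cases hp : p.1 < p.2
    · have h := RepMinors.two_rows r (A p.1) (A p.2) (hA.1 p.1)
        (fun k l hkl => hA.2 _ _ _ _ hp hkl) α
      have hTp : T p = Finset.univ.filter (fun q : Fin n × Fin n => q.1 < q.2 ∧
          A p.1 q.1 * A p.2 q.2 - A p.1 q.2 * A p.2 q.1 = α) := by
        simp [hT, hp]
      rw [← hTp] at h
      have h' : ((T p).card : ℝ) * (r + 1) ^ 2 ≤ 3 * n * (r + 1) ^ 3 + n ^ 2 + n * (r + 1) ^ 2 := by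
        exact_mod_cast h
      rw [← hz3] at h'
      set w : ℝ := (r : ℝ) + 1 with hw
      have hw0 : 0 < w ^ 2 := by positivity
      have hw2 : w ≤ 2 * z := by linarith
      have hzw : z ^ 2 ≤ w ^ 2 := by gcongr
      refine le_of_mul_le_mul_right (h'.trans ?_) hw0
      have i1 : 3 * z ^ 3 * w ^ 3 ≤ 6 * z ^ 4 * w ^ 2 := by
        have : 3 * z ^ 3 * w ^ 2 * w ≤ 3 * z ^ 3 * w ^ 2 * (2 * z) := by gcongr
        linarith
      have i2 : (z ^ 3) ^ 2 ≤ z ^ 4 * w ^ 2 := by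
        have : z ^ 4 * z ^ 2 ≤ z ^ 4 * w ^ 2 := by gcongr
        linarith
      have i3 : z ^ 3 * w ^ 2 ≤ z ^ 4 * w ^ 2 := by
        have : z ^ 3 ≤ z ^ 4 := pow_le_pow_right₀ hz1 (by norm_num)
        gcongr
      linarith
    · have : T p = ∅ := by simp [hT, hp]
      rw [this]
      simp
      positivity
  rw [hset, hz10]
  push_cast
  calc ∑ p, ((T p).card : ℝ) ≤ ∑ _p : Fin n × Fin n, 8 * z ^ 4 :=
        Finset.sum_le_sum fun p _ => hbound p
    _ = 8 * z ^ 10 := by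
      simp only [Finset.sum_const, Finset.card_univ, Fintype.card_prod, Fintype.card_fin,
        nsmul_eq_mul, Nat.cast_mul, ← hz3]
      ring
end

section
/- Let k ≥ 2 and let a_1, ..., a_k and b_1, ..., b_k be real numbers with 0 < a_1 < a_2 < ... < a_k and b_1 > b_2 > ... > b_k > 0. Let A be the k×k matrix with entries A_{ij} = (b_i + a_j)^(k-1). Then det(A) = (∏_{i=0}^{k-1} binom(k-1, i)) · (∏_{1 ≤ t < l ≤ k} (a_l − a_t)) · (∏_{1 ≤ w < u ≤ k} (b_w − b_u)). -/
theorem prod_pairs_aux (k : ℕ) (f : Fin k → Fin k → ℝ) :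
    (∏ p ∈ Finset.univ.filter (fun p : Fin k × Fin k => p.1 < p.2), f p.1 p.2) =
      ∏ i : Fin k, ∏ j ∈ Finset.Ioi i, f i j := by
  rw [Finset.prod_filter, Fintype.prod_prod_type]
  refine Finset.prod_congr rfl fun i _ => ?_
  rw [← Finset.prod_filter]
  refine Finset.prod_congr ?_ fun _ _ => rfl
  ext j
  simp

theorem det_power_sum_matrix (k : ℕ) (hk : 2 ≤ k) (a b : Fin k → ℝ)
    (ha : StrictMono a) (ha0 : ∀ i, 0 < a i)
    (hb : StrictAnti b) (hb0 : ∀ i, 0 < b i) :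
    (Matrix.of fun i j : Fin k => (b i + a j) ^ (k - 1)).det =
      (∏ i ∈ Finset.range k, ((k - 1).choose i : ℝ)) *
        (∏ p ∈ Finset.univ.filter (fun p : Fin k × Fin k => p.1 < p.2),
          (a p.2 - a p.1)) *
        (∏ p ∈ Finset.univ.filter (fun p : Fin k × Fin k => p.1 < p.2),
          (b p.1 - b p.2)) := by
  have h : (Matrix.of fun i j : Fin k => (b i + a j) ^ (k - 1)) =
      Matrix.projVandermonde 1 b *
        Matrix.diagonal (fun m : Fin k => ((k - 1).choose m : ℝ)) *
        (Matrix.vandermonde a).transpose := by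
    ext i j
    rw [Matrix.mul_apply]
    simp only [Matrix.of_apply, Matrix.mul_diagonal, Matrix.transpose_apply,
      Matrix.vandermonde_apply, Matrix.projVandermonde_apply, Pi.one_apply, one_pow, one_mul,
      Fin.val_rev]
    rw [Fin.sum_univ_eq_sum_range
      (fun m => b i ^ (k - (m + 1)) * ((k - 1).choose m : ℝ) * a j ^ m) k,
      add_comm, add_pow, Nat.sub_add_cancel (by omega)]
    refine Finset.sum_congr rfl fun m _ => ?_
    rw [show k - 1 - m = k - (m + 1) by omega]
    ring
  rw [h, Matrix.det_mul, Matrix.det_mul, Matrix.det_transpose, Matrix.det_diagonal,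
    Matrix.det_vandermonde, Matrix.det_projVandermonde,
    prod_pairs_aux k (fun i j => a j - a i), prod_pairs_aux k (fun i j => b i - b j),
    Fin.prod_univ_eq_prod_range (fun m => ((k - 1).choose m : ℝ)) k]
  simp only [Pi.one_apply, one_mul]
  ring
end

section
/- Let n ≥ 2, let k > 1 be a natural number, and let a_1, ..., a_n and b_1, ..., b_n be real numbers with 0 < a_1 < a_2 < ... < a_n and b_1 > b_2 > ... > b_n > 0. Let A be the n×n matrix with entries A_{ij} = (b_i + a_j)^(k-1). Then every k×k minor of A is positive: for all row indices i_1 < ... < i_k and column indices j_1 < ... < j_k in {1,...,n}, the determinant of the corresponding k×k submatrix of A is positive. -/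
theorem power_sum_matrix_k_minors_positive (n k : ℕ) (hn : 2 ≤ n) (hk : 1 < k)
    (a b : Fin n → ℝ)
    (ha : StrictMono a) (ha0 : ∀ i, 0 < a i)
    (hb : StrictAnti b) (hb0 : ∀ i, 0 < b i)
    (r : Fin k → Fin n) (c : Fin k → Fin n)
    (hr : StrictMono r) (hc : StrictMono c) :
    0 < ((Matrix.of fun i j : Fin n => (b i + a j) ^ (k - 1)).submatrix r c).det := by
  obtain ⟨m, rfl⟩ : ∃ m, k = m + 1 := ⟨k - 1, by omega⟩
  have key : (Matrix.of fun i j : Fin n => (b i + a j) ^ (m + 1 - 1)).submatrix r c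
      = Matrix.projVandermonde (fun _ => (1 : ℝ)) (b ∘ r)
        * Matrix.diagonal (fun l : Fin (m + 1) => ((m.choose l : ℕ) : ℝ))
        * (Matrix.vandermonde (a ∘ c)).transpose := by
    ext i j
    rw [Matrix.mul_apply]
    simp only [Matrix.submatrix_apply, Matrix.of_apply, Matrix.mul_diagonal,
      Matrix.projVandermonde_apply, Matrix.transpose_apply, Matrix.vandermonde_apply,
      Function.comp_apply, one_pow, one_mul, Nat.add_sub_cancel]
    rw [add_comm (b (r i)), add_pow, Finset.sum_range]
    refine Finset.sum_congr rfl fun l _ => ?_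
    rw [Fin.val_rev, Nat.add_sub_add_right]
    ring
  rw [key, Matrix.det_mul, Matrix.det_mul, Matrix.det_transpose, Matrix.det_diagonal,
    Matrix.det_projVandermonde, Matrix.det_vandermonde]
  refine mul_pos (mul_pos ?_ ?_) ?_
  · refine Finset.prod_pos fun i _ => Finset.prod_pos fun j hj => ?_
    have := hb (hr (Finset.mem_Ioi.mp hj))
    simp only [Function.comp_apply]
    linarith
  · refine Finset.prod_pos fun l _ => ?_
    exact_mod_cast Nat.choose_pos (Nat.lt_succ_iff.mp l.2)
  · refine Finset.prod_pos fun i _ => Finset.prod_pos fun j hj => ?_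
    have := ha (hc (Finset.mem_Ioi.mp hj))
    simp only [Function.comp_apply]
    linarith
end

section
/- There exists a constant c > 0 such that for all sufficiently large n the following holds: let A be the n×n matrix with entries A_{ij} = i + j for 1 ≤ i, j ≤ n. Then there exists a real value v such that the number of quadruples (i, j, k, l) with 1 ≤ i < j ≤ n and 1 ≤ k < l ≤ n for which the 2×2 minor of A on rows i, j and columns k, l equals v is at least n^(2 + c/(log log n)). -/
/-- Squarefree-type lower bound for the number of divisors. -/
lemma two_pow_card_le_card_divisors (m : ℕ) (hm : m ≠ 0) :
    2 ^ m.primeFactors.card ≤ m.divisors.card := by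
  rw [Nat.card_divisors hm]
  calc 2 ^ m.primeFactors.card = ∏ _p ∈ m.primeFactors, 2 := by simp
    _ ≤ _ := by
      apply Finset.prod_le_prod' 
      intro p hp
      have : m.factorization p ≠ 0 := by
        rw [← Nat.support_factorization] at hp
        exact Finsupp.mem_support_iff.mp hp
      omega

/-- The combinatorial count: every divisor of `m ≤ n / 2` gives about `n² / 4` minors. -/
lemma count_lower (n m : ℕ) (hm : m ≠ 0) (hmn : m ≤ n / 2) :
    m.divisors.card * ((n - n / 2) * (n - n / 2)) ≤
      ({q : ℕ × ℕ × ℕ × ℕ | 1 ≤ q.1 ∧ q.1 < q.2.1 ∧ q.2.1 ≤ n ∧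
              1 ≤ q.2.2.1 ∧ q.2.2.1 < q.2.2.2 ∧ q.2.2.2 ≤ n ∧
              ((q.1 + q.2.2.1 : ℝ) * (q.2.1 + q.2.2.2) -
                (q.1 + q.2.2.2 : ℝ) * (q.2.1 + q.2.2.1) = -(m : ℝ))} :
              Set (ℕ × ℕ × ℕ × ℕ)).ncard := by
  set S := {q : ℕ × ℕ × ℕ × ℕ | 1 ≤ q.1 ∧ q.1 < q.2.1 ∧ q.2.1 ≤ n ∧
              1 ≤ q.2.2.1 ∧ q.2.2.1 < q.2.2.2 ∧ q.2.2.2 ≤ n ∧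
              ((q.1 + q.2.2.1 : ℝ) * (q.2.1 + q.2.2.2) -
                (q.1 + q.2.2.2 : ℝ) * (q.2.1 + q.2.2.1) = -(m : ℝ))} with hS
  have hfin : S.Finite := by
    apply Set.Finite.subset (Finset.finite_toSet
      (Finset.range (n+1) ×ˢ Finset.range (n+1) ×ˢ Finset.range (n+1) ×ˢ Finset.range (n+1)))
    rintro ⟨i, j, k, l⟩ h
    simp only [hS, Set.mem_setOf_eq] at h
    simp only [Finset.mem_coe, Finset.mem_product, Finset.mem_range]
    omega
  set T := m.divisors ×ˢ (Finset.Icc 1 (n - n / 2) ×ˢ Finset.Icc 1 (n - n / 2)) with hT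
  let f : ℕ × ℕ × ℕ → ℕ × ℕ × ℕ × ℕ := fun t => (t.2.1, t.2.1 + t.1, t.2.2, t.2.2 + m / t.1)
  have hf : Function.Injective f := by
    rintro ⟨d, a, b⟩ ⟨d', a', b'⟩ h
    simp only [f, Prod.mk.injEq] at h ⊢
    omega
  have hcard : T.card = m.divisors.card * ((n - n / 2) * (n - n / 2)) := by
    simp [hT]
  rw [← hcard, ← Finset.card_image_of_injective T hf, ← Set.ncard_coe_finset]
  apply Set.ncard_le_ncard _ hfin
  intro q hq
  rw [Finset.mem_coe, Finset.mem_image] at hq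
  obtain ⟨⟨d, a, b⟩, ht, rfl⟩ := hq
  simp only [hT, Finset.mem_product, Nat.mem_divisors, Finset.mem_Icc] at ht
  obtain ⟨⟨⟨e, rfl⟩, -⟩, ha, hb⟩ := ht
  have hd : 0 < d := Nat.pos_of_ne_zero (by rintro rfl; simp at hm)
  have he : 0 < e := Nat.pos_of_ne_zero (by rintro rfl; simp at hm)
  have h1 : d ≤ d * e := Nat.le_mul_of_pos_right _ he
  have h2 : e ≤ d * e := Nat.le_mul_of_pos_left _ hd
  simp only [hS, f, Set.mem_setOf_eq, Nat.mul_div_cancel_left e hd]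
  refine ⟨by omega, by omega, by omega, by omega, by omega, by omega, ?_⟩
  push_cast
  ring

open Filter Real in
lemma analytic_facts : ∀ᶠ L : ℝ in atTop, 8 ≤ L ∧ 1 ≤ log L ∧ 128 * log L ≤ L ∧
    (⌊L / 4⌋₊ : ℝ) / 2 ≤ Chebyshev.psi (⌊L / 4⌋₊ : ℝ) := by
  have hlog : ∀ c : ℝ, 0 < c → ∀ᶠ x : ℝ in atTop, log x ≤ c * x := by
    intro c hc
    filter_upwards [isLittleO_log_id_atTop.bound hc, eventually_ge_atTop 0] with x hx h0
    simp only [norm_eq_abs, id, abs_of_nonneg h0] at hx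
    exact (le_abs_self _).trans hx
  have h1 : ∀ᶠ y : ℕ in atTop, (y : ℝ) / 2 ≤ Chebyshev.psi (y : ℝ) := by
    have ht : Tendsto (fun y : ℕ => (y : ℝ) + 1) atTop atTop :=
      tendsto_atTop_add_const_right _ _ tendsto_natCast_atTop_atTop
    filter_upwards [ht.eventually (hlog (1/20) (by norm_num)), eventually_ge_atTop 1] with y hy h1
    have := Chebyshev.psi_ge y
    have h2 := log_two_gt_d9
    have h1' : (1 : ℝ) ≤ y := by exact_mod_cast h1
    nlinarith
  have hfl : Tendsto (fun L : ℝ => ⌊L / 4⌋₊) atTop atTop :=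
    tendsto_nat_floor_atTop.comp (tendsto_id.atTop_div_const (by norm_num))
  filter_upwards [eventually_ge_atTop 8, tendsto_log_atTop.eventually_ge_atTop 1,
    hlog (1/128) (by norm_num), hfl.eventually h1] with L h8 h1 h2 h3
  exact ⟨h8, h1, by linarith, h3⟩

open Filter Real in
theorem grid_matrix_repeated_minors_lower_bound :
    ∃ c : ℝ, 0 < c ∧ ∃ N : ℕ, ∀ n : ℕ, N ≤ n →
      ∃ v : ℝ,
        (n : ℝ) ^ (2 + c / Real.log (Real.log n)) ≤
          (({q : ℕ × ℕ × ℕ × ℕ | 1 ≤ q.1 ∧ q.1 < q.2.1 ∧ q.2.1 ≤ n ∧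
              1 ≤ q.2.2.1 ∧ q.2.2.1 < q.2.2.2 ∧ q.2.2.2 ≤ n ∧
              ((q.1 + q.2.2.1 : ℝ) * (q.2.1 + q.2.2.2) -
                (q.1 + q.2.2.2 : ℝ) * (q.2.1 + q.2.2.1) = v)} :
              Set (ℕ × ℕ × ℕ × ℕ)).ncard : ℝ) := by
  refine ⟨1 / 64, by norm_num, ?_⟩
  have htend : Tendsto (fun n : ℕ => log (n : ℝ)) atTop atTop :=
    tendsto_log_atTop.comp tendsto_natCast_atTop_atTop
  obtain ⟨N, hN⟩ := eventually_atTop.mp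
    ((htend.eventually analytic_facts).and (eventually_ge_atTop 16))
  refine ⟨N, fun n hn => ?_⟩
  obtain ⟨⟨hL8, hLL1, hLL, hpsi⟩, hn16⟩ := hN n hn
  have hn16' : (16 : ℝ) ≤ n := by exact_mod_cast hn16
  have hn0 : (0 : ℝ) < n := by linarith
  set L := log (n : ℝ) with hLdef
  set LL := log L with hLLdef
  set y := ⌊L / 4⌋₊ with hy
  have hyle : (y : ℝ) ≤ L / 4 := Nat.floor_le (by linarith)
  have hyge : L / 8 ≤ (y : ℝ) := by
    have := Nat.lt_floor_add_one (L / 4)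
    rw [← hy] at this
    linarith
  have hl2 := log_two_gt_d9
  have hl2' := log_two_lt_d9
  have hl4 : log 4 = 2 * log 2 := by
    rw [show (4 : ℝ) = 2 ^ 2 by norm_num, log_pow]; norm_num
  set m := primorial y with hm
  have hm0 : m ≠ 0 := primorial_ne_zero y
  have hm_sq : m * m ≤ n := by
    have h1 : ((4 : ℝ) ^ y) * (4 ^ y) ≤ n := by
      rw [← pow_add, ← exp_log hn0, ← exp_log (show (0 : ℝ) < 4 ^ (y + y) by positivity), exp_le_exp,
        log_pow, hl4]
      push_cast
      nlinarith
    have h2 : m ≤ 4 ^ y := primorial_le_four_pow y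
    have h3 : 4 ^ y * 4 ^ y ≤ n := by exact_mod_cast h1
    exact (Nat.mul_le_mul h2 h2).trans h3
  have hmn : m ≤ n / 2 := by
    rw [Nat.le_div_iff_mul_le (by norm_num)]
    by_cases h : 2 ≤ m
    · nlinarith
    · omega
  refine ⟨-(m : ℝ), ?_⟩
  have hcount := count_lower n m hm0 hmn
  have hdiv := two_pow_card_le_card_divisors m hm0
  rw [hm, primeFactors_primorial, Nat.primesLE_card_eq_primeCounting, ← hm] at hdiv
  refine le_trans ?_ (Nat.cast_le.mpr hcount)
  have hpi : L / (16 * LL) ≤ (Nat.primeCounting y : ℝ) := by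
    have h1 := Chebyshev.psi_le_primeCounting_mul_log y
    have h2 : log (y : ℝ) ≤ LL := log_le_log (by linarith) (by linarith)
    have h3 : (Nat.primeCounting y : ℝ) * log y ≤ Nat.primeCounting y * LL := by gcongr
    rw [div_le_iff₀ (by positivity)]
    nlinarith
  have hhalf : (n : ℝ) / 2 ≤ ((n - n / 2 : ℕ) : ℝ) := by
    have : n ≤ 2 * (n - n / 2) := by omega
    have : (n : ℝ) ≤ 2 * ((n - n / 2 : ℕ) : ℝ) := by exact_mod_cast this
    linarith
  have hdiv' : (4 : ℝ) * exp (L / LL / 64) ≤ (m.divisors.card : ℝ) := by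
    have h1 : (2 : ℝ) ^ (Nat.primeCounting y) ≤ (m.divisors.card : ℝ) := by exact_mod_cast hdiv
    refine le_trans ?_ h1
    rw [← exp_log (show (0 : ℝ) < 2 ^ (Nat.primeCounting y) by positivity), log_pow,
      ← exp_log (show (0 : ℝ) < 4 by norm_num), ← exp_add, exp_le_exp, hl4]
    have h2 : 128 ≤ L / LL := by rw [le_div_iff₀ (by linarith)]; exact hLL
    have h3 : L / (16 * LL) = L / LL / 16 := by field_simp
    rw [h3] at hpi
    nlinarith
  push_cast
  have hpow : (n : ℝ) ^ (2 + 1 / 64 / LL) = (n : ℝ) ^ 2 * exp (L / LL / 64) := by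
    rw [rpow_add hn0, rpow_two, rpow_def_of_pos hn0]
    congr 2
    rw [← hLdef]
    ring
  rw [hpow]
  calc (n : ℝ) ^ 2 * exp (L / LL / 64) = (4 * exp (L / LL / 64)) * ((n / 2) * (n / 2)) := by ring
    _ ≤ _ := by gcongr
end

section
/- There exists a constant C > 0 such that for every n ≥ 1 and all finite sets A, B of real numbers with |A| = |B| = n, the number of quadruples (a, c, b, d) with a, c ∈ A, a < c, b, d ∈ B, b < d, and (c − a)(d − b) = 1 is at most C·n^(8/3). -/
/-- Rank of `x` in `A`. -/
noncomputable def gridRank (A : Finset ℝ) (x : ℝ) : ℕ := (A.filter (fun y => y < x)).card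

lemma gridRank_mono (A : Finset ℝ) {x y : ℝ} (h : x ≤ y) : gridRank A x ≤ gridRank A y := by
  apply Finset.card_le_card
  intro z hz
  simp only [Finset.mem_filter] at hz ⊢
  exact ⟨hz.1, lt_of_lt_of_le hz.2 h⟩

lemma gridRank_lt (A : Finset ℝ) {x y : ℝ} (hx : x ∈ A) (h : x < y) :
    gridRank A x < gridRank A y := by
  apply Finset.card_lt_card
  rw [Finset.ssubset_iff_of_subset]
  · exact ⟨x, by simp [hx, h], by simp⟩
  · intro z hz
    simp only [Finset.mem_filter] at hz ⊢
    exact ⟨hz.1, lt_trans hz.2 h⟩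

lemma gridRank_inj (A : Finset ℝ) {x y : ℝ} (hx : x ∈ A) (hy : y ∈ A)
    (h : gridRank A x = gridRank A y) : x = y := by
  rcases lt_trichotomy x y with h1 | h1 | h1
  · have := gridRank_lt A hx h1
    omega
  · exact h1
  · have := gridRank_lt A hy h1
    omega

lemma gridRank_le (A : Finset ℝ) (x : ℝ) : gridRank A x ≤ A.card :=
  Finset.card_filter_le _ _

/-- Pairs in the same block. -/
noncomputable def blockPairs (A : Finset ℝ) (k : ℕ) : Finset (ℝ × ℝ) :=
  (A ×ˢ A).filter (fun p => gridRank A p.1 / k = gridRank A p.2 / k)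

lemma blockPairs_card (A : Finset ℝ) (k : ℕ) (hk : 0 < k) :
    (blockPairs A k).card ≤ A.card * k := by
  have : (blockPairs A k).card ≤ (A ×ˢ Finset.range k).card := by
    apply Finset.card_le_card_of_injOn (fun p => (p.1, gridRank A p.2 % k))
    · intro p hp
      simp only [blockPairs, Finset.coe_filter, Finset.mem_product, Set.mem_ofPred_eq] at hp
      simp [hp.1.1, Nat.mod_lt _ hk]
    · rintro ⟨x, y⟩ hp ⟨x', y'⟩ hp' h
      simp only [blockPairs, Finset.coe_filter, Finset.mem_product, Set.mem_ofPred_eq,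
        Prod.mk.injEq] at hp hp' h ⊢
      obtain ⟨rfl, h2⟩ := h
      refine ⟨rfl, gridRank_inj A hp.1.2 hp'.1.2 ?_⟩
      rw [← Nat.div_add_mod (gridRank A y) k, ← Nat.div_add_mod (gridRank A y') k, h2,
        ← hp.2, ← hp'.2]
  simpa using this

lemma hyp_anti {a b c d c' d' : ℝ} (h1 : a < c) (h2 : b < d)
    (h : (c - a) * (d - b) = 1) (h' : (c' - a) * (d' - b) = 1)
    (hc : c < c') : d' < d := by
  by_contra hd
  push Not at hd
  nlinarith [mul_pos (sub_pos.2 hc) (sub_pos.2 h2),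
    mul_nonneg (sub_nonneg.2 hd) (sub_pos.2 (h1.trans hc)).le]

lemma hyp_unique_aux {a b c d c' d' α β : ℝ} (h1 : a < c) (h3 : α < c)
    (h : (c - a) * (d - b) = 1) (h' : (c' - a) * (d' - b) = 1)
    (g : (c - α) * (d - β) = 1) (g' : (c' - α) * (d' - β) = 1)
    (hc : c < c') : a = α ∧ b = β := by
  have e1 : (β - b) * ((c - a) * (c - α)) = a - α := by
    linear_combination (c - α) * h - (c - a) * g
  have e2 : (β - b) * ((c' - a) * (c' - α)) = a - α := by
    linear_combination (c' - α) * h' - (c' - a) * g'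
  have e3 : (β - b) * ((c' - a) * (c' - α) - (c - a) * (c - α)) = 0 := by linarith
  have e4 : 0 < (c' - a) * (c' - α) - (c - a) * (c - α) := by
    nlinarith [mul_pos (sub_pos.2 hc) (sub_pos.2 h1), mul_pos (sub_pos.2 hc) (sub_pos.2 h3),
      mul_pos (sub_pos.2 hc) (sub_pos.2 hc)]
  have e5 : β - b = 0 := by
    rcases mul_eq_zero.1 e3 with h | h
    · exact h
    · exact absurd h e4.ne'
  rw [e5] at e1
  constructor <;> linarith

lemma hyp_unique {a b c d c' d' α β : ℝ} (h1 : a < c) (h2 : a < c') (h3 : α < c) (h4 : α < c')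
    (h : (c - a) * (d - b) = 1) (h' : (c' - a) * (d' - b) = 1)
    (g : (c - α) * (d - β) = 1) (g' : (c' - α) * (d' - β) = 1)
    (hne : ¬ (c = c' ∧ d = d')) : a = α ∧ b = β := by
  rcases lt_trichotomy c c' with hc | hc | hc
  · exact hyp_unique_aux h1 h3 h h' g g' hc
  · subst hc
    exfalso
    apply hne
    refine ⟨rfl, ?_⟩
    have : (c - a) * (d - b) = (c - a) * (d' - b) := by rw [h, h']
    have := mul_left_cancel₀ (sub_pos.2 h1).ne' this
    linarith
  · exact hyp_unique_aux h2 h4 h' h g' g hc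

/-- The finset of quadruples. -/
noncomputable def quads (A B : Finset ℝ) : Finset (ℝ × ℝ × ℝ × ℝ) :=
  (A ×ˢ A ×ˢ B ×ˢ B).filter (fun q => q.1 < q.2.1 ∧ q.2.2.1 < q.2.2.2 ∧
            (q.2.1 - q.1) * (q.2.2.2 - q.2.2.1) = 1)

lemma mem_quads {A B : Finset ℝ} {a c b d : ℝ} : (a, c, b, d) ∈ quads A B ↔
    (a ∈ A ∧ c ∈ A ∧ b ∈ B ∧ d ∈ B) ∧ a < c ∧ b < d ∧ (c - a) * (d - b) = 1 := by
  simp [quads]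

/-- Cell key of a quadruple. -/
noncomputable def cellKey (A B : Finset ℝ) (k R : ℕ) (q : ℝ × ℝ × ℝ × ℝ) : ℝ × ℝ × ℕ :=
  (q.1, q.2.2.1, gridRank A q.2.1 / k + (R - gridRank B q.2.2.2 / k))

lemma cellKey_eq {A B : Finset ℝ} {k n : ℕ} (hB : B.card = n)
    {a c b d a' c' b' d' : ℝ} (hq : (a, c, b, d) ∈ quads A B) (hq' : (a', c', b', d') ∈ quads A B)
    (h : cellKey A B k (n / k) (a, c, b, d) = cellKey A B k (n / k) (a', c', b', d')) :
    a = a' ∧ b = b' ∧ gridRank A c / k = gridRank A c' / k ∧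
      gridRank B d / k = gridRank B d' / k := by
  simp only [cellKey, Prod.mk.injEq] at h
  obtain ⟨rfl, rfl, h⟩ := h
  rw [mem_quads] at hq hq'
  obtain ⟨-, h1, h2, h3⟩ := hq
  obtain ⟨-, h1', h2', h3'⟩ := hq'
  have b1 : gridRank B d / k ≤ n / k := Nat.div_le_div_right (hB ▸ gridRank_le B d)
  have b2 : gridRank B d' / k ≤ n / k := Nat.div_le_div_right (hB ▸ gridRank_le B d')
  refine ⟨rfl, rfl, ?_⟩
  rcases lt_trichotomy c c' with hc | hc | hc
  · have hd := hyp_anti h1 h2 h3 h3' hc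
    have m1 : gridRank A c / k ≤ gridRank A c' / k := Nat.div_le_div_right (gridRank_mono A hc.le)
    have m2 : gridRank B d' / k ≤ gridRank B d / k := Nat.div_le_div_right (gridRank_mono B hd.le)
    omega
  · subst hc
    omega
  · have hd := hyp_anti h1' h2' h3' h3 hc
    have m1 : gridRank A c' / k ≤ gridRank A c / k := Nat.div_le_div_right (gridRank_mono A hc.le)
    have m2 : gridRank B d / k ≤ gridRank B d' / k := Nat.div_le_div_right (gridRank_mono B hd.le)
    omega

lemma quads_card (A B : Finset ℝ) (n k : ℕ) (hk : 0 < k) (hA : A.card = n) (hB : B.card = n) :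
    (quads A B).card ≤ n * (n * (2 * (n / k) + 1)) + (n * k) * (n * k) := by
  classical
  set key := cellKey A B k (n / k) with hkey
  let rep : ℝ × ℝ × ℝ × ℝ → ℝ × ℝ × ℝ × ℝ :=
    fun q => Function.invFunOn key (quads A B : Set _) (key q)
  have rep_mem : ∀ q ∈ quads A B, rep q ∈ quads A B := fun q hq =>
    Function.invFunOn_mem (s := (quads A B : Set _)) ⟨q, hq, rfl⟩
  have rep_key : ∀ q ∈ quads A B, key (rep q) = key q := fun q hq =>
    Function.invFunOn_eq (s := (quads A B : Set _)) ⟨q, hq, rfl⟩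
  rw [← Finset.card_filter_add_card_filter_not (s := quads A B) (fun q => rep q = q)]
  apply add_le_add
  · have : ((quads A B).filter (fun q => rep q = q)).card ≤
        (A ×ˢ B ×ˢ Finset.range (2 * (n / k) + 1)).card := by
      apply Finset.card_le_card_of_injOn key
      · rintro ⟨a, c, b, d⟩ hq
        simp only [Finset.coe_filter, Set.mem_ofPred_eq, mem_quads] at hq
        have b1 : gridRank A c / k ≤ n / k := Nat.div_le_div_right (hA ▸ gridRank_le A c)
        simp only [hkey, cellKey, Finset.coe_product, Set.mem_prod, Finset.mem_coe,
          Finset.mem_range]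
        exact ⟨hq.1.1.1, hq.1.1.2.2.1, by
          have := Nat.sub_le (n / k) (gridRank B d / k)
          linarith⟩
      · intro q hq q' hq' h
        simp only [Finset.coe_filter, Set.mem_ofPred_eq] at hq hq'
        rw [← hq.2, ← hq'.2]
        simp only [rep, h]
    simpa [hA, hB] using this
  · have : ((quads A B).filter (fun q => ¬ rep q = q)).card ≤
        (blockPairs A k ×ˢ blockPairs B k).card := by
      apply Finset.card_le_card_of_injOn
        (fun q => ((q.2.1, (rep q).2.1), (q.2.2.2, (rep q).2.2.2)))
      · rintro ⟨a, c, b, d⟩ hq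
        simp only [Finset.coe_filter, Set.mem_ofPred_eq] at hq
        have m := rep_mem _ hq.1
        have e := rep_key _ hq.1
        rcases hr : rep (a, c, b, d) with ⟨a', c', b', d'⟩
        rw [hr] at m e
        have := cellKey_eq hB m hq.1 e
        have hq1 := mem_quads.1 hq.1
        have m1 := mem_quads.1 m
        simp only [hr, blockPairs, Finset.coe_product, Set.mem_prod, Finset.mem_coe,
          Finset.mem_filter, Finset.mem_product]
        exact ⟨⟨⟨hq1.1.2.1, m1.1.2.1⟩, this.2.2.1.symm⟩, ⟨⟨hq1.1.2.2.2, m1.1.2.2.2⟩,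
          this.2.2.2.symm⟩⟩
      · rintro ⟨a, c, b, d⟩ hq ⟨α, γ, β, δ⟩ hp h
        simp only [Finset.coe_filter, Set.mem_ofPred_eq] at hq hp
        have m := rep_mem _ hq.1
        have e := rep_key _ hq.1
        have m2 := rep_mem _ hp.1
        have e2 := rep_key _ hp.1
        rcases hr : rep (a, c, b, d) with ⟨a', c', b', d'⟩
        rcases hs : rep (α, γ, β, δ) with ⟨α', γ', β', δ'⟩
        have hq2 := hq.2
        rw [hr] at m e hq2
        rw [hs] at m2 e2
        obtain ⟨rfl, rfl, -⟩ := cellKey_eq hB m hq.1 e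
        obtain ⟨rfl, rfl, -⟩ := cellKey_eq hB m2 hp.1 e2
        simp only [hr, hs, Prod.mk.injEq] at h
        obtain ⟨⟨rfl, rfl⟩, rfl, rfl⟩ := h
        obtain ⟨-, x1, x2, x3⟩ := mem_quads.1 hq.1
        obtain ⟨-, y1, y2, y3⟩ := mem_quads.1 hp.1
        obtain ⟨-, z1, z2, z3⟩ := mem_quads.1 m
        obtain ⟨-, w1, w2, w3⟩ := mem_quads.1 m2
        obtain ⟨rfl, rfl⟩ := hyp_unique x1 z1 y1 w1 x3 z3 y3 w3 (by
          rintro ⟨rfl, rfl⟩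
          exact hq2 rfl)
        rfl
    rw [Finset.card_product] at this
    refine this.trans (Nat.mul_le_mul ?_ ?_)
    · simpa [hA] using blockPairs_card A k hk
    · simpa [hB] using blockPairs_card B k hk

theorem unit_area_rectangles_in_grid_upper_bound :
    ∃ C : ℝ, 0 < C ∧ ∀ (n : ℕ), 1 ≤ n →
      ∀ A B : Finset ℝ, A.card = n → B.card = n →
        (({q : ℝ × ℝ × ℝ × ℝ | q.1 ∈ A ∧ q.2.1 ∈ A ∧ q.2.2.1 ∈ B ∧ q.2.2.2 ∈ B ∧
            q.1 < q.2.1 ∧ q.2.2.1 < q.2.2.2 ∧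
            (q.2.1 - q.1) * (q.2.2.2 - q.2.2.1) = 1} :
            Set (ℝ × ℝ × ℝ × ℝ)).ncard : ℝ)
          ≤ C * (n : ℝ) ^ ((8 : ℝ) / 3) := by
  refine ⟨7, by norm_num, ?_⟩
  intro n hn A B hA hB
  have hS : ({q : ℝ × ℝ × ℝ × ℝ | q.1 ∈ A ∧ q.2.1 ∈ A ∧ q.2.2.1 ∈ B ∧ q.2.2.2 ∈ B ∧
            q.1 < q.2.1 ∧ q.2.2.1 < q.2.2.2 ∧
            (q.2.1 - q.1) * (q.2.2.2 - q.2.2.1) = 1} :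
            Set (ℝ × ℝ × ℝ × ℝ)) = (quads A B : Set _) := by
    ext ⟨a, c, b, d⟩
    rw [Finset.mem_coe, mem_quads]
    simp only [Set.mem_ofPred_eq]
    tauto
  rw [hS, Set.ncard_coe_finset]
  have hn1 : (1 : ℝ) ≤ n := by exact_mod_cast hn
  have hn0 : (0 : ℝ) ≤ n := by linarith
  set t : ℝ := (n : ℝ) ^ ((1 : ℝ) / 3) with ht
  have ht1 : 1 ≤ t := Real.one_le_rpow hn1 (by norm_num)
  have ht3 : t ^ 3 = n := by
    rw [ht, ← Real.rpow_natCast, ← Real.rpow_mul hn0]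
    norm_num
  have ht8 : (n : ℝ) ^ ((8 : ℝ) / 3) = t ^ 8 := by
    rw [ht, ← Real.rpow_natCast, ← Real.rpow_mul hn0]
    norm_num
  have hk : 0 < ⌈t⌉₊ := Nat.ceil_pos.2 (by linarith)
  have key := quads_card A B n ⌈t⌉₊ hk hA hB
  have key' : ((quads A B).card : ℝ) ≤ n * (n * (2 * ((n / ⌈t⌉₊ : ℕ) : ℝ) + 1)) +
      (n * (⌈t⌉₊ : ℝ)) * (n * (⌈t⌉₊ : ℝ)) := by exact_mod_cast key
  have k1 : t ≤ (⌈t⌉₊ : ℝ) := Nat.le_ceil t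
  have k2 : (⌈t⌉₊ : ℝ) ≤ 2 * t := by
    have := Nat.ceil_lt_add_one (show 0 ≤ t by linarith)
    linarith
  have k3 : ((n / ⌈t⌉₊ : ℕ) : ℝ) ≤ t ^ 2 := by
    refine Nat.cast_div_le.trans ?_
    rw [div_le_iff₀ (by linarith), ← ht3]
    nlinarith [sq_nonneg t]
  have k4 : (1 : ℝ) ≤ t ^ 2 := one_le_pow₀ ht1
  rw [ht8]
  calc ((quads A B).card : ℝ) ≤ n * (n * (2 * ((n / ⌈t⌉₊ : ℕ) : ℝ) + 1)) +
      (n * (⌈t⌉₊ : ℝ)) * (n * (⌈t⌉₊ : ℝ)) := key'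
    _ ≤ n * (n * (2 * t ^ 2 + t ^ 2)) + (n * (2 * t)) * (n * (2 * t)) := by gcongr
    _ = 7 * t ^ 8 := by rw [← ht3]; ring
end

section
/- There exists a constant C > 0 such that for every n ≥ 1 and every set P of n points in the plane ℝ², the number of ordered pairs (p, q) of points of P with p₁ < q₁, p₂ < q₂, and (q₁ − p₁)(q₂ − p₂) = 1 is at most C·n^(4/3). -/
namespace UnitRect

open Finset

/-- An arc: `(a, u, v)` is the arc from `u` to `v` of the hyperbola branch based at `a`. -/
abbrev Arc := (ℝ × ℝ) × (ℝ × ℝ) × (ℝ × ℝ)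

noncomputable def hyp (a : ℝ × ℝ) (x : ℝ) : ℝ := a.2 + 1 / (x - a.1)

def On (a q : ℝ × ℝ) : Prop := a.1 < q.1 ∧ q.2 = hyp a q.1

def IsArc (e : Arc) : Prop := On e.1 e.2.1 ∧ On e.1 e.2.2 ∧ e.2.1.1 < e.2.2.1

/-- Two arcs cross: the order changes strictly over the common range. -/
def Cross (e f : Arc) : Prop := ∃ x y, e.2.1.1 ≤ x ∧ f.2.1.1 ≤ x ∧ e.2.1.1 ≤ y ∧ f.2.1.1 ≤ y ∧
  x ≤ e.2.2.1 ∧ x ≤ f.2.2.1 ∧ y ≤ e.2.2.1 ∧ y ≤ f.2.2.1 ∧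
  hyp e.1 x < hyp f.1 x ∧ hyp f.1 y < hyp e.1 y

lemma hyp_mono {a b : ℝ × ℝ} {x y : ℝ} (hab : a.1 ≤ b.1) (hx : b.1 < x) (hxy : x ≤ y) :
    hyp a x - hyp b x ≤ hyp a y - hyp b y := by
  unfold hyp
  have h1 : 0 < x - b.1 := by linarith
  have h2 : 0 < y - b.1 := by linarith
  have h3 : 0 < x - a.1 := by linarith
  have h4 : 0 < y - a.1 := by linarith
  have e1 : 1 / (x - b.1) - 1 / (y - b.1) = (y - x) / ((x - b.1) * (y - b.1)) := by
    field_simp; ring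
  have e2 : 1 / (x - a.1) - 1 / (y - a.1) = (y - x) / ((x - a.1) * (y - a.1)) := by
    field_simp; ring
  have : (y - x) / ((x - a.1) * (y - a.1)) ≤ (y - x) / ((x - b.1) * (y - b.1)) := by
    apply div_le_div_of_nonneg_left (by linarith) (by positivity)
    apply mul_le_mul <;> linarith
  linarith

lemma hyp_smono {a b : ℝ × ℝ} {x y : ℝ} (hab : a.1 < b.1) (hx : b.1 < x) (hxy : x < y) :
    hyp a x - hyp b x < hyp a y - hyp b y := by
  unfold hyp
  have h1 : 0 < x - b.1 := by linarith
  have h2 : 0 < y - b.1 := by linarith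
  have h3 : 0 < x - a.1 := by linarith
  have h4 : 0 < y - a.1 := by linarith
  have e1 : 1 / (x - b.1) - 1 / (y - b.1) = (y - x) / ((x - b.1) * (y - b.1)) := by
    field_simp; ring
  have e2 : 1 / (x - a.1) - 1 / (y - a.1) = (y - x) / ((x - a.1) * (y - a.1)) := by
    field_simp; ring
  have : (y - x) / ((x - a.1) * (y - a.1)) < (y - x) / ((x - b.1) * (y - b.1)) := by
    apply div_lt_div_of_pos_left (by linarith) (by positivity)
    apply mul_lt_mul <;> linarith
  linarith

/-- The difference of two branches is monotone, in one direction or the other. -/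
lemma hyp_dich (a b : ℝ × ℝ) :
    (∀ x y, a.1 < x → b.1 < x → x ≤ y → hyp a x - hyp b x ≤ hyp a y - hyp b y) ∨
    (∀ x y, a.1 < x → b.1 < x → x ≤ y → hyp a y - hyp b y ≤ hyp a x - hyp b x) := by
  rcases le_total a.1 b.1 with h | h
  · exact Or.inl fun x y _ hb hxy => hyp_mono h hb hxy
  · refine Or.inr fun x y ha _ hxy => ?_
    have := hyp_mono h ha hxy
    linarith

section planar

variable (S : Finset (ℝ × ℝ)) (F : Finset Arc)

def Wedge (e f : Arc) : Prop := e ∈ F ∧ f ∈ F ∧ e.2.1 = f.2.1 ∧ f.1.1 < e.1.1 ∧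
  ∀ g ∈ F, g.2.1 = f.2.1 → g.1.1 ≤ f.1.1 ∨ e.1.1 ≤ g.1.1

def InW (e f : Arc) (w : ℝ × ℝ) : Prop := f.2.1.1 < w.1 ∧ w.1 ≤ e.2.2.1 ∧ w.1 ≤ f.2.2.1 ∧
  hyp e.1 w.1 ≤ w.2 ∧ w.2 ≤ hyp f.1 w.1

def First (e f : Arc) (w : ℝ × ℝ) : Prop := w ∈ S ∧ InW e f w ∧ ∀ z ∈ S, InW e f z → w.1 ≤ z.1

def Typ (t : Fin 3) (e f : Arc) (w : ℝ × ℝ) : Prop :=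
  (t = 0 ∧ w.2 < hyp f.1 w.1) ∨ (t = 1 ∧ hyp e.1 w.1 < w.2)

variable {S F}

/-- Two arcs out of the same vertex: smaller base abscissa means higher. -/
lemma fan {a b u : ℝ × ℝ} {x : ℝ} (ha : On a u) (hb : On b u) (hab : a.1 ≤ b.1) (hx : u.1 ≤ x) :
    hyp b x ≤ hyp a x := by
  have := hyp_mono hab hb.1 hx
  have h1 := ha.2
  have h2 := hb.2
  linarith

lemma fan_lt {a b u : ℝ × ℝ} {x : ℝ} (ha : On a u) (hb : On b u) (hab : a.1 < b.1) (hx : u.1 < x) :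
    hyp b x < hyp a x := by
  have := hyp_smono hab hb.1 hx
  have h1 := ha.2
  have h2 := hb.2
  linarith

lemma base_eq {a b u : ℝ × ℝ} (ha : On a u) (hb : On b u) (hab : a.1 = b.1) : a = b := by
  have h1 := ha.2
  have h2 := hb.2
  unfold hyp at h1 h2
  rw [hab] at h1
  exact Prod.ext hab (by linarith)

lemma first_exists (hF : ∀ e ∈ F, e.2.1 ∈ S ∧ e.2.2 ∈ S ∧ IsArc e) {e f : Arc}
    (hw : Wedge F e f) : ∃ w, First S e f w := by
  classical
  obtain ⟨he, hf, huv, hlt, -⟩ := hw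
  obtain ⟨_, heS, he1, he2, he3⟩ := hF e he
  obtain ⟨_, hfS, hf1, hf2, hf3⟩ := hF f hf
  have hne : (S.filter (InW e f)).Nonempty := by
    rw [huv] at he1 he3
    rcases le_total e.2.2.1 f.2.2.1 with h | h
    · refine ⟨e.2.2, mem_filter.2 ⟨heS, he3, le_rfl, h, he2.2.ge, ?_⟩⟩
      rw [he2.2]
      exact fan hf1 he1 hlt.le he3.le
    · refine ⟨f.2.2, mem_filter.2 ⟨hfS, hf3, h, le_rfl, ?_, hf2.2.le⟩⟩
      rw [hf2.2]
      exact fan hf1 he1 hlt.le hf3.le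
  obtain ⟨w, hw, hmin⟩ := exists_min_image _ (fun z : ℝ × ℝ => z.1) hne
  rw [mem_filter] at hw
  exact ⟨w, hw.1, hw.2, fun z hz hz' => hmin z (mem_filter.2 ⟨hz, hz'⟩)⟩

lemma key_le (hF : ∀ e ∈ F, e.2.1 ∈ S ∧ e.2.2 ∈ S ∧ IsArc e)
    (hnc : ∀ e ∈ F, ∀ f ∈ F, ¬ Cross e f) {e f e' f' : Arc} {w : ℝ × ℝ} {t : Fin 3}
    (hw : Wedge F e f) (hw' : Wedge F e' f') (h1 : First S e f w) (h1' : First S e' f' w)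
    (ht : Typ t e f w) (ht' : Typ t e' f' w) (hle : f.2.1.1 ≤ f'.2.1.1) : f.2.1 = f'.2.1 := by
  by_contra hne
  obtain ⟨he, hf, huv, hlt, -⟩ := hw
  obtain ⟨he', hf', huv', hlt', -⟩ := hw'
  obtain ⟨_, heS, he1, he2, he3⟩ := hF e he
  obtain ⟨_, hfS, hf1, hf2, hf3⟩ := hF f hf
  obtain ⟨_, heS', he1', he2', he3'⟩ := hF e' he'
  obtain ⟨hu', hfS', hf1', hf2', hf3'⟩ := hF f' hf'
  obtain ⟨hwS, ⟨i1, i2, i3, i4, i5⟩, hmin⟩ := h1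
  obtain ⟨_, ⟨i1', i2', i3', i4', i5'⟩, hmin'⟩ := h1'
  rw [huv] at he1 he3
  rw [huv'] at he1' he3'
  have out : f'.2.1.2 < hyp e.1 f'.2.1.1 ∨ hyp f.1 f'.2.1.1 < f'.2.1.2 := by
    rcases hle.lt_or_eq with h | h
    · by_contra hcon
      push Not at hcon
      have := hmin _ hu' ⟨h, by linarith, by linarith, hcon.1, hcon.2⟩
      linarith
    · have h2 : f.2.1.2 ≠ f'.2.1.2 := fun h2 => hne (Prod.ext h h2)
      rw [← h, ← he1.2, ← hf1.2]
      exact (lt_or_gt_of_ne h2).symm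
  rcases out with h | h
  · refine hnc f' hf' e he ⟨f'.2.1.1, w.1, le_rfl, ?_, i1'.le, ?_, ?_, ?_, i3', i2, ?_, ?_⟩
    · rw [huv]; exact hle
    · rw [huv]; exact i1.le
    · linarith
    · linarith
    · rw [← hf1'.2]; exact h
    · rcases ht with ⟨rfl, ht⟩ | ⟨rfl, ht⟩ <;> rcases ht' with ⟨hh, ht'⟩ | ⟨hh, ht'⟩
      · linarith
      · simp at hh
      · simp at hh
      · linarith
  · refine hnc f hf e' he' ⟨f'.2.1.1, w.1, hle, ?_, i1.le, ?_, ?_, ?_, i3, i2', ?_, ?_⟩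
    · rw [huv']
    · rw [huv']; exact i1'.le
    · linarith
    · linarith
    · rw [← he1'.2]; exact h
    · rcases ht with ⟨rfl, ht⟩ | ⟨rfl, ht⟩ <;> rcases ht' with ⟨hh, ht'⟩ | ⟨hh, ht'⟩
      · linarith
      · simp at hh
      · simp at hh
      · linarith

lemma same_u (hF : ∀ e ∈ F, e.2.1 ∈ S ∧ e.2.2 ∈ S ∧ IsArc e)
    {e f e' f' : Arc} {w : ℝ × ℝ} {t : Fin 3}
    (hw : Wedge F e f) (hw' : Wedge F e' f') (h1 : First S e f w) (h1' : First S e' f' w)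
    (ht : Typ t e f w) (ht' : Typ t e' f' w) (hu : f.2.1 = f'.2.1) : f'.1.1 ≤ f.1.1 := by
  by_contra hcon
  push Not at hcon
  obtain ⟨he, hf, huv, hlt, had⟩ := hw
  obtain ⟨he', hf', huv', hlt', -⟩ := hw'
  obtain ⟨_, heS, he1, he2, he3⟩ := hF e he
  obtain ⟨_, hfS, hf1, hf2, hf3⟩ := hF f hf
  obtain ⟨_, heS', he1', he2', he3'⟩ := hF e' he'
  obtain ⟨hu', hfS', hf1', hf2', hf3'⟩ := hF f' hf'
  obtain ⟨hwS, ⟨i1, i2, i3, i4, i5⟩, hmin⟩ := h1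
  obtain ⟨_, ⟨i1', i2', i3', i4', i5'⟩, hmin'⟩ := h1'
  have hc : e.1.1 ≤ f'.1.1 := by
    rcases had f' hf' hu.symm with h | h
    · linarith
    · exact h
  rw [huv, hu] at he1
  have := fan he1 hf1' hc i1'.le
  rcases ht with ⟨rfl, ht⟩ | ⟨rfl, ht⟩ <;> rcases ht' with ⟨hh, ht'⟩ | ⟨hh, ht'⟩
  · linarith
  · simp at hh
  · simp at hh
  · linarith

lemma planar (hF : ∀ e ∈ F, e.2.1 ∈ S ∧ e.2.2 ∈ S ∧ IsArc e)
    (huniq : ∀ e ∈ F, ∀ f ∈ F, e.1 = f.1 → e.2.1 = f.2.1 → e = f)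
    (hnc : ∀ e ∈ F, ∀ f ∈ F, ¬ Cross e f) : F.card ≤ 3 * S.card := by
  classical
  let R : Arc → (ℝ × ℝ) × Fin 3 → Prop := fun f t =>
    (∃ e, Wedge F e f ∧ First S e f t.1 ∧ Typ t.2 e f t.1) ∨
    (t.2 = 2 ∧ f.2.1 = t.1 ∧ ∀ e ∈ F, e.2.1 = f.2.1 → e.1.1 ≤ f.1.1)
  have htot : ∀ f ∈ F, ∃ t, t ∈ S ×ˢ (univ : Finset (Fin 3)) ∧ R f t := by
    intro f hf
    by_cases hlow : ∀ e ∈ F, e.2.1 = f.2.1 → e.1.1 ≤ f.1.1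
    · exact ⟨(f.2.1, 2), by simp [(hF f hf).1], Or.inr ⟨rfl, rfl, hlow⟩⟩
    · push Not at hlow
      obtain ⟨e0, he0, hu0, hlt0⟩ := hlow
      obtain ⟨e, he, hmin⟩ := exists_min_image (F.filter fun e => e.2.1 = f.2.1 ∧ f.1.1 < e.1.1)
        (fun e => e.1.1) ⟨e0, mem_filter.2 ⟨he0, hu0, hlt0⟩⟩
      rw [mem_filter] at he
      have hW : Wedge F e f := by
        refine ⟨he.1, hf, he.2.1, he.2.2, fun g hg hgu => ?_⟩
        by_cases h : g.1.1 ≤ f.1.1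
        · exact Or.inl h
        · exact Or.inr (hmin g (mem_filter.2 ⟨hg, hgu, not_le.1 h⟩))
      obtain ⟨w, hw⟩ := first_exists hF hW
      by_cases hup : w.2 < hyp f.1 w.1
      · exact ⟨(w, 0), by simp [hw.1], Or.inl ⟨e, hW, hw, Or.inl ⟨rfl, hup⟩⟩⟩
      · refine ⟨(w, 1), by simp [hw.1], Or.inl ⟨e, hW, hw, Or.inr ⟨rfl, ?_⟩⟩⟩
        have he1 := (hF e he.1).2.2.1
        rw [he.2.1] at he1
        have := fan_lt (hF f hf).2.2.1 he1 he.2.2 hw.2.1.1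
        dsimp only
        linarith
  choose! g hg using htot
  have hinj : ∀ f ∈ F, ∀ f' ∈ F, ∀ t, R f t → R f' t → f = f' := by
    intro f hf f' hf' t h h'
    suffices hs : f.2.1 = f'.2.1 ∧ f.1.1 = f'.1.1 by
      have h1 := (hF f hf).2.2.1
      rw [hs.1] at h1
      exact huniq f hf f' hf' (base_eq h1 (hF f' hf').2.2.1 hs.2) hs.1
    rcases h with ⟨e, hW, h1, h2⟩ | ⟨h1, h2, h3⟩ <;> rcases h' with ⟨e', hW', h1', h2'⟩ | ⟨h1', h2', h3'⟩
    · have hu : f.2.1 = f'.2.1 := by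
        rcases le_total f.2.1.1 f'.2.1.1 with h | h
        · exact key_le hF hnc hW hW' h1 h1' h2 h2' h
        · exact (key_le hF hnc hW' hW h1' h1 h2' h2 h).symm
      exact ⟨hu, le_antisymm (same_u hF hW' hW h1' h1 h2' h2 hu.symm)
        (same_u hF hW hW' h1 h1' h2 h2' hu)⟩
    · rcases h2 with ⟨h, -⟩ | ⟨h, -⟩ <;> rw [h1'] at h <;> simp at h
    · rcases h2' with ⟨h, -⟩ | ⟨h, -⟩ <;> rw [h1] at h <;> simp at h
    · have hu := h2.trans h2'.symm
      exact ⟨hu, le_antisymm (h3' f hf hu) (h3 f' hf' hu.symm)⟩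
  have := card_le_card_of_injOn g (fun f hf => (hg f hf).1)
    (fun f hf f' hf' h => hinj f hf f' hf' (g f) (hg f hf).2 (by rw [h]; exact (hg f' hf').2))
  rw [card_product] at this
  simp at this
  linarith

end planar

/-! ### Sampling -/

lemma sample_sum {α : Type*} [DecidableEq α] (P T : Finset α) (hT : T ⊆ P) (p : ℝ) :
    ∑ S ∈ P.powerset, p ^ S.card * (1 - p) ^ (P \ S).card * (if T ⊆ S then 1 else 0)
      = p ^ T.card := by
  have h := prod_add (fun _ : α => p) (fun i => if i ∈ T then 0 else 1 - p) P
  have h1 : ∏ i ∈ P, (p + if i ∈ T then 0 else 1 - p) = p ^ T.card := by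
    have : ∀ i ∈ P, (p + if i ∈ T then 0 else 1 - p) = if i ∈ T then p else 1 := by
      intro i _
      split_ifs <;> ring
    rw [prod_congr rfl this, prod_ite_mem, inter_eq_right.2 hT, prod_const]
  rw [← h1, h]
  refine sum_congr rfl fun S hS => ?_
  rw [prod_const, mul_assoc]
  congr 1
  by_cases hTS : T ⊆ S
  · rw [if_pos hTS, mul_one, ← prod_const]
    refine prod_congr rfl fun i hi => ?_
    rw [if_neg fun hi' => (mem_sdiff.1 hi).2 (hTS hi')]
  · rw [if_neg hTS, mul_zero]
    obtain ⟨i, hi, hi'⟩ := not_subset.1 hTS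
    exact (prod_eq_zero (mem_sdiff.2 ⟨hT hi, hi'⟩) (by simp [hi])).symm

/-- Weighted count of members of a family contained in a random subset. -/
lemma sample_count {α β : Type*} [DecidableEq α] (P : Finset α) (X : Finset β)
    (T : β → Finset α) (hT : ∀ b ∈ X, T b ⊆ P) (k : ℕ) (hk : ∀ b ∈ X, (T b).card = k) (p : ℝ) :
    ∑ S ∈ P.powerset, p ^ S.card * (1 - p) ^ (P \ S).card *
      ((X.filter fun b => T b ⊆ S).card : ℝ) = p ^ k * X.card := by
  have : ∀ S ∈ P.powerset, p ^ S.card * (1 - p) ^ (P \ S).card *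
      ((X.filter fun b => T b ⊆ S).card : ℝ) =
      ∑ b ∈ X, p ^ S.card * (1 - p) ^ (P \ S).card * (if T b ⊆ S then 1 else 0) := by
    intro S _
    rw [← mul_sum, sum_boole]
  rw [sum_congr rfl this, sum_comm, sum_congr rfl fun b hb => sample_sum P (T b) (hT b hb) p,
    sum_congr rfl fun b hb => by rw [hk b hb]]
  simp [mul_comm]


/-! ### Arcs between consecutive points -/

open Classical in
noncomputable def arcs (P : Finset (ℝ × ℝ)) : Finset Arc :=
  (P ×ˢ P ×ˢ P).filter fun e => IsArc e ∧
    ∀ z ∈ P, On e.1 z → ¬ (e.2.1.1 < z.1 ∧ z.1 < e.2.2.1)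

lemma mem_arcs {P : Finset (ℝ × ℝ)} {e : Arc} : e ∈ arcs P ↔
    (e.1 ∈ P ∧ e.2.1 ∈ P ∧ e.2.2 ∈ P) ∧ IsArc e ∧
      ∀ z ∈ P, On e.1 z → ¬ (e.2.1.1 < z.1 ∧ z.1 < e.2.2.1) := by
  classical
  unfold arcs
  rw [mem_filter, mem_product, mem_product]

lemma on_ext {a u v : ℝ × ℝ} (hu : On a u) (hv : On a v) (h : u.1 = v.1) : u = v := by
  refine Prod.ext h ?_
  rw [hu.2, hv.2, h]

lemma arcs_sep {P : Finset (ℝ × ℝ)} {e f : Arc} (he : e ∈ arcs P) (hf : f ∈ arcs P)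
    (h : e.1 = f.1) (hne : e ≠ f) : e.2.2.1 ≤ f.2.1.1 ∨ f.2.2.1 ≤ e.2.1.1 := by
  obtain ⟨⟨_, hu, hv⟩, ⟨h1, h2, h3⟩, hc⟩ := mem_arcs.1 he
  obtain ⟨⟨_, hu', hv'⟩, ⟨h1', h2', h3'⟩, hc'⟩ := mem_arcs.1 hf
  by_contra hcon
  push Not at hcon
  rw [h] at h1 h2 hc
  have a1 := hc _ hu' h1'
  have a2 := hc _ hv' h2'
  have a3 := hc' _ hu h1
  have a4 := hc' _ hv h2
  push Not at a1 a2 a3 a4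
  apply hne
  have b1 : e.2.1.1 = f.2.1.1 := by
    apply le_antisymm
    · by_contra hh
      push Not at hh
      linarith [a3 hh]
    · by_contra hh
      push Not at hh
      linarith [a1 hh]
  have b2 : e.2.2.1 = f.2.2.1 := by
    apply le_antisymm
    · exact a2 (by linarith)
    · exact a4 (by linarith)
  exact Prod.ext h (Prod.ext (on_ext h1 h1' b1) (on_ext h2 h2' b2))

lemma arcs_uniq {P : Finset (ℝ × ℝ)} {e f : Arc} (he : e ∈ arcs P) (hf : f ∈ arcs P)
    (h : e.1 = f.1) (hu : e.2.1 = f.2.1) : e = f := by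
  by_contra hne
  have h1 := (mem_arcs.1 he).2.1.2.2
  have h2 := (mem_arcs.1 hf).2.1.2.2
  rcases arcs_sep he hf h hne with h' | h'
  · rw [hu] at h1; linarith
  · rw [hu] at h'; linarith

lemma cross_symm {e f : Arc} (h : Cross e f) : Cross f e := by
  obtain ⟨x, y, h1, h2, h3, h4, h5, h6, h7, h8, h9, h10⟩ := h
  exact ⟨y, x, h4, h3, h2, h1, h8, h7, h6, h5, h10, h9⟩

lemma cross_inj_left {P : Finset (ℝ × ℝ)} {e f e' f' : Arc} (he : e ∈ arcs P) (hf : f ∈ arcs P)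
    (he' : e' ∈ arcs P) (hf' : f' ∈ arcs P) (h : Cross e f) (h' : Cross e' f')
    (h1 : e.1 = e'.1) (h2 : f.1 = f'.1) : e = e' := by
  by_contra hne
  obtain ⟨x, y, a1, a2, a3, a4, a5, a6, a7, a8, a9, a10⟩ := h
  obtain ⟨x', y', b1, b2, b3, b4, b5, b6, b7, b8, b9, b10⟩ := h'
  have o1 := (mem_arcs.1 he).2.1.1.1
  have o2 := (mem_arcs.1 hf).2.1.1.1
  have o1' := (mem_arcs.1 he').2.1.1.1
  have o2' := (mem_arcs.1 hf').2.1.1.1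
  rw [← h1, ← h2] at b9 b10
  rw [← h1] at o1'
  rw [← h2] at o2'
  rcases hyp_dich e.1 f.1 with hd | hd <;> rcases arcs_sep he he' h1 hne with hs | hs
  · linarith [hd y x' (by linarith) (by linarith) (by linarith)]
  · linarith [hd y' x (by linarith) (by linarith) (by linarith)]
  · linarith [hd x y' (by linarith) (by linarith) (by linarith)]
  · linarith [hd x' y (by linarith) (by linarith) (by linarith)]

lemma cross_ends {e f : Arc} (he : IsArc e) (hf : IsArc f) (h : Cross e f) :
    ({e.2.1, e.2.2, f.2.1, f.2.2} : Finset (ℝ × ℝ)).card = 4 := by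
  obtain ⟨x, y, a1, a2, a3, a4, a5, a6, a7, a8, a9, a10⟩ := h
  obtain ⟨e1, e2, e3⟩ := he
  obtain ⟨f1, f2, f3⟩ := hf
  have hxy : x ≠ y := by rintro rfl; linarith
  have n1 : e.2.1 ≠ e.2.2 := fun h => by rw [h] at e3; linarith
  have n2 : f.2.1 ≠ f.2.2 := fun h => by rw [h] at f3; linarith
  have n3 : e.2.1 ≠ f.2.2 := fun h => by
    rw [h] at a1 a3
    exact hxy (by linarith)
  have n4 : e.2.2 ≠ f.2.1 := fun h => by
    rw [h] at a5 a7
    exact hxy (by linarith)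
  have n5 : e.2.1 ≠ f.2.1 := fun h => by
    rw [h] at e1
    have := e1.2
    have := f1.2
    rcases hyp_dich e.1 f.1 with hd | hd
    · linarith [hd f.2.1.1 x e1.1 f1.1 a2]
    · linarith [hd f.2.1.1 y e1.1 f1.1 a4]
  have n6 : e.2.2 ≠ f.2.2 := fun h => by
    have q1 := e1.1
    have q2 := f1.1
    rw [h] at e2
    have := e2.2
    have := f2.2
    rcases hyp_dich e.1 f.1 with hd | hd
    · linarith [hd y f.2.2.1 (by linarith) (by linarith) a8]
    · linarith [hd x f.2.2.1 (by linarith) (by linarith) a6]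
  rw [card_insert_of_notMem (by simp [n1, n3, n5]), card_insert_of_notMem (by simp [n4, n6]),
    card_insert_of_notMem (by simp [n2]), card_singleton]

open Classical in
noncomputable def crossings (P : Finset (ℝ × ℝ)) : Finset (Arc × Arc) :=
  (arcs P ×ˢ arcs P).filter fun x => Cross x.1 x.2

lemma mem_crossings {P : Finset (ℝ × ℝ)} {x : Arc × Arc} : x ∈ crossings P ↔
    (x.1 ∈ arcs P ∧ x.2 ∈ arcs P) ∧ Cross x.1 x.2 := by
  classical
  unfold crossings
  rw [mem_filter, mem_product]

lemma card_crossings (P : Finset (ℝ × ℝ)) : (crossings P).card ≤ P.card * P.card := by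
  rw [← card_product]
  refine card_le_card_of_injOn (fun x => (x.1.1, x.2.1)) ?_ ?_
  · intro x hx
    obtain ⟨⟨h1, h2⟩, -⟩ := mem_crossings.1 hx
    exact mem_product.2 ⟨(mem_arcs.1 h1).1.1, (mem_arcs.1 h2).1.1⟩
  · intro x hx y hy hxy
    obtain ⟨⟨h1, h2⟩, h3⟩ := mem_crossings.1 hx
    obtain ⟨⟨k1, k2⟩, k3⟩ := mem_crossings.1 hy
    obtain ⟨q1, q2⟩ := Prod.mk.inj hxy
    exact Prod.ext (cross_inj_left h1 h2 k1 k2 h3 k3 q1 q2)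
      (cross_inj_left h2 h1 k2 k1 (cross_symm h3) (cross_symm k3) q2 q1)

/-- Endpoints of an arc, and of a pair of arcs. -/
noncomputable def ends (e : Arc) : Finset (ℝ × ℝ) := {e.2.1, e.2.2}

noncomputable def ends4 (x : Arc × Arc) : Finset (ℝ × ℝ) :=
  {x.1.2.1, x.1.2.2, x.2.2.1, x.2.2.2}

lemma sub_bound (P S : Finset (ℝ × ℝ)) :
    ((arcs P).filter fun e => ends e ⊆ S).card ≤
      3 * S.card + ((crossings P).filter fun x => ends4 x ⊆ S).card := by
  classical
  set A := (arcs P).filter fun e => ends e ⊆ S with hA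
  set F := A.filter fun e => ∀ f ∈ A, ¬ Cross e f with hFdef
  have hends : ∀ e ∈ A, e ∈ arcs P ∧ e.2.1 ∈ S ∧ e.2.2 ∈ S := by
    intro e he
    rw [hA, mem_filter] at he
    exact ⟨he.1, he.2 (by simp [ends]), he.2 (by simp [ends])⟩
  have hF : F.card ≤ 3 * S.card := by
    apply planar
    · intro e he
      have h := hends e (mem_filter.1 he).1
      exact ⟨h.2.1, h.2.2, (mem_arcs.1 h.1).2.1⟩
    · intro e he f hf h1 h2
      exact arcs_uniq (hends e (mem_filter.1 he).1).1 (hends f (mem_filter.1 hf).1).1 h1 h2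
    · intro e he f hf
      exact (mem_filter.1 he).2 f (mem_filter.1 hf).1
  have hsub : A ⊆ F ∪ ((crossings P).filter fun x => ends4 x ⊆ S).image Prod.fst := by
    intro e he
    by_cases h : ∀ f ∈ A, ¬ Cross e f
    · exact mem_union_left _ (mem_filter.2 ⟨he, h⟩)
    · push Not at h
      obtain ⟨f, hf, hc⟩ := h
      refine mem_union_right _ (mem_image.2 ⟨(e, f), mem_filter.2 ⟨?_, ?_⟩, rfl⟩)
      · exact mem_crossings.2 ⟨⟨(hends e he).1, (hends f hf).1⟩, hc⟩
      · have h1 := hends e he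
        have h2 := hends f hf
        intro z hz
        simp only [ends4, mem_insert, mem_singleton] at hz
        rcases hz with rfl | rfl | rfl | rfl
        exacts [h1.2.1, h1.2.2, h2.2.1, h2.2.2]
  calc A.card ≤ _ := card_le_card hsub
    _ ≤ _ := card_union_le _ _
    _ ≤ _ := Nat.add_le_add hF card_image_le

lemma sampled (P : Finset (ℝ × ℝ)) (p : ℝ) (h0 : 0 ≤ p) (h1 : p ≤ 1) :
    p ^ 2 * (arcs P).card ≤ 3 * (p * P.card) + p ^ 4 * (crossings P).card := by
  classical
  have c1 := sample_count P (arcs P) ends (by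
    intro e he z hz
    obtain ⟨⟨_, hu, hv⟩, _⟩ := mem_arcs.1 he
    simp only [ends, mem_insert, mem_singleton] at hz
    rcases hz with rfl | rfl
    exacts [hu, hv]) 2 (by
    intro e he
    apply card_pair
    intro h
    have := (mem_arcs.1 he).2.1.2.2
    rw [h] at this
    linarith) p
  have c2 := sample_count P (crossings P) ends4 (by
    intro x hx z hz
    obtain ⟨⟨k1, k2⟩, _⟩ := mem_crossings.1 hx
    obtain ⟨⟨_, hu, hv⟩, _⟩ := mem_arcs.1 k1
    obtain ⟨⟨_, hu', hv'⟩, _⟩ := mem_arcs.1 k2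
    simp only [ends4, mem_insert, mem_singleton] at hz
    rcases hz with rfl | rfl | rfl | rfl
    exacts [hu, hv, hu', hv']) 4 (by
    intro x hx
    obtain ⟨⟨k1, k2⟩, k3⟩ := mem_crossings.1 hx
    exact cross_ends (mem_arcs.1 k1).2.1 (mem_arcs.1 k2).2.1 k3) p
  have c3 := sample_count P P (fun b => {b}) (by
    intro b hb z hz
    rw [mem_singleton] at hz
    rw [hz]; exact hb) 1 (by simp) p
  rw [← c1, ← c2]
  rw [pow_one] at c3
  rw [← c3, mul_sum, ← sum_add_distrib]
  refine sum_le_sum fun S hS => ?_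
  have hfil : (P.filter fun b => ({b} : Finset (ℝ × ℝ)) ⊆ S) = S := by
    ext z
    simp only [mem_filter, singleton_subset_iff]
    exact ⟨fun h => h.2, fun h => ⟨mem_powerset.1 hS h, h⟩⟩
  rw [hfil]
  have hb : (((arcs P).filter fun e => ends e ⊆ S).card : ℝ) ≤
      3 * S.card + ((crossings P).filter fun x => ends4 x ⊆ S).card := by
    exact_mod_cast sub_bound P S
  have hw : 0 ≤ p ^ S.card * (1 - p) ^ (P \ S).card :=
    mul_nonneg (pow_nonneg h0 _) (pow_nonneg (by linarith) _)
  calc _ ≤ _ := mul_le_mul_of_nonneg_left hb hw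
    _ = _ := by ring

open Classical in
noncomputable def incs (P : Finset (ℝ × ℝ)) : Finset ((ℝ × ℝ) × (ℝ × ℝ)) :=
  (P ×ˢ P).filter fun q => On q.1 q.2

lemma card_incs (P : Finset (ℝ × ℝ)) : (incs P).card ≤ (arcs P).card + P.card := by
  classical
  set L := (incs P).filter fun q => ∀ z ∈ P, On q.1 z → z.1 ≤ q.2.1 with hL
  have hmem : ∀ q ∈ incs P, q.1 ∈ P ∧ q.2 ∈ P ∧ On q.1 q.2 := by
    intro q hq
    unfold incs at hq
    rw [mem_filter, mem_product] at hq
    exact ⟨hq.1.1, hq.1.2, hq.2⟩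
  have hLc : L.card ≤ P.card := by
    refine card_le_card_of_injOn Prod.fst (fun q hq => (hmem q (mem_filter.1 hq).1).1) ?_
    intro q hq r hr h
    obtain ⟨q1, q2⟩ := mem_filter.1 hq
    obtain ⟨r1, r2⟩ := mem_filter.1 hr
    have a := hmem q q1
    have b := hmem r r1
    rw [h] at a q2
    exact Prod.ext h (on_ext a.2.2 b.2.2 (le_antisymm (r2 _ a.2.1 a.2.2) (q2 _ b.2.1 b.2.2)))
  have hsub : incs P ⊆ (arcs P).image (fun e => (e.1, e.2.1)) ∪ L := by
    intro q hq
    by_cases h : ∀ z ∈ P, On q.1 z → z.1 ≤ q.2.1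
    · exact mem_union_right _ (mem_filter.2 ⟨hq, h⟩)
    · push Not at h
      obtain ⟨z, hz, hoz, hlt⟩ := h
      obtain ⟨v, hv, hmin⟩ := exists_min_image
        (P.filter fun z => On q.1 z ∧ q.2.1 < z.1) (fun z => z.1)
        ⟨z, mem_filter.2 ⟨hz, hoz, hlt⟩⟩
      rw [mem_filter] at hv
      have a := hmem q hq
      refine mem_union_left _ (mem_image.2 ⟨(q.1, q.2, v), mem_arcs.2
        ⟨⟨a.1, a.2.1, hv.1⟩, ⟨a.2.2, hv.2.1, hv.2.2⟩, ?_⟩, rfl⟩)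
      intro t ht hot hcon
      have := hmin t (mem_filter.2 ⟨ht, hot, hcon.1⟩)
      exact absurd hcon.2 (not_lt.2 this)
  calc (incs P).card ≤ _ := card_le_card hsub
    _ ≤ _ := card_union_le _ _
    _ ≤ _ := Nat.add_le_add card_image_le hLc

lemma incs_bound (P : Finset (ℝ × ℝ)) (hP : 1 ≤ P.card) :
    ((incs P).card : ℝ) ≤ 5 * (P.card : ℝ) ^ ((4 : ℝ) / 3) := by
  set n : ℝ := (P.card : ℝ) with hn
  have hn1 : 1 ≤ n := by rw [hn]; exact_mod_cast hP
  set r : ℝ := n ^ ((1 : ℝ) / 3) with hr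
  have hr1 : 1 ≤ r := Real.one_le_rpow hn1 (by norm_num)
  have hr3 : r ^ 3 = n := by
    rw [hr, ← Real.rpow_natCast, ← Real.rpow_mul (by linarith)]
    norm_num
  have hr4 : n ^ ((4 : ℝ) / 3) = r ^ 4 := by
    rw [hr, ← Real.rpow_natCast, ← Real.rpow_mul (by linarith)]
    norm_num
  have h1 := sampled P r⁻¹ (by positivity) (inv_le_one_of_one_le₀ hr1)
  have h2 : ((crossings P).card : ℝ) ≤ n * n := by
    rw [hn]; exact_mod_cast card_crossings P
  have h3 : ((incs P).card : ℝ) ≤ (arcs P).card + n := by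
    rw [hn]; exact_mod_cast card_incs P
  rw [← hn] at h1
  have hr0 : 0 < r := by linarith
  rw [hr4]
  clear hr4
  clear_value r
  clear hr
  clear_value n
  have h4 : ((arcs P).card : ℝ) ≤ 3 * r ^ 4 + r ^ 4 := by
    have e1 : ((arcs P).card : ℝ) = r ^ 2 * (r⁻¹ ^ 2 * (arcs P).card) := by
      field_simp
    rw [e1]
    calc _ ≤ r ^ 2 * (3 * (r⁻¹ * n) + r⁻¹ ^ 4 * (n * n)) := by
          apply mul_le_mul_of_nonneg_left _ (by positivity)
          refine h1.trans ?_
          gcongr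
      _ = _ := by
          rw [← hr3]
          field_simp
  have h5 : n ≤ r ^ 4 := by
    rw [← hr3]
    exact pow_le_pow_right₀ hr1 (by norm_num)
  linarith

end UnitRect

theorem unit_area_rectangles_upper_bound :
    ∃ C : ℝ, 0 < C ∧ ∀ (n : ℕ), 1 ≤ n →
      ∀ P : Finset (ℝ × ℝ), P.card = n →
        (({q : (ℝ × ℝ) × ℝ × ℝ | q.1 ∈ P ∧ q.2 ∈ P ∧
            q.1.1 < q.2.1 ∧ q.1.2 < q.2.2 ∧
            (q.2.1 - q.1.1) * (q.2.2 - q.1.2) = 1} :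
            Set ((ℝ × ℝ) × ℝ × ℝ)).ncard : ℝ)
          ≤ C * (n : ℝ) ^ ((4 : ℝ) / 3) := by
  classical
  refine ⟨5, by norm_num, ?_⟩
  intro n hn P hP
  have hsub : {q : (ℝ × ℝ) × ℝ × ℝ | q.1 ∈ P ∧ q.2 ∈ P ∧
            q.1.1 < q.2.1 ∧ q.1.2 < q.2.2 ∧
            (q.2.1 - q.1.1) * (q.2.2 - q.1.2) = 1} ⊆ (UnitRect.incs P : Set _) := by
    rintro q ⟨h1, h2, h3, h4, h5⟩
    unfold UnitRect.incs
    rw [Finset.mem_coe, Finset.mem_filter, Finset.mem_product]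
    refine ⟨⟨h1, h2⟩, h3, ?_⟩
    unfold UnitRect.hyp
    have : 1 / (q.2.1 - q.1.1) = q.2.2 - q.1.2 := by
      rw [div_eq_iff (by linarith), mul_comm]
      exact h5.symm
    rw [this]
    ring
  have h1 := Set.ncard_le_ncard hsub (Finset.finite_toSet _)
  rw [Set.ncard_coe_finset] at h1
  have h2 := UnitRect.incs_bound P (by omega)
  rw [hP] at h2
  exact le_trans (by exact_mod_cast h1) h2
end

section
/- There exists a constant c > 0 such that for all sufficiently large n there exists a set P of n points in the plane ℝ² for which the number of ordered pairs (p, q) of points of P with p₁ < q₁, p₂ < q₂, and (q₁ − p₁)(q₂ − p₂) = 1 is at least n^(1 + c/(log log n)). -/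
/-- A product of distinct primes has exactly `2 ^ k` divisors. -/
lemma card_divisors_prod_primes (S : Finset ℕ) (hS : ∀ p ∈ S, p.Prime) :
    (∏ p ∈ S, p).divisors.card = 2 ^ S.card := by
  classical
  induction S using Finset.induction_on with
  | empty => simp
  | insert a S ha ih =>
    have hcop : Nat.Coprime a (∏ p ∈ S, p) := by
      refine Nat.Coprime.prod_right fun p hp => ?_
      refine (Nat.coprime_primes (hS a (by simp)) (hS p (by simp [hp]))).2 ?_
      rintro rfl
      exact ha hp
    have hap : a.Prime := hS a (by simp)
    rw [Finset.prod_insert ha, hcop.card_divisors_mul, ih (fun p hp => hS p (by simp [hp])),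
      Finset.card_insert_of_notMem ha, hap.divisors, Finset.card_pair hap.one_lt.ne, pow_succ]
    ring

lemma card_divisors_primorial (K : ℕ) :
    (primorial K).divisors.card = 2 ^ (Nat.primeCounting K) := by
  unfold primorial
  rw [card_divisors_prod_primes]
  · congr 1
    rw [Nat.primeCounting, Nat.primeCounting', Nat.count_eq_card_filter_range]
  · simp

/-- The scaled grid construction. -/
lemma grid_count (n s m : ℕ) (hs : s * s ≤ n) (hm : 0 < m) :
    ∃ P : Finset (ℝ × ℝ), P.card = n ∧
      (s - m) * (s - m) * m.divisors.card ≤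
          (({q : (ℝ × ℝ) × ℝ × ℝ | q.1 ∈ P ∧ q.2 ∈ P ∧
              q.1.1 < q.2.1 ∧ q.1.2 < q.2.2 ∧
              (q.2.1 - q.1.1) * (q.2.2 - q.1.2) = 1} :
              Set ((ℝ × ℝ) × ℝ × ℝ)).ncard) := by
  classical
  have hmR : (0 : ℝ) < m := by exact_mod_cast hm
  let g : ℕ × ℕ → ℝ × ℝ := fun z => ((z.1 : ℝ) / m, (z.2 : ℝ))
  have hg : ∀ z w, g z = g w → z = w := by
    rintro ⟨a, b⟩ ⟨c, d⟩ h
    simp only [g, Prod.mk.injEq] at h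
    obtain ⟨h1, h2⟩ := h
    rw [div_left_inj' hmR.ne'] at h1
    simp only [Prod.mk.injEq]
    exact ⟨by exact_mod_cast h1, by exact_mod_cast h2⟩
  let G : Finset (ℝ × ℝ) := (Finset.range s ×ˢ Finset.range s).image g
  have hG : G.card ≤ n := by
    refine Finset.card_image_le.trans ?_
    simpa using hs
  obtain ⟨P, hGP, hP⟩ := Infinite.exists_superset_card_eq G n hG
  refine ⟨P, hP, ?_⟩
  have hmem : ∀ a b : ℕ, a < s → b < s → g (a, b) ∈ P := by
    intro a b ha hb
    apply hGP
    apply Finset.mem_image_of_mem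
    simp [ha, hb]
  let D := (Finset.range (s - m) ×ˢ Finset.range (s - m)) ×ˢ m.divisors
  let f : (ℕ × ℕ) × ℕ → (ℝ × ℝ) × ℝ × ℝ :=
    fun z => (g z.1, g (z.1.1 + z.2, z.1.2 + m / z.2))
  have hf : Set.InjOn f D := by
    rintro ⟨⟨a, b⟩, d⟩ _ ⟨⟨a', b'⟩, d'⟩ _ h
    simp only [f, Prod.mk.injEq] at h
    have h1 := hg _ _ h.1
    have h2 := hg _ _ h.2
    simp only [Prod.mk.injEq] at h1 h2 ⊢
    omega
  have hcard : (D.image f).card = (s - m) * (s - m) * m.divisors.card := by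
    rw [Finset.card_image_of_injOn hf]
    simp [D]
  rw [← hcard, ← Set.ncard_coe_finset]
  apply Set.ncard_le_ncard
  · intro q hq
    simp only [Finset.coe_image, Set.mem_image, Finset.mem_coe] at hq
    obtain ⟨⟨⟨a, b⟩, d⟩, hz, rfl⟩ := hq
    simp only [D, Finset.mem_product, Finset.mem_range, Nat.mem_divisors] at hz
    obtain ⟨⟨ha, hb⟩, ⟨e, he⟩, -⟩ := hz
    have hd0 : 0 < d := Nat.pos_of_ne_zero (by rintro rfl; simp at he; omega)
    have he0 : 0 < e := Nat.pos_of_ne_zero (by rintro rfl; simp at he; omega)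
    have hde : m / d = e := by rw [he]; exact Nat.mul_div_cancel_left e hd0
    have hdm : d ≤ m := by rw [he]; exact Nat.le_mul_of_pos_right d he0
    have hem : e ≤ m := by rw [he]; exact Nat.le_mul_of_pos_left e hd0
    have hdR : (0 : ℝ) < d := by exact_mod_cast hd0
    have heR : (0 : ℝ) < e := by exact_mod_cast he0
    have heq : (m : ℝ) = d * e := by exact_mod_cast he
    simp only [f, Set.mem_ofPred_eq, hde]
    refine ⟨hmem _ _ (by omega) (by omega), hmem _ _ (by omega) (by omega), ?_, ?_, ?_⟩
    · simp only [g]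
      push_cast
      gcongr
      linarith
    · simp only [g]
      push_cast
      linarith
    · simp only [g]
      push_cast
      field_simp
      rw [heq]
      ring
  · refine Set.Finite.subset ((P ×ˢ P).finite_toSet) ?_
    rintro ⟨x, y⟩ ⟨h1, h2, -⟩
    simpa using ⟨h1, h2⟩

lemma primeCounting_lower (L : ℝ) (h1 : 1000 ≤ L) (h2 : 1000 * Real.log L ≤ L) :
    L / (64 * Real.log L) ≤ Nat.primeCounting ⌊L / 8⌋₊ := by
  set K := ⌊L / 8⌋₊ with hK
  have hKle : (K : ℝ) ≤ L / 8 := Nat.floor_le (by linarith)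
  have hKge : L / 8 < K + 1 := Nat.lt_floor_add_one _
  have hlogL : 0 < Real.log L := Real.log_pos (by linarith)
  have hlogK : 0 < Real.log K := Real.log_pos (by linarith)
  have hlogKL : Real.log K ≤ Real.log L := Real.log_le_log (by linarith) (by linarith)
  have hlogK1 : Real.log (K + 1) ≤ Real.log L := Real.log_le_log (by linarith) (by linarith)
  have hl2 := Real.log_two_gt_d9
  refine le_trans ?_ (Chebyshev.pi_ge K)
  have hnum : L / 64 ≤ K * Real.log 2 - Real.log (K + 1) := by
    have : (K : ℝ) * 0.5 ≤ K * Real.log 2 := by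
      gcongr
      linarith
    linarith
  rw [← div_div]
  gcongr
  linarith

theorem unit_area_rectangles_lower_bound :
    ∃ c : ℝ, 0 < c ∧ ∃ N : ℕ, ∀ n : ℕ, N ≤ n →
      ∃ P : Finset (ℝ × ℝ), P.card = n ∧
        (n : ℝ) ^ (1 + c / Real.log (Real.log n)) ≤
          (({q : (ℝ × ℝ) × ℝ × ℝ | q.1 ∈ P ∧ q.2 ∈ P ∧
              q.1.1 < q.2.1 ∧ q.1.2 < q.2.2 ∧
              (q.2.1 - q.1.1) * (q.2.2 - q.1.2) = 1} :
              Set ((ℝ × ℝ) × ℝ × ℝ)).ncard : ℝ) := by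
  refine ⟨1 / 256, by norm_num, ?_⟩
  have hev : ∀ᶠ L : ℝ in Filter.atTop, 1000 ≤ L ∧ 1000 * Real.log L ≤ L := by
    refine (Filter.eventually_ge_atTop 1000).and ?_
    have := Real.isLittleO_log_id_atTop.bound (show (0 : ℝ) < 1 / 1000 by norm_num)
    filter_upwards [this, Filter.eventually_ge_atTop 1] with x hx h1
    rw [Real.norm_of_nonneg (Real.log_nonneg h1), id, Real.norm_of_nonneg (by linarith)] at hx
    linarith
  have hev2 := (Real.tendsto_log_atTop.comp tendsto_natCast_atTop_atTop).eventually hev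
  obtain ⟨N, hN⟩ := Filter.eventually_atTop.1 hev2
  refine ⟨N, fun n hn => ?_⟩
  obtain ⟨h1, h2⟩ := hN n hn
  simp only [Function.comp] at h1 h2
  set L := Real.log n with hL
  have hn0 : (0 : ℝ) < n := by
    rcases Nat.eq_zero_or_pos n with h | h
    · rw [hL, h] at h1
      norm_num at h1
    · exact_mod_cast h
  have hnexp : (n : ℝ) = Real.exp L := (Real.exp_log hn0).symm
  have hlogL : 0 < Real.log L := Real.log_pos (by linarith)
  set K := ⌊L / 8⌋₊ with hK
  set m := primorial K with hm
  have hm0 : 0 < m := primorial_pos K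
  set s := Nat.sqrt n with hs
  obtain ⟨P, hP, hcount⟩ := grid_count n s m (Nat.sqrt_le n) hm0
  refine ⟨P, hP, ?_⟩
  have hpi := primeCounting_lower L h1 h2
  rw [hm, card_divisors_primorial, ← hm] at hcount
  rw [← hK] at hpi
  have hE : Real.exp (L / 2) * Real.exp (L / 2) = n := by
    rw [← Real.exp_add, hnexp]; ring_nf
  have hE4 : Real.exp (L / 4) * Real.exp (L / 4) = Real.exp (L / 2) := by
    rw [← Real.exp_add]; ring_nf
  have hE4big : 100 ≤ Real.exp (L / 4) := by
    have := Real.add_one_le_exp (L / 4)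
    linarith
  -- bound on m
  have hmle : (m : ℝ) ≤ Real.exp (L / 4) := by
    have hKle : (K : ℝ) ≤ L / 8 := Nat.floor_le (by linarith)
    have ha : (m : ℝ) ≤ 4 ^ K := by exact_mod_cast primorial_le_four_pow K
    have hb : (4 : ℝ) ≤ Real.exp 2 := by
      have := Real.exp_one_gt_d9
      have h3 : Real.exp 2 = Real.exp 1 * Real.exp 1 := by rw [← Real.exp_add]; norm_num
      nlinarith
    calc (m : ℝ) ≤ 4 ^ K := ha
      _ ≤ (Real.exp 2) ^ K := by gcongr
      _ = Real.exp (K * 2) := by rw [← Real.exp_nat_mul]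
      _ ≤ _ := Real.exp_le_exp.2 (by linarith)
  have hsge : Real.exp (L / 2) ≤ s + 1 := by
    have h3 : (n : ℝ) < (s + 1) * (s + 1) := by exact_mod_cast Nat.lt_succ_sqrt n
    by_contra hcon
    push Not at hcon
    have : (0 : ℝ) ≤ s := by positivity
    nlinarith
  have hsm : Real.exp (L / 2) / 4 ≤ (s : ℝ) - m := by nlinarith
  have hsub : ((s - m : ℕ) : ℝ) = (s : ℝ) - m := by
    apply Nat.cast_sub
    have : (m : ℝ) ≤ s := by
      have := Real.exp_pos (L / 2)
      linarith
    exact_mod_cast this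
  have hcR := (Nat.cast_le (α := ℝ)).2 hcount
  rw [Nat.cast_mul, Nat.cast_mul, hsub, Nat.cast_pow, Nat.cast_ofNat] at hcR
  refine le_trans ?_ hcR
  have hpow : 16 * Real.exp (L * (1 / 256 / Real.log L)) ≤ 2 ^ (Nat.primeCounting K) := by
    have hl2 := Real.log_two_gt_d9
    have hl2' := Real.log_two_lt_d9
    set x := L / (64 * Real.log L) with hx
    have hxbig : 1000 / 64 ≤ x := by
      rw [hx, le_div_iff₀ (by positivity)]
      linarith
    have he : L * (1 / 256 / Real.log L) = x / 4 := by
      rw [hx]; field_simp; norm_num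
    have h16 : (16 : ℝ) = Real.exp (4 * Real.log 2) := by
      rw [show (4 : ℝ) * Real.log 2 = ((4 : ℕ) : ℝ) * Real.log 2 by norm_num,
        Real.exp_nat_mul, Real.exp_log (by norm_num)]
      norm_num
    have h2p : (2 : ℝ) ^ (Nat.primeCounting K) =
        Real.exp ((Nat.primeCounting K : ℝ) * Real.log 2) := by
      rw [Real.exp_nat_mul, Real.exp_log (by norm_num)]
    rw [he, h16, h2p, ← Real.exp_add]
    apply Real.exp_le_exp.2
    have : x * Real.log 2 ≤ (Nat.primeCounting K : ℝ) * Real.log 2 := by gcongr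
    nlinarith
  have hlhs : (n : ℝ) ^ (1 + 1 / 256 / Real.log L) =
      n * Real.exp (L * (1 / 256 / Real.log L)) := by
    rw [Real.rpow_add hn0, Real.rpow_one, Real.rpow_def_of_pos hn0]
  rw [hlhs]
  have hE2 := Real.exp_pos (L / 2)
  calc (n : ℝ) * Real.exp (L * (1 / 256 / Real.log L))
      = (Real.exp (L / 2) / 4) * (Real.exp (L / 2) / 4) *
          (16 * Real.exp (L * (1 / 256 / Real.log L))) := by rw [← hE]; ring
    _ ≤ _ := by
        gcongr
        · exact mul_self_nonneg _
        · linarith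
end
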